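/- Assume hypothesis (H) and that min_{x ∈ ∂𝔻} h(x) > max_{x ∈ ∂𝔻} √(−K(x)). Let X denote the set C¹(closed 𝔻) endowed with the H¹(𝔻) norm, and let M = { u ∈ X : ∫_{∂𝔻} e^{u/2} = 1 and ∫_{∂𝔻} x₁ e^{u/2} = ∫_{∂𝔻} x₂ e^{u/2} = 0 }. Then there exists δ₀ > 0 such that for every δ ∈ (0,δ₀) there exist a constant C̄ ∈ ℝ and a continuous map Λ : 𝕊² → X (𝕊² the unit sphere of ℝ³) such that, for every ε ∈ (−δ, −δ/2): (i) I_ε(u) ≥ C̄ for all u ∈ M; (ii) sup_{y ∈ 𝕊²} I_ε(Λ(y)) < inf_{u ∈ M} I_ε(u); (iii) every continuous map η from the closed unit ball B of ℝ³ into X with η restricted to 𝕊² equal to Λ satisfies η(B) ∩ M ≠ ∅ (three-dimensional linking geometry). -/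

import Mathlib

open MeasureTheory Real Filter

noncomputable section

/-- The open unit disk in ℝ² ≅ ℂ. -/
def unitDisk : Set ℂ := Metric.ball 0 1

/-- The unit circle ∂𝔻. -/
def unitCircle : Set ℂ := Metric.sphere 0 1

/-- The closed unit disk. -/
def closedUnitDisk : Set ℂ := Metric.closedBall 0 1

/-- Directional derivative of `u` at `x` in direction `v`. -/
def pd (u : ℂ → ℝ) (v x : ℂ) : ℝ := fderiv ℝ u x v

/-- Laplacian of `u` at `x`. -/
def lap (u : ℂ → ℝ) (x : ℂ) : ℝ :=
  fderiv ℝ (fun y => pd u 1 y) x 1 + fderiv ℝ (fun y => pd u Complex.I y) x Complex.I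

/-- Squared norm of the gradient, |∇u|². -/
def gradSq (u : ℂ → ℝ) (x : ℂ) : ℝ := pd u 1 x ^ 2 + pd u Complex.I x ^ 2

/-- Outward normal derivative ∂_ν u(x) = ∇u(x)·x at a boundary point. -/
def nderiv (u : ℂ → ℝ) (x : ℂ) : ℝ := x.re * pd u 1 x + x.im * pd u Complex.I x

/-- Tangential derivative ∂_τ u(x) = ∇u(x)·(−x₂,x₁) at a boundary point. -/
def tderiv (u : ℂ → ℝ) (x : ℂ) : ℝ := -x.im * pd u 1 x + x.re * pd u Complex.I x

/-- Unit-speed parametrization of the unit circle. -/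
def bpt (θ : ℝ) : ℂ := Complex.exp ((θ : ℂ) * Complex.I)

/-- Integral over ∂𝔻 with respect to arclength. -/
def bint (f : ℂ → ℝ) : ℝ := ∫ θ in (0:ℝ)..(2 * π), f (bpt θ)

/-- A solution of the prescribed curvature problem for `(K, h)`. -/
def IsSolution (K h u : ℂ → ℝ) : Prop :=
  ContDiff ℝ 2 u ∧
  (∀ x ∈ unitDisk, -lap u x = 2 * K x * Real.exp (u x)) ∧
  (∀ x ∈ unitCircle, nderiv u x + 2 = 2 * h x * Real.exp (u x / 2))

/-- The auxiliary function Φ = H + √(H² + K). -/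
def Phi (K H : ℂ → ℝ) (x : ℂ) : ℝ := H x + Real.sqrt (H x ^ 2 + K x)

/-- `H` is the harmonic extension of `h`, C¹ up to the boundary. -/
def IsHarmExt (h H : ℂ → ℝ) : Prop :=
  ContDiff ℝ 1 H ∧ ContDiffOn ℝ 2 H unitDisk ∧
  (∀ x ∈ unitDisk, lap H x = 0) ∧ ∀ x ∈ unitCircle, H x = h x

/-- K_ε. -/
def Keps (K : ℂ → ℝ) (ε : ℝ) (x : ℂ) : ℝ := (K x - ε / 2) / (1 + ε)

/-- h_ε. -/
def heps (h : ℂ → ℝ) (ε : ℝ) (x : ℂ) : ℝ := h x / (1 + ε)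

/-- K̃_ε. -/
def Ktil (ε : ℝ) : ℝ := -ε / (2 * (1 + ε))

/-- h̃_ε. -/
def htil (ε : ℝ) : ℝ := 1 / (1 + ε)

/-- A solution of the perturbed problem (P_ε). -/
def IsPerturbedSolution (K h : ℂ → ℝ) (ε : ℝ) (u : ℂ → ℝ) : Prop :=
  ContDiff ℝ 2 u ∧
  (∀ x ∈ unitDisk, -lap u x + 2 * Ktil ε = 2 * Keps K ε x * Real.exp (u x)) ∧
  (∀ x ∈ unitCircle, nderiv u x + 2 * htil ε = 2 * heps h ε x * Real.exp (u x / 2))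

/-- The energy functional I. -/
def Ifun (K h u : ℂ → ℝ) : ℝ :=
  (∫ x in unitDisk, ((1/2) * gradSq u x - 2 * K x * Real.exp (u x))) +
  bint (fun x => 2 * u x - 4 * h x * Real.exp (u x / 2))

/-- The perturbation term T. -/
def Tfun (u : ℂ → ℝ) : ℝ :=
  ∫ x in unitDisk, ((1/2) * gradSq u x + Real.exp (u x) - u x)

/-- The perturbed functional I_ε. -/
def Ieps (K h : ℂ → ℝ) (ε : ℝ) (u : ℂ → ℝ) : ℝ := (Ifun K h u + ε * Tfun u) / (1 + ε)

/-- The squared H¹(𝔻) norm of `u`. -/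
def H1normSq (u : ℂ → ℝ) : ℝ :=
  (∫ x in unitDisk, gradSq u x) + ∫ x in unitDisk, (u x) ^ 2

/-- Continuity of a family of functions on a set, with respect to the H¹(𝔻) norm
on the target. -/
def H1ContinuousOn {E : Type*} [PseudoMetricSpace E] (G : E → ℂ → ℝ) (S : Set E) : Prop :=
  ∀ y ∈ S, ∀ r : ℝ, 0 < r → ∃ d > (0:ℝ), ∀ y' ∈ S, dist y' y < d →
    Real.sqrt (H1normSq (fun x => G y' x - G y x)) < r

/-- Membership in the constrained set M: u ∈ C¹(closed 𝔻), unit boundary mass and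
zero boundary barycenter. -/
def MemM (u : ℂ → ℝ) : Prop :=
  ContDiff ℝ 1 u ∧
  bint (fun x => Real.exp (u x / 2)) = 1 ∧
  bint (fun x => x.re * Real.exp (u x / 2)) = 0 ∧
  bint (fun x => x.im * Real.exp (u x / 2)) = 0

section PartB1
open MeasureTheory Real Filter

abbrev E3 := EuclideanSpace ℝ (Fin 3)

def ent (A : E3 →L[ℝ] E3) (i j : Fin 3) : ℝ := A (EuclideanSpace.single j 1) i

def cc1 (A : E3 →L[ℝ] E3) : ℝ := ent A 0 0 + ent A 1 1 + ent A 2 2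
def cc2 (A : E3 →L[ℝ] E3) : ℝ := ent A 0 0 * ent A 1 1 - ent A 0 1 * ent A 1 0
  + (ent A 0 0 * ent A 2 2 - ent A 0 2 * ent A 2 0) + (ent A 1 1 * ent A 2 2 - ent A 1 2 * ent A 2 1)
def cc3 (A : E3 →L[ℝ] E3) : ℝ := ent A 0 0 * (ent A 1 1 * ent A 2 2 - ent A 1 2 * ent A 2 1)
  - ent A 0 1 * (ent A 1 0 * ent A 2 2 - ent A 1 2 * ent A 2 0)
  + ent A 0 2 * (ent A 1 0 * ent A 2 1 - ent A 1 1 * ent A 2 0)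

lemma det_poly (A : E3 →L[ℝ] E3) (t : ℝ) :
    (1 + t • A).det = 1 + t * cc1 A + t ^ 2 * cc2 A + t ^ 3 * cc3 A := by
  have h : (1 + t • A).det =
      (LinearMap.toMatrix (EuclideanSpace.basisFun (Fin 3) ℝ).toBasis
        (EuclideanSpace.basisFun (Fin 3) ℝ).toBasis ((1 + t • A : E3 →L[ℝ] E3) : E3 →ₗ[ℝ] E3)).det := by
    rw [LinearMap.det_toMatrix]
  rw [h, Matrix.det_fin_three]
  simp only [LinearMap.toMatrix_apply, OrthonormalBasis.coe_toBasis, EuclideanSpace.basisFun_apply,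
    OrthonormalBasis.coe_toBasis_repr_apply, EuclideanSpace.basisFun_repr,
    ContinuousLinearMap.coe_coe, _root_.add_apply, one_apply_eq_self,
    _root_.smul_apply, PiLp.add_apply, PiLp.smul_apply, smul_eq_mul]
  simp only [cc1, cc2, cc3, ent]
  simp
  ring

lemma continuous_ent (i j : Fin 3) : Continuous (fun A : E3 →L[ℝ] E3 => ent A i j) := by
  unfold ent; fun_prop

lemma continuous_cc1 : Continuous cc1 := by
  have := continuous_ent; unfold cc1; fun_prop
lemma continuous_cc2 : Continuous cc2 := by
  have := continuous_ent; unfold cc2; fun_prop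
lemma continuous_cc3 : Continuous cc3 := by
  have := continuous_ent; unfold cc3; fun_prop

lemma det_pos_of_small (A : E3 →L[ℝ] E3) (t : ℝ) (ht : 0 ≤ t) (h : t * ‖A‖ < 1) :
    0 < (1 + t • A).det := by
  by_contra hneg
  push Not at hneg
  have hc : ContinuousOn (fun s : ℝ => (1 + s • A).det) (Set.Icc 0 t) := by
    simp only [det_poly]; fun_prop
  have := intermediate_value_Icc' ht hc
  have h0 : (0:ℝ) ∈ Set.Icc ((1 + t • A).det) ((1 + (0:ℝ) • A).det) :=
    ⟨hneg, by rw [det_poly]; simp⟩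
  obtain ⟨s, hs, hs0⟩ := this h0
  have hlt : ‖-(s • A)‖ < 1 := by
    rw [norm_neg, norm_smul, Real.norm_eq_abs, abs_of_nonneg hs.1]
    nlinarith [hs.2, norm_nonneg A]
  have hu : IsUnit (1 + s • A) := by
    have := isUnit_one_sub_of_norm_lt_one hlt
    simpa using this
  have : IsUnit ((1 + s • A : E3 →L[ℝ] E3) : E3 →ₗ[ℝ] E3).det := by
    apply IsUnit.map
    obtain ⟨u, hu⟩ := hu
    rw [← hu]
    exact (u.isUnit).map (ContinuousLinearMap.toLinearMapRingHom (R₁ := ℝ) (M₁ := E3))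
  exact this.ne_zero hs0

lemma integrable_bdd (g : E3 → E3) (C : NNReal) (hg : LipschitzWith C g) (R : ℝ)
    (c : (E3 →L[ℝ] E3) → ℝ) (hc : Continuous c) :
    IntegrableOn (fun x => c (fderiv ℝ g x)) (Metric.ball (0:E3) R) := by
  have hcomp : IsCompact (c '' Metric.closedBall 0 C) :=
    (isCompact_closedBall _ _).image hc
  obtain ⟨M, hM⟩ := hcomp.isBounded.exists_norm_le
  refine Measure.integrableOn_of_bounded (M := M) measure_ball_lt_top.ne ?_ ?_
  · exact (hc.measurable.comp (measurable_fderiv ℝ g)).aestronglyMeasurable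
  · refine Filter.Eventually.of_forall fun x => hM _ ⟨_, ?_, rfl⟩
    simpa using norm_fderiv_le_of_lipschitz ℝ hg

lemma vol_small (g : E3 → E3) (C : NNReal) (hg : LipschitzWith C g) (R : ℝ)
    (hout : ∀ x, R ≤ ‖x‖ → g x = 0) (hd : ∀ x ∈ Metric.ball (0:E3) R, DifferentiableAt ℝ g x)
    (t : ℝ) (ht : 0 ≤ t) (htC : t * C < 1) :
    ∫ x in Metric.ball (0:E3) R, (1 + t • fderiv ℝ g x).det = (volume (Metric.ball (0:E3) R)).toReal := by
  set f : E3 → E3 := fun x => x + t • g x with hf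
  let c : NNReal := ⟨t, ht⟩ * C
  have hap : ApproximatesLinearOn f ((ContinuousLinearEquiv.refl ℝ E3 : E3 ≃L[ℝ] E3) : E3 →L[ℝ] E3)
      Set.univ c := by
    intro x _ y _
    have : f x - f y - (x - y) = t • (g x - g y) := by simp only [hf, smul_sub]; abel
    show ‖f x - f y - (x - y)‖ ≤ _
    rw [this, norm_smul, Real.norm_eq_abs, abs_of_nonneg ht]
    have h2 := hg.dist_le_mul x y
    rw [dist_eq_norm, dist_eq_norm] at h2
    show t * _ ≤ (t * C) * _
    rw [mul_assoc]; exact mul_le_mul_of_nonneg_left h2 ht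
  have hc : Subsingleton E3 ∨ c < ‖((ContinuousLinearEquiv.refl ℝ E3).symm : E3 →L[ℝ] E3)‖₊⁻¹ := by
    right
    have : ‖((ContinuousLinearEquiv.refl ℝ E3).symm : E3 →L[ℝ] E3)‖₊ = 1 := by
      apply NNReal.eq
      simp
    rw [this, inv_one]
    exact htC
  have hinj : Function.Injective f := by
    have := hap.injOn hc
    exact Set.injOn_univ.1 this
  have hsurj := hap.surjective hc
  have hid : ∀ x, R ≤ ‖x‖ → f x = x := fun x hx => by simp [hf, hout x hx]
  have himg : f '' Metric.ball (0:E3) R = Metric.ball (0:E3) R := by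
    apply Set.Subset.antisymm
    · rintro _ ⟨x, hx, rfl⟩
      by_contra hcon
      have h1 : R ≤ ‖f x‖ := by simpa using hcon
      have h2 := hinj (hid _ h1)
      rw [h2] at h1
      simp at hx; linarith
    · intro y hy
      obtain ⟨x, rfl⟩ := hsurj y
      refine ⟨x, ?_, rfl⟩
      by_contra hcon
      have h1 : R ≤ ‖x‖ := by simpa using hcon
      rw [hid x h1] at hy
      simp at hy; linarith
  have hder : ∀ x ∈ Metric.ball (0:E3) R, HasFDerivWithinAt f (1 + t • fderiv ℝ g x) (Metric.ball (0:E3) R) x := by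
    intro x hx
    exact ((hasFDerivAt_id x).add ((hd x hx).hasFDerivAt.const_smul t)).hasFDerivWithinAt
  have key := integral_image_eq_integral_abs_det_fderiv_smul volume measurableSet_ball hder hinj.injOn (fun _ => (1:ℝ))
  rw [himg] at key
  simp only [smul_eq_mul, mul_one, integral_const, MeasurableSet.univ, measureReal_restrict_apply, Set.univ_inter] at key
  rw [← Measure.real, key]
  refine setIntegral_congr_fun measurableSet_ball fun x hx => ?_
  show _ = |_|
  rw [abs_of_pos]
  apply det_pos_of_small _ _ ht
  have := norm_fderiv_le_of_lipschitz ℝ hg (x₀ := x)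
  nlinarith [norm_nonneg (fderiv ℝ g x)]

lemma cubic_zero (a b c t0 : ℝ) (h0 : 0 < t0) (h : ∀ t, 0 ≤ t → t < t0 → t * a + t^2 * b + t^3 * c = 0) :
    a + b + c = 0 := by
  have h1 := h (t0/2) (by linarith) (by linarith)
  have h2 := h (t0/3) (by linarith) (by linarith)
  have h3 := h (t0/4) (by linarith) (by linarith)
  have e1 : a + (t0/2) * b + (t0/2)^2 * c = 0 := by
    have : (t0/2) * (a + (t0/2) * b + (t0/2)^2 * c) = 0 := by linarith
    rcases mul_eq_zero.1 this with h | h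
    · linarith
    · exact h
  have e2 : a + (t0/3) * b + (t0/3)^2 * c = 0 := by
    have : (t0/3) * (a + (t0/3) * b + (t0/3)^2 * c) = 0 := by linarith
    rcases mul_eq_zero.1 this with h | h
    · linarith
    · exact h
  have e3 : a + (t0/4) * b + (t0/4)^2 * c = 0 := by
    have : (t0/4) * (a + (t0/4) * b + (t0/4)^2 * c) = 0 := by linarith
    rcases mul_eq_zero.1 this with h | h
    · linarith
    · exact h
  have f1 : t0^2 * c = 0 := by nlinarith
  have hc : c = 0 := by
    rcases mul_eq_zero.1 f1 with h | h
    · nlinarith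
    · exact h
  subst hc
  have f2 : t0 * b = 0 := by linarith
  have hb : b = 0 := by
    rcases mul_eq_zero.1 f2 with h | h
    · linarith
    · exact h
  subst hb
  linarith

lemma vol_one (g : E3 → E3) (C : NNReal) (hg : LipschitzWith C g) (R : ℝ)
    (hout : ∀ x, R ≤ ‖x‖ → g x = 0) (hd : ∀ x ∈ Metric.ball (0:E3) R, DifferentiableAt ℝ g x) :
    ∫ x in Metric.ball (0:E3) R, (1 + fderiv ℝ g x).det = (volume (Metric.ball (0:E3) R)).toReal := by
  have i1 := integrable_bdd g C hg R cc1 continuous_cc1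
  have i2 := integrable_bdd g C hg R cc2 continuous_cc2
  have i3 := integrable_bdd g C hg R cc3 continuous_cc3
  have i0 : IntegrableOn (fun x : E3 => (1:ℝ)) (Metric.ball (0:E3) R) := by
    apply integrableOn_const measure_ball_lt_top.ne
  have hexp : ∀ t : ℝ, ∫ x in Metric.ball (0:E3) R, (1 + t • fderiv ℝ g x).det =
      (volume (Metric.ball (0:E3) R)).toReal + (t * (∫ x in Metric.ball (0:E3) R, cc1 (fderiv ℝ g x))
       + t^2 * (∫ x in Metric.ball (0:E3) R, cc2 (fderiv ℝ g x))
       + t^3 * (∫ x in Metric.ball (0:E3) R, cc3 (fderiv ℝ g x))) := by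
    intro t
    simp only [det_poly]
    rw [integral_add, integral_add, integral_add, integral_const_mul, integral_const_mul, integral_const_mul]
    · simp [Measure.real]; ring
    · exact i0
    · exact i1.const_mul t
    · exact i0.add (i1.const_mul t)
    · exact i2.const_mul _
    · exact (i0.add (i1.const_mul t)).add (i2.const_mul _)
    · exact i3.const_mul _
  have hz := cubic_zero _ _ _ (1/((C:ℝ)+1)) (by positivity) (fun t ht0 ht1 => by
    have h1 := vol_small g C hg R hout hd t ht0 (by
      have : t * (C+1) < 1 := by rwa [lt_div_iff₀ (by positivity)] at ht1
      linarith)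
    rw [hexp] at h1
    exact (add_eq_left.1 h1))
  have := hexp 1
  simp only [one_smul, one_mul, one_pow] at this
  rw [this, hz, add_zero]

end PartB1

section PartB2
open MeasureTheory Real Filter

lemma normalize_lip (m : ℝ) (hm : 0 < m) (z w : E3) (hz : m ≤ ‖z‖) (hw : m ≤ ‖w‖) :
    ‖‖z‖⁻¹ • z - ‖w‖⁻¹ • w‖ ≤ 2 / m * ‖z - w‖ := by
  have hz0 : 0 < ‖z‖ := by linarith
  have hw0 : 0 < ‖w‖ := by linarith
  have e : ‖z‖⁻¹ • z - ‖w‖⁻¹ • w = ‖z‖⁻¹ • (z - w) + (‖z‖⁻¹ - ‖w‖⁻¹) • w := by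
    rw [smul_sub, sub_smul]; abel
  rw [e]
  have h1 : ‖‖z‖⁻¹ • (z - w)‖ = ‖z‖⁻¹ * ‖z - w‖ := by
    rw [norm_smul, norm_inv, norm_norm]
  have h2 : ‖(‖z‖⁻¹ - ‖w‖⁻¹) • w‖ ≤ ‖z‖⁻¹ * ‖z - w‖ := by
    rw [norm_smul, Real.norm_eq_abs]
    have : (‖z‖⁻¹ - ‖w‖⁻¹) = ‖z‖⁻¹ * ((‖w‖ - ‖z‖) * ‖w‖⁻¹) := by field_simp
    rw [this, abs_mul, abs_mul, abs_of_pos (inv_pos.2 hz0), abs_of_pos (inv_pos.2 hw0), mul_assoc, mul_assoc,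
      inv_mul_cancel₀ hw0.ne', mul_one]
    gcongr
    rw [abs_sub_comm]
    exact abs_norm_sub_norm_le z w
  have h3 : ‖z‖⁻¹ ≤ 1 / m := by
    rw [inv_eq_one_div]; exact one_div_le_one_div_of_le hm hz
  calc _ ≤ ‖‖z‖⁻¹ • (z - w)‖ + ‖(‖z‖⁻¹ - ‖w‖⁻¹) • w‖ := norm_add_le _ _
    _ ≤ 1 / m * ‖z - w‖ + 1 / m * ‖z - w‖ := by
      rw [h1]
      have := mul_le_mul_of_nonneg_right h3 (norm_nonneg (z-w))
      linarith
    _ = _ := by ring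

lemma no_smooth (φ : E3 → E3) (hφ : ContDiff ℝ 1 φ) (hsup : ∀ x, 2 ≤ ‖x‖ → φ x = 0)
    (m : ℝ) (hm : 0 < m) (hne : ∀ x, m ≤ ‖x + φ x‖) : False := by
  have hcs : HasCompactSupport φ := by
    apply HasCompactSupport.intro (isCompact_closedBall (0:E3) 2)
    intro x hx
    apply hsup
    simp at hx; linarith
  obtain ⟨C0, hC0⟩ := hφ.lipschitzWith_of_hasCompactSupport hcs (by norm_num)
  obtain ⟨B, hB⟩ := hφ.continuous.bounded_above_of_compact_support hcs
  have hB0 : 0 ≤ B := (norm_nonneg _).trans (hB 0)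
  set R := 3 + B with hR
  set G : E3 → E3 := fun x => x + φ x with hG
  set g : E3 → E3 := fun x => φ x + (max (R - ‖G x‖) 0) • (‖G x‖⁻¹ • G x) with hg
  have hGout : ∀ x, 2 ≤ ‖x‖ → G x = x := fun x hx => by simp [hG, hsup x hx]
  have hout : ∀ x, R ≤ ‖x‖ → g x = 0 := by
    intro x hx
    have h2 : 2 ≤ ‖x‖ := by linarith
    simp only [hg, hGout x h2, hsup x h2]
    rw [max_eq_right (by linarith)]; simp
  have hGd : ContDiff ℝ 1 G := contDiff_id.add hφ
  have hGlip : ∀ x y, ‖G x - G y‖ ≤ (1 + C0) * ‖x - y‖ := by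
    intro x y
    have h1 := hC0.dist_le_mul x y
    rw [dist_eq_norm, dist_eq_norm] at h1
    have : G x - G y = (x - y) + (φ x - φ y) := by simp only [hG]; abel
    rw [this]
    have := norm_add_le (x-y) (φ x - φ y)
    linarith
  have hlip : LipschitzWith (C0 + (1 + C0) + (Real.toNNReal (R * (2/m))) * (1 + C0)) g := by
    apply LipschitzWith.of_dist_le_mul
    intro x y
    rw [dist_eq_norm, dist_eq_norm]
    have h1 := hC0.dist_le_mul x y
    rw [dist_eq_norm, dist_eq_norm] at h1
    set p : E3 → ℝ := fun x => max (R - ‖G x‖) 0 with hp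
    set n : E3 → E3 := fun x => ‖G x‖⁻¹ • G x with hn
    have e : g x - g y = (φ x - φ y) + ((p x - p y) • n x + p y • (n x - n y)) := by
      simp only [hg, hp, hn, sub_smul, smul_sub]; abel
    have hn1 : ‖n x‖ = 1 := by
      simp only [hn, norm_smul, norm_inv, norm_norm]
      have := hne x
      exact inv_mul_cancel₀ (by linarith : (0:ℝ) < ‖G x‖).ne'
    have hp1 : |p x - p y| ≤ ‖G x - G y‖ := by
      have := abs_max_sub_max_le_abs (R - ‖G x‖) (R - ‖G y‖) 0
      refine this.trans ?_
      rw [show R - ‖G x‖ - (R - ‖G y‖) = ‖G y‖ - ‖G x‖ by ring, norm_sub_rev]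
      exact abs_norm_sub_norm_le _ _
    have hp2 : |p y| ≤ R := by
      rw [abs_of_nonneg (le_max_right _ _)]
      apply max_le
      · linarith [norm_nonneg (G y)]
      · linarith
    have hn2 := normalize_lip m hm (G x) (G y) (hne x) (hne y)
    have hR0 : 0 ≤ R * (2/m) := by positivity
    push_cast
    rw [Real.coe_toNNReal _ hR0, e]
    have a1 := norm_add_le (φ x - φ y) ((p x - p y) • n x + p y • (n x - n y))
    have a2 := norm_add_le ((p x - p y) • n x) (p y • (n x - n y))
    rw [norm_smul (p x - p y), norm_smul (p y), hn1, Real.norm_eq_abs, Real.norm_eq_abs] at a2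
    have a3 : |p y| * ‖n x - n y‖ ≤ R * (2 / m * ((1 + C0) * ‖x - y‖)) := by
      apply mul_le_mul hp2 (hn2.trans _) (norm_nonneg _) (by linarith)
      gcongr
      exact hGlip x y
    have := hGlip x y
    nlinarith
  have hin : ∀ x, ‖x‖ < R → ‖G x‖ < R := by
    intro x hx
    by_contra hcon
    push Not at hcon
    have h1 : ‖G x‖ ≤ ‖x‖ + B := (norm_add_le _ _).trans (by linarith [hB x])
    have := hGout x (by linarith)
    rw [this] at hcon
    linarith
  set H : E3 → E3 := fun x => R • (‖G x‖⁻¹ • G x) with hH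
  have hGne : ∀ x, G x ≠ 0 := fun x h => by
    have := hne x
    rw [show x + φ x = G x from rfl, h] at this
    simp at this; linarith
  have hHd : ∀ x, DifferentiableAt ℝ H x := by
    intro x
    have hd := (hGd.differentiable (by norm_num)) x
    have := (hd.norm ℝ (hGne x)).inv (norm_ne_zero_iff.2 (hGne x))
    exact (this.smul hd).const_smul R
  have hev : ∀ x, ‖x‖ < R → g =ᶠ[nhds x] fun y => H y - y := by
    intro x hx
    have ho : IsOpen {y : E3 | ‖y‖ < R} := isOpen_lt continuous_norm continuous_const
    filter_upwards [ho.mem_nhds hx] with y hy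
    have h1 := hin y hy
    simp only [hg, hH]
    rw [max_eq_left (by linarith), sub_smul, smul_smul ‖G y‖, mul_inv_cancel₀ (norm_ne_zero_iff.2 (hGne y)), one_smul]
    simp only [hG]; abel
  have hfd : ∀ x, ‖x‖ < R → 1 + fderiv ℝ g x = fderiv ℝ H x := by
    intro x hx
    rw [(hev x hx).fderiv_eq, fderiv_fun_sub (hHd x) differentiableAt_fun_id, show fderiv ℝ (fun y : E3 => y) x = 1 from fderiv_id]
    abel
  have hdet : ∀ x, (fderiv ℝ H x).det = 0 := by
    intro x
    by_contra hcon
    have hnH : ∀ y, inner ℝ (H y) (H y) = R ^ 2 := by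
      intro y
      rw [real_inner_self_eq_norm_sq]
      simp only [hH, norm_smul, norm_inv, norm_norm]
      rw [inv_mul_cancel₀ (norm_ne_zero_iff.2 (hGne y)), mul_one, Real.norm_eq_abs, sq_abs]
    have h0 : ∀ v, inner ℝ (H x) (fderiv ℝ H x v) = 0 := by
      intro v
      have h1 := fderiv_inner_apply ℝ (hHd x) (hHd x) v
      have h2 : (fun y => inner ℝ (H y) (H y)) = fun _ => R ^ 2 := funext hnH
      rw [h2] at h1
      simp only [fderiv_fun_const, Pi.zero_apply, zero_apply] at h1
      rw [real_inner_comm (H x) (fderiv ℝ H x v)] at h1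
      linarith
    have hs := (LinearEquiv.ofIsUnitDet (f := ((fderiv ℝ H x : E3 →L[ℝ] E3) : E3 →ₗ[ℝ] E3))
      (v := (EuclideanSpace.basisFun (Fin 3) ℝ).toBasis) (v' := (EuclideanSpace.basisFun (Fin 3) ℝ).toBasis) (by
        rw [LinearMap.det_toMatrix]; exact isUnit_iff_ne_zero.2 hcon)).surjective
    obtain ⟨v, hv⟩ := hs (H x)
    have hv' : fderiv ℝ H x v = H x := hv
    have := h0 v
    rw [hv', hnH] at this
    have : R = 0 := by simpa using this
    linarith
  have key := vol_one g _ hlip R hout (fun x hx => by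
    have hx' : ‖x‖ < R := by simpa using hx
    exact ((hHd x).sub differentiableAt_id).congr_of_eventuallyEq (hev x hx'))
  rw [setIntegral_congr_fun (g := fun _ => (0:ℝ)) measurableSet_ball (fun x hx => by
    have hx' : ‖x‖ < R := by simpa using hx
    show (1 + fderiv ℝ g x).det = 0
    rw [hfd x hx', hdet x])] at key
  simp only [integral_zero] at key
  have hpos : 0 < (volume (Metric.ball (0:E3) R)).toReal :=
    ENNReal.toReal_pos (Metric.measure_ball_pos volume _ (by linarith)).ne' measure_ball_lt_top.ne
  linarith

lemma exists_zero_of_linking (F : E3 → E3) (hF : ContinuousOn F (Metric.closedBall 0 1))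
    (hb : ∀ y ∈ Metric.sphere (0:E3) 1, ∀ s ∈ Set.Icc (0:ℝ) 1, (1 - s) • F y + s • y ≠ 0) :
    ∃ x ∈ Metric.closedBall (0:E3) 1, F x = 0 := by
  by_contra hcon
  push Not at hcon
  set pr : E3 → E3 := fun x => (max 1 ‖x‖)⁻¹ • x with hpr
  have hmpos : ∀ x : E3, 0 < max 1 ‖x‖ := fun x => lt_of_lt_of_le one_pos (le_max_left _ _)
  have hprc : Continuous pr := by
    have h1 : Continuous (fun x : E3 => (max 1 ‖x‖)⁻¹) := (continuous_const.max continuous_norm).inv₀ (fun x => (hmpos x).ne')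
    exact h1.smul continuous_id'
  have hprm : ∀ x, pr x ∈ Metric.closedBall (0:E3) 1 := by
    intro x
    simp only [hpr, mem_closedBall_zero_iff, norm_smul, norm_inv, Real.norm_eq_abs, abs_of_pos (hmpos x)]
    rw [inv_mul_le_iff₀ (hmpos x), mul_one]
    exact le_max_right _ _
  set s : E3 → ℝ := fun x => min 1 (max 0 (‖x‖ - 1)) with hs
  have hsc : Continuous s := by simp only [hs]; fun_prop
  have hs0 : ∀ x, 0 ≤ s x := fun x => le_min zero_le_one (le_max_left _ _)
  have hs1 : ∀ x, s x ≤ 1 := fun x => min_le_left _ _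
  set G : E3 → E3 := fun x => (1 - s x) • F (pr x) + s x • x with hG
  have hGc : Continuous G := by
    have : Continuous (fun x => F (pr x)) := hF.comp_continuous hprc hprm
    exact ((continuous_const.sub hsc).smul this).add (hsc.smul continuous_id')
  have hGne : ∀ x, G x ≠ 0 := by
    intro x
    rcases le_total ‖x‖ 1 with hx | hx
    · have h1 : s x = 0 := by simp [hs, hx]
      have h2 : pr x = x := by simp [hpr, hx]
      simp only [hG, h1, h2]
      simpa using hcon x (by simpa using hx)
    · have hx0 : 0 < ‖x‖ := by linarith
      have h2 : pr x = ‖x‖⁻¹ • x := by simp [hpr, hx]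
      set d := (1 - s x) + s x * ‖x‖ with hd
      have hdpos : 0 < d := by nlinarith [hs0 x, hs1 x]
      intro h0
      apply hb (‖x‖⁻¹ • x) (by simp [norm_smul, hx0.ne']) (s x * ‖x‖ / d)
        ⟨by have := hs0 x; positivity, by rw [div_le_one hdpos]; linarith [hs1 x]⟩
      have e1 : 1 - s x * ‖x‖ / d = d⁻¹ * (1 - s x) := by field_simp; rw [hd]; ring
      have e2 : (s x * ‖x‖ / d) • ‖x‖⁻¹ • x = d⁻¹ • s x • x := by
        rw [smul_smul, smul_smul]; congr 1; field_simp
      rw [e1, e2, ← smul_smul, ← smul_add, ← h2]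
      have h0' : (1 - s x) • F (pr x) + s x • x = 0 := h0
      rw [h0', smul_zero]
  have hGout : ∀ x, 2 ≤ ‖x‖ → G x = x := by
    intro x hx
    have h1 : s x = 1 := by
      simp only [hs]
      rw [min_eq_left]; exact le_max_of_le_right (by linarith)
    simp [hG, h1]
  obtain ⟨x0, _, hx0⟩ := (isCompact_closedBall (0:E3) 2).exists_isMinOn ⟨0, by simp⟩ (hGc.norm.continuousOn)
  set m := min ‖G x0‖ 2 with hm
  have hmp : 0 < m := lt_min (norm_pos_iff.2 (hGne x0)) (by norm_num)
  have hGm : ∀ x, m ≤ ‖G x‖ := by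
    intro x
    rcases le_total ‖x‖ 2 with hx | hx
    · exact (min_le_left _ _).trans (hx0 (by simpa using hx))
    · rw [hGout x hx]; exact (min_le_right _ _).trans hx
  have hGc' : Continuous (fun x => G x - x) := hGc.sub continuous_id'
  obtain ⟨φ, hφ, hap, hsup⟩ := hGc'.exists_contDiff_approx 1 (ε := fun _ => m/2)
    continuous_const (fun _ => by linarith)
  refine no_smooth φ hφ ?_ (m/2) (by linarith) ?_
  · intro x hx
    by_contra hne
    have := hsup hne
    apply this
    simp [hGout x hx]
  · intro x
    have h1 := hap x
    rw [dist_eq_norm] at h1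
    have h2 := hGm x
    have h3 : G x = (x + φ x) - (φ x - (G x - x)) := by abel
    have h4 := norm_sub_le (x + φ x) (φ x - (G x - x))
    rw [← h3] at h4
    linarith

end PartB2

section PartC1
open MeasureTheory Real Filter

lemma bpt_eq (θ : ℝ) : bpt θ = (Real.cos θ : ℂ) + (Real.sin θ : ℂ) * Complex.I := by
  simp [bpt, Complex.exp_mul_I]

lemma bpt_re (θ : ℝ) : (bpt θ).re = Real.cos θ := by simp [bpt_eq, -Complex.ofReal_cos, -Complex.ofReal_sin]

lemma bpt_im (θ : ℝ) : (bpt θ).im = Real.sin θ := by simp [bpt_eq, -Complex.ofReal_cos, -Complex.ofReal_sin]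

lemma bpt_norm (θ : ℝ) : ‖bpt θ‖ = 1 := by simp [bpt, Complex.norm_exp_ofReal_mul_I]

lemma bpt_cont : Continuous bpt := by unfold bpt; fun_prop

lemma bpt_periodic : Function.Periodic bpt (2 * π) := by
  intro θ
  simp [bpt_eq, -Complex.ofReal_cos, -Complex.ofReal_sin]

lemma bpt_mem (θ : ℝ) : bpt θ ∈ unitCircle := by simp [unitCircle, bpt_norm]

lemma rbpt_mem {r θ : ℝ} (h0 : 0 ≤ r) (h1 : r ≤ 1) : (r : ℂ) * bpt θ ∈ Metric.closedBall (0:ℂ) 1 := by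
  simp [bpt_norm, abs_of_nonneg h0, h1]

lemma polar_int (f : ℂ → ℝ) (hf : ContinuousOn f (Metric.closedBall 0 1)) :
    ∫ x in unitDisk, f x = ∫ r in (0:ℝ)..1, ∫ θ in (0:ℝ)..(2*π), r * f (r * bpt θ) := by
  have h1 : ∫ x in unitDisk, f x = ∫ x, (unitDisk.indicator f) x := by
    rw [integral_indicator]; exact measurableSet_ball
  rw [h1, ← Complex.integral_comp_polarCoord_symm, polarCoord_target]
  have e : ∀ p : ℝ × ℝ, Complex.polarCoord.symm p = (p.1 : ℂ) * bpt p.2 := by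
    intro p; rw [Complex.polarCoord_symm_apply, bpt_eq]
  have h2 : ∫ p in Set.Ioi (0:ℝ) ×ˢ Set.Ioo (-π) π, p.1 • (unitDisk.indicator f) (Complex.polarCoord.symm p)
     = ∫ p in Set.Ioi (0:ℝ) ×ˢ Set.Ioo (-π) π, (Set.Ioo (0:ℝ) 1 ×ˢ Set.Ioo (-π) π).indicator (fun p => p.1 * f (p.1 * bpt p.2)) p := by
    apply setIntegral_congr_fun (measurableSet_Ioi.prod measurableSet_Ioo)
    rintro ⟨r, θ⟩ ⟨hr, hθ⟩
    simp only [e] at *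
    have hr0 : 0 < r := hr
    by_cases h : r < 1
    · rw [Set.indicator_of_mem, Set.indicator_of_mem]; rfl
      · exact ⟨⟨hr, h⟩, hθ⟩
      · simp [unitDisk, bpt_norm, abs_of_pos hr0, h]
    · rw [Set.indicator_of_notMem, Set.indicator_of_notMem]; simp
      · exact fun hh => h hh.1.2
      · simp [unitDisk, bpt_norm, abs_of_pos hr0]; linarith
  rw [h2, setIntegral_indicator (measurableSet_Ioo.prod measurableSet_Ioo)]
  have h3 : (Set.Ioi (0:ℝ) ×ˢ Set.Ioo (-π) π) ∩ (Set.Ioo (0:ℝ) 1 ×ˢ Set.Ioo (-π) π) = Set.Ioo (0:ℝ) 1 ×ˢ Set.Ioo (-π) π := by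
    ext ⟨r, θ⟩; simp only [Set.mem_inter_iff, Set.mem_prod, Set.mem_Ioi, Set.mem_Ioo]; tauto
  rw [h3]
  have hc : ContinuousOn (fun p : ℝ × ℝ => p.1 * f (p.1 * bpt p.2)) (Set.Icc (0:ℝ) 1 ×ˢ Set.Icc (-π) π) := by
    apply ContinuousOn.mul (by fun_prop)
    apply hf.comp
    · apply Continuous.continuousOn
      exact (Complex.continuous_ofReal.comp continuous_fst).mul (bpt_cont.comp continuous_snd)
    · rintro ⟨r, θ⟩ ⟨hr, _⟩
      exact rbpt_mem hr.1 hr.2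
  have hi : IntegrableOn (fun p : ℝ × ℝ => p.1 * f (p.1 * bpt p.2)) (Set.Ioo (0:ℝ) 1 ×ˢ Set.Ioo (-π) π) (volume.prod volume) :=
    (hc.integrableOn_compact (isCompact_Icc.prod isCompact_Icc)).mono_set
      (Set.prod_mono Set.Ioo_subset_Icc_self Set.Ioo_subset_Icc_self)
  rw [Measure.volume_eq_prod, setIntegral_prod _ hi, intervalIntegral.integral_of_le zero_le_one, integral_Ioc_eq_integral_Ioo]
  congr 1; ext r
  rw [← integral_Ioc_eq_integral_Ioo, ← intervalIntegral.integral_of_le (by linarith [pi_pos])]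
  have hp : Function.Periodic (fun θ => r * f (r * bpt θ)) (2*π) := by
    intro θ; simp only [bpt_periodic θ]
  have := hp.intervalIntegral_add_eq (-π) 0
  rw [show -π + 2 * π = π by ring, zero_add] at this
  exact this

lemma bpt_hasDerivAt (θ : ℝ) : HasDerivAt bpt (bpt θ * Complex.I) θ := by
  unfold bpt
  have h : HasDerivAt (fun θ : ℝ => (θ:ℂ) * Complex.I) Complex.I θ := by
    simpa using (Complex.ofRealCLM.hasDerivAt (x := θ)).mul_const Complex.I
  exact h.cexp

lemma fderiv_eq_pd (u : ℂ → ℝ) (x v : ℂ) : fderiv ℝ u x v = v.re * pd u 1 x + v.im * pd u Complex.I x := by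
  have : v = v.re • (1:ℂ) + v.im • Complex.I := by
    apply Complex.ext <;> simp
  conv_lhs => rw [this]
  rw [map_add, map_smul, map_smul]; rfl

lemma pd_continuousOn (u : ℂ → ℝ) (v : ℂ) (s : Set ℂ) (h : ∀ x ∈ s, ContDiffAt ℝ 1 u x) : ContinuousOn (pd u v) s := by
  intro x hx
  have := ((h x hx).fderiv_right (m := 0) (by norm_num)).continuousAt
  exact (this.clm_apply continuousAt_const).continuousWithinAt

def polE' (r θ : ℝ) : ℝ × ℝ →L[ℝ] ℂ :=
  (ContinuousLinearMap.fst ℝ ℝ ℝ).smulRight (bpt θ) + (ContinuousLinearMap.snd ℝ ℝ ℝ).smulRight (r * (bpt θ * Complex.I))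

lemma polE_hasFDerivAt (p : ℝ × ℝ) : HasFDerivAt (fun p : ℝ × ℝ => (p.1 : ℂ) * bpt p.2) (polE' p.1 p.2) p := by
  have h1 : HasFDerivAt (fun p : ℝ × ℝ => (p.1 : ℂ)) (Complex.ofRealCLM.comp (ContinuousLinearMap.fst ℝ ℝ ℝ)) p :=
    (Complex.ofRealCLM.comp (ContinuousLinearMap.fst ℝ ℝ ℝ)).hasFDerivAt
  have h2 : HasFDerivAt (fun p : ℝ × ℝ => bpt p.2) _ p := (bpt_hasDerivAt p.2).hasFDerivAt.comp p (hasFDerivAt_snd)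
  refine (h1.fun_mul h2).congr_fderiv ?_
  ext v <;> simp [polE']

lemma div_thm (X Y : ℂ → ℝ) (hX : ∀ x ∈ Metric.closedBall (0:ℂ) 1, ContDiffAt ℝ 1 X x)
    (hY : ∀ x ∈ Metric.closedBall (0:ℂ) 1, ContDiffAt ℝ 1 Y x) :
    ∫ x in unitDisk, (pd X 1 x + pd Y Complex.I x) = bint (fun x => x.re * X x + x.im * Y x) := by
  have hc : ContinuousOn (fun x => pd X 1 x + pd Y Complex.I x) (Metric.closedBall (0:ℂ) 1) :=
    (pd_continuousOn X 1 _ hX).add (pd_continuousOn Y _ _ hY)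
  rw [polar_int _ hc]
  set E : ℝ × ℝ → ℂ := fun p => (p.1 : ℂ) * bpt p.2 with hE
  have hEc : Continuous E := (Complex.continuous_ofReal.comp continuous_fst).mul (bpt_cont.comp continuous_snd)
  set f : ℝ × ℝ → ℝ := fun p => p.1 * (Real.cos p.2 * X (E p) + Real.sin p.2 * Y (E p)) with hf
  set g : ℝ × ℝ → ℝ := fun p => -Real.sin p.2 * X (E p) + Real.cos p.2 * Y (E p) with hg
  have hEm : ∀ p ∈ Set.uIcc (0:ℝ) 1 ×ˢ Set.uIcc (0:ℝ) (2*π), E p ∈ Metric.closedBall (0:ℂ) 1 := by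
    rintro ⟨r, θ⟩ ⟨hr, _⟩
    rw [Set.uIcc_of_le zero_le_one] at hr
    exact rbpt_mem hr.1 hr.2
  have hXE : ContinuousOn (fun p => X (E p)) (Set.uIcc (0:ℝ) 1 ×ˢ Set.uIcc (0:ℝ) (2*π)) :=
    ContinuousOn.comp (fun x hx => (hX x hx).continuousAt.continuousWithinAt) hEc.continuousOn hEm
  have hYE : ContinuousOn (fun p => Y (E p)) (Set.uIcc (0:ℝ) 1 ×ˢ Set.uIcc (0:ℝ) (2*π)) :=
    ContinuousOn.comp (fun x hx => (hY x hx).continuousAt.continuousWithinAt) hEc.continuousOn hEm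
  have dX : ∀ p, E p ∈ Metric.closedBall (0:ℂ) 1 → HasFDerivAt (fun p => X (E p)) ((fderiv ℝ X (E p)).comp (polE' p.1 p.2)) p :=
    fun p hp => ((hX _ hp).differentiableAt (by norm_num)).hasFDerivAt.comp p (polE_hasFDerivAt p)
  have dY : ∀ p, E p ∈ Metric.closedBall (0:ℂ) 1 → HasFDerivAt (fun p => Y (E p)) ((fderiv ℝ Y (E p)).comp (polE' p.1 p.2)) p :=
    fun p hp => ((hY _ hp).differentiableAt (by norm_num)).hasFDerivAt.comp p (polE_hasFDerivAt p)
  have dc : ∀ p : ℝ × ℝ, HasFDerivAt (fun p : ℝ × ℝ => Real.cos p.2) (-Real.sin p.2 • ContinuousLinearMap.snd ℝ ℝ ℝ) p :=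
    fun p => (Real.hasDerivAt_cos p.2).comp_hasFDerivAt p hasFDerivAt_snd
  have ds : ∀ p : ℝ × ℝ, HasFDerivAt (fun p : ℝ × ℝ => Real.sin p.2) (Real.cos p.2 • ContinuousLinearMap.snd ℝ ℝ ℝ) p :=
    fun p => (Real.hasDerivAt_sin p.2).comp_hasFDerivAt p hasFDerivAt_snd
  have df := fun p hp => (hasFDerivAt_fst (𝕜 := ℝ) (p := p)).fun_mul (((dc p).fun_mul (dX p hp)).fun_add ((ds p).fun_mul (dY p hp)))
  have dg := fun p hp => ((ds p).fun_neg.fun_mul (dX p hp)).fun_add ((dc p).fun_mul (dY p hp))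
  have df' : ∀ p, E p ∈ Metric.closedBall (0:ℂ) 1 → HasFDerivAt f (fderiv ℝ f p) p := fun p hp => (df p hp).differentiableAt.hasFDerivAt
  have dg' : ∀ p, E p ∈ Metric.closedBall (0:ℂ) 1 → HasFDerivAt g (fderiv ℝ g p) p := fun p hp => (dg p hp).differentiableAt.hasFDerivAt
  have key : ∀ p ∈ Set.uIcc (0:ℝ) 1 ×ˢ Set.uIcc (0:ℝ) (2*π), fderiv ℝ f p (1,0) + fderiv ℝ g p (0,1)
     = p.1 * (pd X 1 (E p) + pd Y Complex.I (E p)) := by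
    intro p hp
    have h1 : fderiv ℝ f p = _ := (df p (hEm p hp)).fderiv
    have h2 : fderiv ℝ g p = _ := (dg p (hEm p hp)).fderiv
    rw [h1, h2]
    simp only [polE', _root_.add_apply, _root_.smul_apply, ContinuousLinearMap.comp_apply, ContinuousLinearMap.smulRight_apply,
      ContinuousLinearMap.coe_fst', ContinuousLinearMap.coe_snd', _root_.neg_apply, one_smul, zero_smul, add_zero, zero_add, smul_eq_mul, mul_zero, mul_one, fderiv_eq_pd X (E p), fderiv_eq_pd Y (E p), Complex.mul_re, Complex.mul_im, Complex.ofReal_re, Complex.ofReal_im, Complex.I_re, Complex.I_im, bpt_re, bpt_im]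
    have := Real.sin_sq_add_cos_sq p.2
    linear_combination (p.1 * pd X 1 (E p) + p.1 * pd Y Complex.I (E p)) * this
  have hKc : ContinuousOn (fun p : ℝ × ℝ => p.1 * (pd X 1 (E p) + pd Y Complex.I (E p))) (Set.uIcc (0:ℝ) 1 ×ˢ Set.uIcc (0:ℝ) (2*π)) :=
    continuous_fst.continuousOn.mul (hc.comp hEc.continuousOn hEm)
  have hsub : Set.Ioo (min (0:ℝ) 1) (max 0 1) ×ˢ Set.Ioo (min 0 (2*π)) (max 0 (2*π)) ⊆ Set.uIcc (0:ℝ) 1 ×ˢ Set.uIcc (0:ℝ) (2*π) :=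
    Set.prod_mono Set.Ioo_subset_Icc_self Set.Ioo_subset_Icc_self
  have main := integral2_divergence_prod_of_hasFDerivAt f g (fderiv ℝ f) (fderiv ℝ g) 0 0 1 (2*π)
    (by apply ContinuousOn.mul continuous_fst.continuousOn
        exact ((Real.continuous_cos.comp continuous_snd).continuousOn.mul hXE).add
          ((Real.continuous_sin.comp continuous_snd).continuousOn.mul hYE))
    (((Real.continuous_sin.comp continuous_snd).neg.continuousOn.mul hXE).add
          ((Real.continuous_cos.comp continuous_snd).continuousOn.mul hYE))
    (fun p hp => df' p (hEm p (hsub hp))) (fun p hp => dg' p (hEm p (hsub hp)))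
    ((hKc.integrableOn_compact (isCompact_uIcc.prod isCompact_uIcc)).congr_fun (fun p hp => (key p hp).symm)
      (measurableSet_uIcc.prod measurableSet_uIcc))
  have e1 : ∫ (x : ℝ) in (0:ℝ)..1, ∫ (y : ℝ) in (0:ℝ)..2 * π, (fderiv ℝ f (x, y)) (1, 0) + (fderiv ℝ g (x, y)) (0, 1)
     = ∫ r in (0:ℝ)..1, ∫ θ in (0:ℝ)..(2*π), r * (pd X 1 (r * bpt θ) + pd Y Complex.I (r * bpt θ)) := by
    apply intervalIntegral.integral_congr
    intro r hr
    apply intervalIntegral.integral_congr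
    intro θ hθ
    exact key (r, θ) ⟨hr, hθ⟩
  rw [← e1, main]
  have e2 : ∀ x : ℝ, g (x, 2*π) = g (x, 0) := by
    intro x; simp [hg, hE, bpt_eq, -Complex.ofReal_cos, -Complex.ofReal_sin]
  have e3 : ∀ y : ℝ, f (0, y) = 0 := by intro y; simp [hf]
  simp only [e2, e3, sub_self, intervalIntegral.integral_zero, zero_add, sub_zero]
  unfold bint
  congr 1; ext θ
  simp [hf, hE, bpt_re, bpt_im]


end PartC1

section PartC2
open MeasureTheory Real Filter

/-- comparison lemma -/
lemma ode_lemma (C q : ℕ → ℝ) (hC : ∀ n, 0 ≤ C n) (hq : ∀ n, 0 ≤ q n)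
    (h : ∀ n : ℕ, ((n:ℝ)+1) * C (n+1) ≤ ∑ i ∈ Finset.range (n+1), q (n+1-i) * C i) (M : ℕ) :
    ∑ n ∈ Finset.range (M+1), C n ≤ C 0 * Real.exp (∑ k ∈ Finset.range M, q (k+1) / (k+1)) := by
  set F : ℝ → ℝ := fun x => ∑ n ∈ Finset.range (M+1), C n * x ^ n with hF
  set Q : ℝ → ℝ := fun x => ∑ k ∈ Finset.range M, q (k+1) / (k+1) * x ^ (k+1) with hQ
  have dF : ∀ x, HasDerivAt F (∑ n ∈ Finset.range M, C (n+1) * ((n+1) * x ^ n)) x := by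
    intro x
    have : HasDerivAt F (∑ n ∈ Finset.range (M+1), C n * (n * x ^ (n-1))) x :=
      HasDerivAt.fun_sum (fun n _ => (hasDerivAt_pow n x).const_mul (C n))
    convert this using 1
    rw [Finset.sum_range_succ' _ M]
    simp
  have dQ : ∀ x, HasDerivAt Q (∑ k ∈ Finset.range M, q (k+1) * x ^ k) x := by
    intro x
    have : HasDerivAt Q (∑ k ∈ Finset.range M, q (k+1) / (k+1) * (((k+1:ℕ):ℝ) * x ^ (k+1-1))) x :=
      HasDerivAt.fun_sum (fun k _ => (hasDerivAt_pow (k+1) x).const_mul _)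
    convert this using 1
    refine Finset.sum_congr rfl fun k _ => ?_
    push_cast
    have : (k:ℝ)+1 ≠ 0 := by positivity
    field_simp
  have key : ∀ x, 0 ≤ x → (∑ n ∈ Finset.range M, C (n+1) * ((n+1) * x ^ n)) ≤ (∑ k ∈ Finset.range M, q (k+1) * x ^ k) * F x := by
    intro x hx
    have h1 : (∑ n ∈ Finset.range M, C (n+1) * ((n+1) * x ^ n)) ≤ ∑ n ∈ Finset.range M, ∑ i ∈ Finset.range (n+1), (q (n+1-i) * C i) * x ^ n := by
      refine Finset.sum_le_sum fun n _ => ?_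
      rw [← Finset.sum_mul]
      have := mul_le_mul_of_nonneg_right (h n) (pow_nonneg hx n)
      linarith
    refine h1.trans ?_
    rw [hF, Finset.sum_mul_sum, Finset.sum_sigma', ← Finset.sum_product']
    have h2 : ∑ p ∈ (Finset.range M).sigma (fun n => Finset.range (n+1)), (q (p.1+1-p.2) * C p.2) * x ^ p.1
      = ∑ p ∈ ((Finset.range M).sigma (fun n => Finset.range (n+1))).image (fun p => ((p.1 - p.2, p.2) : ℕ × ℕ)), q (p.1+1) * x ^ p.1 * (C p.2 * x ^ p.2) := by
      rw [Finset.sum_image]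
      · refine Finset.sum_congr rfl fun p hp => ?_
        simp only [Finset.mem_sigma, Finset.mem_range] at hp
        have e1 : p.1 + 1 - p.2 = p.1 - p.2 + 1 := by omega
        have e2 : p.1 = (p.1 - p.2) + p.2 := by omega
        rw [e1]
        conv_lhs => rw [e2, pow_add]
        rw [Nat.add_sub_cancel]; ring
      · rintro ⟨a, b⟩ hab ⟨c, d⟩ hcd hh
        simp only [Finset.mem_sigma, Finset.mem_range, Finset.coe_sigma, Set.mem_sigma_iff, Finset.mem_coe, Prod.mk.injEq] at *
        obtain rfl : b = d := hh.2
        obtain rfl : a = c := by omega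
        rfl
    rw [h2]
    apply Finset.sum_le_sum_of_subset_of_nonneg
    · intro p hp
      simp only [Finset.mem_image, Finset.mem_sigma, Finset.mem_range, Finset.mem_product] at *
      obtain ⟨a, ha, rfl⟩ := hp
      simp only
      omega
    · intro p _ _
      have := hq (p.1+1); have := hC p.2
      positivity
  have anti : AntitoneOn (fun x => F x * Real.exp (- Q x)) (Set.Icc 0 1) := by
    apply antitoneOn_of_deriv_nonpos (convex_Icc 0 1)
    · apply Continuous.continuousOn
      have := continuous_iff_continuousAt.2 (fun x => (dF x).continuousAt)
      have := continuous_iff_continuousAt.2 (fun x => (dQ x).continuousAt)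
      fun_prop
    · intro x _
      exact ((dF x).mul (dQ x).neg.exp).differentiableAt.differentiableWithinAt
    · intro x hx
      rw [interior_Icc] at hx
      have := ((dF x).fun_mul (dQ x).fun_neg.exp).deriv
      rw [this]
      have := key x hx.1.le
      have e := Real.exp_pos (-Q x)
      nlinarith
  have := anti (Set.left_mem_Icc.2 zero_le_one) (Set.right_mem_Icc.2 zero_le_one) zero_le_one
  have hF1 : F 1 = ∑ n ∈ Finset.range (M+1), C n := by simp [hF]
  have hF0 : F 0 = C 0 := by
    simp only [hF]; rw [Finset.sum_range_succ']; simp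
  have hQ1 : Q 1 = ∑ k ∈ Finset.range M, q (k+1) / (k+1) := by simp [hQ]
  have hQ0 : Q 0 = 0 := by simp [hQ]
  simp only [hF1, hF0, hQ1, hQ0, neg_zero, Real.exp_zero, mul_one, Real.exp_neg] at this
  rwa [← div_eq_mul_inv, div_le_iff₀ (Real.exp_pos _)] at this

lemma leb_milin_alg (b P : ℕ → ℂ) (h : ∀ n : ℕ, (n:ℂ) * b n = ∑ i ∈ Finset.range n, P (n - i) * b i) (M : ℕ) :
    ∑ n ∈ Finset.range (M+1), ‖b n‖^2 ≤ ‖b 0‖^2 * Real.exp (∑ k ∈ Finset.range M, ‖P (k+1)‖^2 / (k+1)) := by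
  apply ode_lemma (fun n => ‖b n‖^2) (fun k => ‖P k‖^2) (fun _ => by positivity) (fun _ => by positivity)
  intro n
  have h1 := congrArg norm (h (n+1))
  rw [norm_mul, Complex.norm_natCast] at h1
  have h2 : ‖∑ i ∈ Finset.range (n+1), P (n + 1 - i) * b i‖ ≤ ∑ i ∈ Finset.range (n+1), ‖P (n + 1 - i)‖ * ‖b i‖ := by
    refine (norm_sum_le _ _).trans (Finset.sum_le_sum fun i _ => (norm_mul _ _).le)
  have h3 := sq_sum_le_card_mul_sum_sq (s := Finset.range (n+1)) (f := fun i => ‖P (n + 1 - i)‖ * ‖b i‖)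
  rw [Finset.card_range] at h3
  simp only [mul_pow] at h3
  rw [← h1] at h2
  push_cast at *
  have h4 : (((n:ℝ)+1) * ‖b (n+1)‖)^2 ≤ (∑ i ∈ Finset.range (n+1), ‖P (n + 1 - i)‖ * ‖b i‖)^2 := by
    gcongr
  have h5 := h4.trans h3
  have hn : (0:ℝ) < n + 1 := by positivity
  rw [mul_pow, sq ((n:ℝ)+1), mul_assoc] at h5
  exact le_of_mul_le_mul_left h5 hn

/-- shifted sequence -/
def shf (b : ℕ → ℂ) : ℕ → ℂ
  | 0 => 0
  | n+1 => b n

def cco (b : ℕ → ℂ) (m n : ℕ) : ℂ := shf b m * b n - b m * shf b n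

lemma shf_rec (b P : ℕ → ℂ) (h : ∀ n : ℕ, (n:ℂ) * b n = ∑ i ∈ Finset.range n, P (n - i) * b i) (n : ℕ) :
    ((n:ℂ) - 1) * shf b n = ∑ i ∈ Finset.range n, P (n - i) * shf b i := by
  cases n with
  | zero => simp [shf]
  | succ n =>
    rw [Finset.sum_range_succ']
    simp only [shf, mul_zero, add_zero, Nat.add_sub_add_right]
    rw [← h n]; push_cast; ring

lemma cco_rec (b P : ℕ → ℂ) (h : ∀ n : ℕ, (n:ℂ) * b n = ∑ i ∈ Finset.range n, P (n - i) * b i) (m n : ℕ) :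
    ((m:ℂ) + n - 1) * cco b m n = ∑ i ∈ Finset.range m, P (m - i) * cco b i n + ∑ i ∈ Finset.range n, P (n - i) * cco b m i := by
  have h1 := h m
  have h2 := h n
  have h3 := shf_rec b P h m
  have h4 := shf_rec b P h n
  have e1 : ∑ i ∈ Finset.range m, P (m - i) * cco b i n = (∑ i ∈ Finset.range m, P (m - i) * shf b i) * b n - (∑ i ∈ Finset.range m, P (m - i) * b i) * shf b n := by
    rw [Finset.sum_mul, Finset.sum_mul, ← Finset.sum_sub_distrib]
    exact Finset.sum_congr rfl fun i _ => by simp only [cco]; ring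
  have e2 : ∑ i ∈ Finset.range n, P (n - i) * cco b m i = shf b m * (∑ i ∈ Finset.range n, P (n - i) * b i) - b m * (∑ i ∈ Finset.range n, P (n - i) * shf b i) := by
    rw [Finset.mul_sum, Finset.mul_sum, ← Finset.sum_sub_distrib]
    exact Finset.sum_congr rfl fun i _ => by simp only [cco]; ring
  rw [e1, e2, ← h1, ← h2, ← h3, ← h4]
  simp only [cco]; ring

lemma pair_id (L : ℕ) (Y : ℕ → ℂ) (hY : ∑ m ∈ Finset.range (L+1), Y m = 0) :
    ∑ m ∈ Finset.range (L+1), ∑ m' ∈ Finset.range (L+1), (if m < m' then ‖Y m + Y m'‖^2 else 0)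
      = ((L:ℝ) - 1) * ∑ m ∈ Finset.range (L+1), ‖Y m‖^2 := by
  set R := Finset.range (L+1) with hR
  set A := ∑ m ∈ R, ∑ m' ∈ R, (if m < m' then ‖Y m + Y m'‖^2 else 0) with hA
  have hA' : A = ∑ m ∈ R, ∑ m' ∈ R, (if m' < m then ‖Y m + Y m'‖^2 else 0) := by
    rw [hA, Finset.sum_comm]
    refine Finset.sum_congr rfl fun m _ => Finset.sum_congr rfl fun m' _ => ?_
    rw [add_comm]
  have hd : ∑ m ∈ R, ∑ m' ∈ R, (if m = m' then ‖Y m + Y m'‖^2 else 0) = 4 * ∑ m ∈ R, ‖Y m‖^2 := by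
    rw [Finset.mul_sum]
    refine Finset.sum_congr rfl fun m hm => ?_
    rw [Finset.sum_ite_eq, if_pos hm, ← two_mul, norm_mul]; simp; ring
  have htot : ∑ m ∈ R, ∑ m' ∈ R, ‖Y m + Y m'‖^2 = 2 * ((L:ℝ)+1) * ∑ m ∈ R, ‖Y m‖^2 := by
    have e : ∀ m m', ‖Y m + Y m'‖^2 = ‖Y m‖^2 + ‖Y m'‖^2 + 2 * inner ℝ (Y m) (Y m') := by
      intro m m'; rw [@norm_add_sq_real]; ring
    simp only [e, Finset.sum_add_distrib, ← Finset.mul_sum, ← inner_sum, hY, inner_zero_right]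
    simp only [Finset.sum_const, Finset.sum_const_zero, hR, Finset.card_range, nsmul_eq_mul, ← Finset.mul_sum]
    push_cast; ring
  have hsum : ∑ m ∈ R, ∑ m' ∈ R, ‖Y m + Y m'‖^2 = A + A + 4 * ∑ m ∈ R, ‖Y m‖^2 := by
    nth_rw 2 [hA']
    rw [hA, ← hd, ← Finset.sum_add_distrib, ← Finset.sum_add_distrib]
    refine Finset.sum_congr rfl fun m _ => ?_
    rw [← Finset.sum_add_distrib, ← Finset.sum_add_distrib]
    refine Finset.sum_congr rfl fun m' _ => ?_
    rcases lt_trichotomy m m' with h | h | h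
    · simp [h, h.ne, h.not_gt]
    · simp [h]
    · simp [h, h.ne', h.not_gt]
  linarith

lemma cco_anti (b : ℕ → ℂ) (m n : ℕ) : cco b m n = - cco b n m := by simp only [cco]; ring

lemma cco_sum (b : ℕ → ℂ) (L : ℕ) : ∑ m ∈ Finset.range (L+1), cco b m (L - m) = 0 := by
  have h := Finset.sum_range_reflect (fun m => cco b m (L - m)) (L+1)
  have h2 : ∑ j ∈ Finset.range (L+1), cco b (L + 1 - 1 - j) (L - (L + 1 - 1 - j)) = - ∑ m ∈ Finset.range (L+1), cco b m (L - m) := by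
    rw [← Finset.sum_neg_distrib]
    refine Finset.sum_congr rfl fun m hm => ?_
    rw [Finset.mem_range] at hm
    rw [cco_anti, show L - (L+1-1-m) = m by omega, show L+1-1-m = L - m by omega]
  rw [h2] at h
  linear_combination (-1/2 : ℂ) * h

lemma sz_rec (b P : ℕ → ℂ) (h : ∀ n : ℕ, (n:ℂ) * b n = ∑ i ∈ Finset.range n, P (n - i) * b i) (N : ℕ) :
    (N:ℝ) * ∑ m ∈ Finset.range (N+2), ‖cco b m (N+1-m)‖^2 ≤
      ∑ j ∈ Finset.range N, ‖P (N-j)‖^2 * ∑ m ∈ Finset.range (j+2), ‖cco b m (j+1-m)‖^2 := by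
  set Y : ℕ → ℂ := fun m => cco b m (N+1-m) with hY
  set R := Finset.range (N+2) with hR
  have hpair := pair_id (N+1) Y (cco_sum b (N+1))
  rw [show N + 1 + 1 = N + 2 by ring, ← hR] at hpair
  push_cast at hpair
  rw [add_sub_cancel_right] at hpair
  set S := ∑ m ∈ R, ‖Y m‖^2 with hS
  -- recursion
  have hrec : ∀ m ∈ R, (N:ℂ) * Y m = (∑ m' ∈ R, if m' < m then P (m - m') * cco b m' (N+1-m) else 0)
     + ∑ m' ∈ R, if m < m' then P (m' - m) * cco b m (N+1-m') else 0 := by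
    intro m hm
    rw [hR, Finset.mem_range] at hm
    have h1 := cco_rec b P h m (N+1-m)
    rw [show ((m:ℂ) + ((N+1-m : ℕ):ℂ) - 1) = N by
      rw [Nat.cast_sub (by omega)]; push_cast; ring] at h1
    simp only [hY]
    rw [h1, ← Finset.sum_filter, ← Finset.sum_filter]
    congr 1
    · apply Finset.sum_congr _ (fun _ _ => rfl)
      ext i; simp only [hR, Finset.mem_filter, Finset.mem_range]; omega
    · apply Finset.sum_nbij' (fun i => N+1-i) (fun i => N+1-i)
      · intro i hi; simp only [hR, Finset.mem_filter, Finset.mem_range] at *; omega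
      · intro i hi; simp only [hR, Finset.mem_filter, Finset.mem_range] at *; omega
      · intro i hi; simp only [hR, Finset.mem_filter, Finset.mem_range] at *; omega
      · intro i hi; simp only [hR, Finset.mem_filter, Finset.mem_range] at *; omega
      · intro i hi; simp only [Finset.mem_range] at hi
        rw [show N + 1 - (N+1-i) = i by omega, show N + 1 - i - m = N+1-m-i by omega]
  have hW : ((N:ℝ) * S : ℝ) = ∑ m ∈ R, ∑ m' ∈ R, (if m < m' then (starRingEnd ℂ (Y m + Y m') * (P (m' - m) * cco b m (N+1-m'))).re else 0) := by
    have e1 : ((N:ℝ) * S : ℝ) = (∑ m ∈ R, starRingEnd ℂ (Y m) * ((N:ℂ) * Y m)).re := by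
      rw [hS, Finset.mul_sum, Complex.re_sum]
      refine Finset.sum_congr rfl fun m _ => ?_
      rw [show starRingEnd ℂ (Y m) * ((N:ℂ) * Y m) = ((N * ‖Y m‖^2 : ℝ) : ℂ) by
        push_cast; rw [← Complex.conj_mul']; ring]
      exact (Complex.ofReal_re _).symm
    rw [e1, Finset.sum_congr rfl (fun m hm => by rw [hrec m hm])]
    simp only [mul_add, Finset.sum_add_distrib, Finset.mul_sum]
    rw [Finset.sum_comm, ← Finset.sum_add_distrib, Complex.re_sum]
    refine Finset.sum_congr rfl fun m _ => ?_
    rw [← Finset.sum_add_distrib, Complex.re_sum]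
    refine Finset.sum_congr rfl fun m' _ => ?_
    split_ifs with hlt
    · rw [map_add]; congr 1; ring
    · simp
  have hle : ∀ m m', (starRingEnd ℂ (Y m + Y m') * (P (m' - m) * cco b m (N+1-m'))).re ≤ (1/2) * ‖Y m + Y m'‖^2 + (1/2) * (‖P (m'-m)‖^2 * ‖cco b m (N+1-m')‖^2) := by
    intro m m'
    refine (Complex.re_le_norm _).trans ?_
    rw [norm_mul, norm_mul, RCLike.norm_conj]
    nlinarith [sq_nonneg (‖Y m + Y m'‖ - ‖P (m'-m)‖ * ‖cco b m (N+1-m')‖)]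
  have hT : ∑ m ∈ R, ∑ m' ∈ R, (if m < m' then (‖P (m'-m)‖^2 * ‖cco b m (N+1-m')‖^2) else 0)
      = ∑ j ∈ Finset.range N, ‖P (N-j)‖^2 * ∑ m ∈ Finset.range (j+2), ‖cco b m (j+1-m)‖^2 := by
    have e0 : ∑ j ∈ Finset.range (N+1), ‖P (N+1-j)‖^2 * ∑ m ∈ Finset.range (j+1), ‖cco b m (j-m)‖^2
        = ∑ j ∈ Finset.range N, ‖P (N-j)‖^2 * ∑ m ∈ Finset.range (j+2), ‖cco b m (j+1-m)‖^2 := by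
      rw [Finset.sum_range_succ']
      simp [cco, shf]
    rw [← e0]
    simp only [Finset.mul_sum]
    rw [← Finset.sum_product', ← Finset.sum_filter, Finset.sum_sigma']
    apply Finset.sum_bij' (i := fun p _ => (⟨N+1-(p.2-p.1), p.1⟩ : (_ : ℕ) × ℕ)) (j := fun p _ => ((p.2, N+1-p.1+p.2) : ℕ × ℕ))
    · rintro ⟨i, j⟩ hi; simp only [hR, Finset.mem_filter, Finset.mem_range, Finset.mem_product, Finset.mem_sigma] at *; omega
    · rintro ⟨i, j⟩ hi; simp only [hR, Finset.mem_filter, Finset.mem_range, Finset.mem_product, Finset.mem_sigma] at *; omega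
    · rintro ⟨i, j⟩ hi; simp only [hR, Finset.mem_filter, Finset.mem_range, Finset.mem_product, Prod.mk.injEq, true_and] at *; omega
    · rintro ⟨i, j⟩ hi; simp only [Finset.mem_range, Finset.mem_sigma] at *
      congr 1
      omega
    · rintro ⟨i, j⟩ hi; simp only [hR, Finset.mem_filter, Finset.mem_range, Finset.mem_product] at *
      rw [show N + 1 - (N+1-(j-i)) = j - i by omega, show N + 1 - (j - i) - i = N+1-j by omega]
  have hfin : (N:ℝ) * S ≤ (1/2) * ((N:ℝ) * S) + (1/2) * ∑ m ∈ R, ∑ m' ∈ R, (if m < m' then (‖P (m'-m)‖^2 * ‖cco b m (N+1-m')‖^2) else 0) := by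
    conv_lhs => rw [hW]
    rw [← hpair, Finset.mul_sum, Finset.mul_sum, ← Finset.sum_add_distrib]
    refine Finset.sum_le_sum fun m _ => ?_
    rw [Finset.mul_sum, Finset.mul_sum, ← Finset.sum_add_distrib]
    refine Finset.sum_le_sum fun m' _ => ?_
    split_ifs
    · exact hle m m'
    · simp
  rw [← hT]
  linarith

lemma szego_alg (b P : ℕ → ℂ) (h : ∀ n : ℕ, (n:ℂ) * b n = ∑ i ∈ Finset.range n, P (n - i) * b i) (hb : b 0 = 1) (M : ℕ) :
    (∑ m ∈ Finset.range M, ‖b m‖^2) * (∑ m ∈ Finset.range (M+1), ‖b m‖^2) - ‖∑ m ∈ Finset.range M, b (m+1) * starRingEnd ℂ (b m)‖^2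
      ≤ Real.exp (∑ k ∈ Finset.range (2*M), ‖P (k+1)‖^2 / (k+1)) := by
  set C : ℕ → ℝ := fun N => ∑ m ∈ Finset.range (N+2), ‖cco b m (N+1-m)‖^2 with hC
  have h1 := ode_lemma C (fun k => ‖P k‖^2) (fun _ => by positivity) (fun _ => by positivity) (fun n => by
    have := sz_rec b P h (n+1)
    push_cast at this
    exact this) (2*M)
  have hC0 : C 0 = 2 := by
    simp [hC, cco, shf, hb, Finset.sum_range_succ]; norm_num
  rw [hC0] at h1
  have h2 : ∑ m ∈ Finset.range (M+1), ∑ n ∈ Finset.range (M+1), ‖cco b m n‖^2 ≤ ∑ n ∈ Finset.range (2*M+1), C n := by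
    have e0 : ∑ j ∈ Finset.range (2*M+2), ∑ m ∈ Finset.range (j+1), ‖cco b m (j-m)‖^2 = ∑ n ∈ Finset.range (2*M+1), C n := by
      rw [Finset.sum_range_succ']
      simp [cco, shf, hC]
    rw [← e0, ← Finset.sum_product', Finset.sum_sigma']
    have e1 : ∑ x ∈ Finset.range (M+1) ×ˢ Finset.range (M+1), ‖cco b x.1 x.2‖^2 =
       ∑ x ∈ (Finset.range (M+1) ×ˢ Finset.range (M+1)).image (fun p => (⟨p.1+p.2, p.1⟩ : (_ : ℕ) × ℕ)), ‖cco b x.2 (x.1 - x.2)‖^2 := by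
      rw [Finset.sum_image]
      · refine Finset.sum_congr rfl fun p _ => ?_
        simp
      · rintro ⟨a, b⟩ _ ⟨c, d⟩ _ hh
        simp only [Sigma.mk.injEq, heq_eq_eq] at hh
        ext <;> simp <;> omega
    rw [e1]
    apply Finset.sum_le_sum_of_subset_of_nonneg
    · intro p hp
      simp only [Finset.mem_image, Finset.mem_sigma, Finset.mem_range, Finset.mem_product] at *
      obtain ⟨a, ha, rfl⟩ := hp
      simp only
      omega
    · intro p _ _; positivity
  have h3 : ∑ m ∈ Finset.range (M+1), ∑ n ∈ Finset.range (M+1), ‖cco b m n‖^2 =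
      2 * ((∑ m ∈ Finset.range (M+1), ‖shf b m‖^2) * (∑ m ∈ Finset.range (M+1), ‖b m‖^2)) - 2 * ‖∑ m ∈ Finset.range (M+1), b m * starRingEnd ℂ (shf b m)‖^2 := by
    have e : ∀ m n, ‖cco b m n‖^2 = ‖shf b m‖^2 * ‖b n‖^2 + ‖b m‖^2 * ‖shf b n‖^2 - 2 * ((b n * starRingEnd ℂ (shf b n)) * starRingEnd ℂ (b m * starRingEnd ℂ (shf b m))).re := by
      intro m n
      rw [cco]
      simp only [← Complex.normSq_eq_norm_sq]
      rw [Complex.normSq_sub]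
      simp only [map_mul, Complex.conj_conj]
      congr 3; ring
    simp only [e, Finset.sum_sub_distrib, Finset.sum_add_distrib, ← Finset.mul_sum, ← Finset.sum_mul]
    rw [show ∑ m ∈ Finset.range (M+1), ∑ n ∈ Finset.range (M+1), ((b n * starRingEnd ℂ (shf b n)) * starRingEnd ℂ (b m * starRingEnd ℂ (shf b m))).re = ‖∑ m ∈ Finset.range (M+1), b m * starRingEnd ℂ (shf b m)‖^2 by
      simp only [← Complex.re_sum, ← Finset.sum_mul, ← Finset.mul_sum, ← map_sum]
      rw [Complex.mul_conj']
      norm_cast]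
    ring
  have h4 : ∑ m ∈ Finset.range (M+1), ‖shf b m‖^2 = ∑ m ∈ Finset.range M, ‖b m‖^2 := by
    rw [Finset.sum_range_succ']; simp [shf]
  have h5 : ∑ m ∈ Finset.range (M+1), b m * starRingEnd ℂ (shf b m) = ∑ m ∈ Finset.range M, b (m+1) * starRingEnd ℂ (b m) := by
    rw [Finset.sum_range_succ']; simp [shf]
  rw [h4, h5] at h3
  linarith

end PartC2

section PartC3
open MeasureTheory Real Filter

def fpol (a : ℕ → ℂ) (N : ℕ) (z : ℂ) : ℂ := ∑ k ∈ Finset.range N, a (k+1) * z ^ (k+1)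
def fpol' (a : ℕ → ℂ) (N : ℕ) (z : ℂ) : ℂ := ∑ k ∈ Finset.range N, ((k+1) * a (k+1)) * z ^ k
def Pco (a : ℕ → ℂ) (N : ℕ) (k : ℕ) : ℂ := if k - 1 < N then k * a k else 0
def bco (a : ℕ → ℂ) (N : ℕ) (n : ℕ) : ℂ := iteratedDeriv n (fun z => Complex.exp (fpol a N z)) 0 / (n.factorial : ℂ)

lemma fpol_hasDerivAt (a : ℕ → ℂ) (N : ℕ) (z : ℂ) : HasDerivAt (fpol a N) (fpol' a N z) z := by
  have : HasDerivAt (fpol a N) (∑ k ∈ Finset.range N, a (k+1) * (((k+1:ℕ):ℂ) * z ^ (k+1-1))) z :=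
    HasDerivAt.fun_sum (fun k _ => (hasDerivAt_pow (k+1) z).const_mul _)
  convert this using 1
  refine Finset.sum_congr rfl fun k _ => ?_
  push_cast
  ring

lemma fpol'_iter (a : ℕ → ℂ) (N i : ℕ) : iteratedDeriv i (fpol' a N) 0 = (i.factorial : ℂ) * Pco a N (i+1) := by
  unfold fpol'
  rw [iteratedDeriv_fun_sum (fun k _ => by fun_prop)]
  have : ∀ k : ℕ, iteratedDeriv i (fun z : ℂ => ((k:ℂ)+1) * a (k+1) * z ^ k) 0 = if i = k then (i.factorial : ℂ) * ((i+1) * a (i+1)) else 0 := by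
    intro k
    rw [iteratedDeriv_const_mul_field, iteratedDeriv_fun_pow_zero]
    split_ifs with h
    · subst h; ring
    · simp
  rw [Finset.sum_congr rfl (fun k _ => this k), Finset.sum_ite_eq]
  simp only [Pco, Finset.mem_range, Nat.add_sub_cancel]
  split_ifs <;> push_cast <;> simp

lemma bco_zero (a : ℕ → ℂ) (N : ℕ) : bco a N 0 = 1 := by
  simp [bco, fpol]

lemma bco_rec (a : ℕ → ℂ) (N : ℕ) (n : ℕ) : (n:ℂ) * bco a N n = ∑ i ∈ Finset.range n, Pco a N (n - i) * bco a N i := by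
  cases n with
  | zero => simp
  | succ n =>
    have hfd : Differentiable ℂ (fpol a N) := fun z => (fpol_hasDerivAt a N z).differentiableAt
    have hgd : Differentiable ℂ (fun z => Complex.exp (fpol a N z)) := hfd.cexp
    have h1 : deriv (fun z => Complex.exp (fpol a N z)) = fun z => fpol' a N z * Complex.exp (fpol a N z) := by
      ext z
      rw [(fpol_hasDerivAt a N z).cexp.deriv, mul_comm]
    have hc1 : ContDiff ℂ n (fpol' a N) := by unfold fpol'; fun_prop
    have h2 : iteratedDeriv (n+1) (fun z => Complex.exp (fpol a N z)) 0 = ∑ i ∈ Finset.range (n+1), (n.choose i : ℂ) * iteratedDeriv i (fpol' a N) 0 * iteratedDeriv (n-i) (fun z => Complex.exp (fpol a N z)) 0 := by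
      rw [iteratedDeriv_succ', h1]
      exact iteratedDeriv_fun_mul hc1.contDiffAt hgd.contDiff.contDiffAt
    rw [← Finset.sum_range_reflect]
    have h3 : bco a N (n+1) = (∑ i ∈ Finset.range (n+1), (n.choose i : ℂ) * iteratedDeriv i (fpol' a N) 0 * iteratedDeriv (n-i) (fun z => Complex.exp (fpol a N z)) 0) / ((n+1).factorial : ℂ) := by
      rw [← h2]; rfl
    rw [h3, Finset.sum_div, Finset.mul_sum]
    refine Finset.sum_congr rfl fun i hi => ?_
    rw [Finset.mem_range] at hi
    rw [fpol'_iter, show n + 1 - 1 - i = n - i by omega, show n + 1 - (n - i) = i + 1 by omega, bco]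
    have e := Nat.choose_mul_factorial_mul_factorial (show i ≤ n by omega)
    have e' : (n.choose i : ℂ) * i.factorial * (n-i).factorial = n.factorial := by exact_mod_cast e
    have f1 : ((n-i).factorial : ℂ) ≠ 0 := by exact_mod_cast Nat.factorial_ne_zero _
    have f2 : (n.factorial : ℂ) ≠ 0 := by exact_mod_cast Nat.factorial_ne_zero _
    have f3 : ((n:ℂ)+1) ≠ 0 := by exact_mod_cast Nat.succ_ne_zero n
    rw [Nat.factorial_succ]
    push_cast
    field_simp
    linear_combination (Pco a N (i+1) * iteratedDeriv (n-i) (fun z => Complex.exp (fpol a N z)) 0) * e'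

lemma bco_hasSum (a : ℕ → ℂ) (N : ℕ) (z : ℂ) : HasSum (fun n => bco a N n * z ^ n) (Complex.exp (fpol a N z)) := by
  have hfd : Differentiable ℂ (fpol a N) := fun z => (fpol_hasDerivAt a N z).differentiableAt
  have hgd : Differentiable ℂ (fun z => Complex.exp (fpol a N z)) := hfd.cexp
  have := Complex.hasSum_taylorSeries_of_entire hgd 0 z
  refine this.congr_fun ?_
  intro n
  simp [bco]; ring

lemma Pco_sum (a : ℕ → ℂ) (N M : ℕ) : ∑ k ∈ Finset.range M, ‖Pco a N (k+1)‖^2 / (k+1) ≤ ∑ k ∈ Finset.range N, ((k:ℝ)+1) * ‖a (k+1)‖^2 := by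
  have e : ∀ k : ℕ, ‖Pco a N (k+1)‖^2 / (k+1) = if k < N then ((k:ℝ)+1) * ‖a (k+1)‖^2 else 0 := by
    intro k
    simp only [Pco, Nat.add_sub_cancel]
    split_ifs
    · rw [norm_mul, Complex.norm_natCast, mul_pow]
      push_cast
      have : (k:ℝ)+1 ≠ 0 := by positivity
      field_simp
    · simp
  rw [Finset.sum_congr rfl (fun k _ => e k), ← Finset.sum_filter]
  apply Finset.sum_le_sum_of_subset_of_nonneg
  · intro k hk; simp only [Finset.mem_filter] at hk; exact Finset.mem_range.2 hk.2
  · intro k _ _; positivity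

/-- complex circle average -/
def cav (F : ℝ → ℂ) : ℂ := (1 / (2 * π) : ℝ) * ∫ θ in (0:ℝ)..(2*π), F θ

lemma cav_finset_sum {ι : Type*} (s : Finset ι) (F : ι → ℝ → ℂ) (h : ∀ i ∈ s, Continuous (F i)) :
    cav (fun θ => ∑ i ∈ s, F i θ) = ∑ i ∈ s, cav (F i) := by
  unfold cav
  rw [intervalIntegral.integral_finsetSum (fun i hi => (h i hi).intervalIntegrable _ _), Finset.mul_sum]

lemma cav_const_mul (c : ℂ) (F : ℝ → ℂ) : cav (fun θ => c * F θ) = c * cav F := by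
  unfold cav
  rw [intervalIntegral.integral_const_mul]; ring

lemma cav_orth (m n : ℕ) : cav (fun θ => bpt θ ^ m * starRingEnd ℂ (bpt θ) ^ n) = if m = n then 1 else 0 := by
  have e : ∀ θ : ℝ, bpt θ ^ m * starRingEnd ℂ (bpt θ) ^ n = Complex.exp (((m:ℂ) - n) * Complex.I * θ) := by
    intro θ
    simp only [bpt]
    rw [← Complex.exp_conj, ← Complex.exp_nat_mul, ← Complex.exp_nat_mul, ← Complex.exp_add]
    simp only [map_mul, Complex.conj_ofReal, Complex.conj_I]
    congr 1; ring
  unfold cav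
  simp only [e]
  split_ifs with h
  · subst h
    have hpi : (π:ℂ) ≠ 0 := by exact_mod_cast pi_ne_zero
    simp only [sub_self, zero_mul, Complex.exp_zero, intervalIntegral.integral_const]
    push_cast
    simp
    field_simp
  · have hne : ((m:ℂ) - n) * Complex.I ≠ 0 := mul_ne_zero (sub_ne_zero.2 (by exact_mod_cast h)) Complex.I_ne_zero
    rw [integral_exp_mul_complex hne]
    have : Complex.exp (((m:ℂ) - n) * Complex.I * ((2 * π : ℝ) : ℂ)) = 1 := by
      rw [Complex.exp_eq_one_iff]
      exact ⟨(m:ℤ) - n, by push_cast; ring⟩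
    rw [this]; simp

lemma cav_parseval (b c : ℕ → ℂ) (M K : ℕ) :
    cav (fun θ => (∑ m ∈ Finset.range M, b m * bpt θ ^ m) * starRingEnd ℂ (∑ n ∈ Finset.range K, c n * bpt θ ^ n))
      = ∑ m ∈ Finset.range M, ∑ n ∈ Finset.range K, if m = n then b m * starRingEnd ℂ (c n) else 0 := by
  have hb := bpt_cont
  have e : ∀ θ, (∑ m ∈ Finset.range M, b m * bpt θ ^ m) * starRingEnd ℂ (∑ n ∈ Finset.range K, c n * bpt θ ^ n)
     = ∑ m ∈ Finset.range M, ∑ n ∈ Finset.range K, (b m * starRingEnd ℂ (c n)) * (bpt θ ^ m * starRingEnd ℂ (bpt θ) ^ n) := by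
    intro θ
    rw [map_sum, Finset.sum_mul_sum]
    refine Finset.sum_congr rfl fun m _ => Finset.sum_congr rfl fun n _ => ?_
    simp only [map_mul, map_pow]; ring
  simp only [e]
  have hcj : Continuous (fun θ => starRingEnd ℂ (bpt θ)) := Complex.continuous_conj.comp hb
  rw [cav_finset_sum _ _ (fun m _ => by fun_prop)]
  refine Finset.sum_congr rfl fun m _ => ?_
  rw [cav_finset_sum _ _ (fun n _ => by fun_prop)]
  refine Finset.sum_congr rfl fun n _ => ?_
  rw [cav_const_mul, cav_orth]
  split_ifs <;> simp

lemma cav_tendsto (F : ℕ → ℝ → ℂ) (G : ℝ → ℂ) (B : ℝ) (hF : ∀ n, Continuous (F n)) (hB : ∀ n θ, ‖F n θ‖ ≤ B)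
    (h : ∀ θ, Tendsto (fun n => F n θ) atTop (nhds (G θ))) : Tendsto (fun n => cav (F n)) atTop (nhds (cav G)) := by
  unfold cav
  apply Tendsto.const_mul
  apply intervalIntegral.tendsto_integral_filter_of_dominated_convergence (fun _ => B)
  · exact Eventually.of_forall fun n => (hF n).aestronglyMeasurable
  · exact Eventually.of_forall fun n => Eventually.of_forall fun θ _ => hB n θ
  · simp
  · exact Eventually.of_forall fun θ _ => h θ

section poly
variable (a : ℕ → ℂ) (N : ℕ)

lemma bco_summable : Summable (fun n => ‖bco a N n‖) := by
  have := (bco_hasSum a N 1).summable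
  simp only [one_pow, mul_one] at this
  exact summable_norm_iff.2 this

def gpart (M : ℕ) (θ : ℝ) : ℂ := ∑ m ∈ Finset.range M, bco a N m * bpt θ ^ m

lemma gpart_cont (M : ℕ) : Continuous (gpart a N M) := by
  have := bpt_cont
  unfold gpart; fun_prop

lemma gpart_bound (M : ℕ) (θ : ℝ) : ‖gpart a N M θ‖ ≤ ∑' n, ‖bco a N n‖ := by
  refine (norm_sum_le _ _).trans ?_
  simp only [norm_mul, norm_pow, bpt_norm, one_pow, mul_one]
  exact (bco_summable a N).sum_le_tsum _ (fun _ _ => norm_nonneg _)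

lemma gpart_tendsto (θ : ℝ) : Tendsto (fun M => gpart a N M θ) atTop (nhds (Complex.exp (fpol a N (bpt θ)))) :=
  (bco_hasSum a N (bpt θ)).tendsto_sum_nat

lemma exp_mul_conj' (w : ℂ) : Complex.exp w * starRingEnd ℂ (Complex.exp w) = ((Real.exp (2 * w.re) : ℝ) : ℂ) := by
  rw [Complex.mul_conj', Complex.norm_exp]
  norm_cast
  rw [sq, ← Real.exp_add, two_mul]

lemma bco_tendsto1 : Tendsto (fun M => ((∑ m ∈ Finset.range M, ‖bco a N m‖^2 : ℝ) : ℂ)) atTop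
    (nhds (cav (fun θ => ((Real.exp (2 * (fpol a N (bpt θ)).re) : ℝ) : ℂ)))) := by
  have h := cav_tendsto (fun M θ => gpart a N M θ * starRingEnd ℂ (gpart a N M θ))
    (fun θ => ((Real.exp (2 * (fpol a N (bpt θ)).re) : ℝ) : ℂ)) ((∑' n, ‖bco a N n‖) * (∑' n, ‖bco a N n‖))
    (fun n => (gpart_cont a N n).mul (Complex.continuous_conj.comp (gpart_cont a N n)))
    (fun n θ => by
      rw [norm_mul, RCLike.norm_conj]
      exact mul_le_mul (gpart_bound a N n θ) (gpart_bound a N n θ) (norm_nonneg _) ((norm_nonneg _).trans (gpart_bound a N n θ)))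
    (fun θ => by
      rw [← exp_mul_conj']
      exact (gpart_tendsto a N θ).mul ((Complex.continuous_conj.tendsto _).comp (gpart_tendsto a N θ)))
  refine h.congr fun M => ?_
  simp only [gpart]
  rw [cav_parseval]
  push_cast
  refine Finset.sum_congr rfl fun m hm => ?_
  rw [Finset.sum_ite_eq, if_pos hm, Complex.mul_conj']

lemma bco_tendsto2 : Tendsto (fun M => ∑ m ∈ Finset.range M, bco a N (m+1) * starRingEnd ℂ (bco a N m)) atTop
    (nhds (cav (fun θ => starRingEnd ℂ (bpt θ) * ((Real.exp (2 * (fpol a N (bpt θ)).re) : ℝ) : ℂ)))) := by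
  have hb := bpt_cont
  have h := cav_tendsto (fun M θ => gpart a N (M+1) θ * starRingEnd ℂ (bpt θ * gpart a N M θ))
    (fun θ => starRingEnd ℂ (bpt θ) * ((Real.exp (2 * (fpol a N (bpt θ)).re) : ℝ) : ℂ)) ((∑' n, ‖bco a N n‖) * (∑' n, ‖bco a N n‖))
    (fun n => (gpart_cont a N (n+1)).mul (Complex.continuous_conj.comp (hb.mul (gpart_cont a N n))))
    (fun n θ => by
      rw [norm_mul, RCLike.norm_conj, norm_mul, bpt_norm, one_mul]
      exact mul_le_mul (gpart_bound a N _ θ) (gpart_bound a N n θ) (norm_nonneg _) ((norm_nonneg _).trans (gpart_bound a N n θ)))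
    (fun θ => by
      rw [← exp_mul_conj']
      have := ((gpart_tendsto a N θ).comp (tendsto_add_atTop_nat 1)).mul ((Complex.continuous_conj.tendsto _).comp ((gpart_tendsto a N θ).const_mul (bpt θ)))
      refine (this.congr fun M => rfl).trans (le_of_eq ?_)
      congr 1
      simp only [map_mul]; ring)
  refine h.congr fun M => ?_
  have e : ∀ θ, bpt θ * gpart a N M θ = ∑ n ∈ Finset.range (M+1), shf (bco a N) n * bpt θ ^ n := by
    intro θ
    rw [Finset.sum_range_succ']
    simp only [shf, zero_mul, add_zero, gpart, Finset.mul_sum]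
    exact Finset.sum_congr rfl fun m _ => by ring
  simp only [e]
  simp only [gpart]
  rw [cav_parseval]
  rw [Finset.sum_congr rfl (fun m hm => by rw [Finset.sum_ite_eq, if_pos hm]), Finset.sum_range_succ']
  simp [shf]

lemma lm_poly : (cav (fun θ => ((Real.exp (2 * (fpol a N (bpt θ)).re) : ℝ) : ℂ))).re ≤ Real.exp (∑ k ∈ Finset.range N, ((k:ℝ)+1) * ‖a (k+1)‖^2) := by
  have h := (Complex.continuous_re.tendsto _).comp (bco_tendsto1 a N)
  have h' := h.comp (tendsto_add_atTop_nat 1)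
  refine le_of_tendsto' h' fun M => ?_
  have := leb_milin_alg (bco a N) (Pco a N) (bco_rec a N) M
  rw [bco_zero, norm_one, one_pow, one_mul] at this
  simp only [Function.comp, Complex.ofReal_re]
  exact this.trans (Real.exp_le_exp.2 (Pco_sum a N M))

lemma sz_poly : (cav (fun θ => ((Real.exp (2 * (fpol a N (bpt θ)).re) : ℝ) : ℂ))).re ^ 2
    - ‖cav (fun θ => starRingEnd ℂ (bpt θ) * ((Real.exp (2 * (fpol a N (bpt θ)).re) : ℝ) : ℂ))‖^2 ≤ Real.exp (∑ k ∈ Finset.range N, ((k:ℝ)+1) * ‖a (k+1)‖^2) := by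
  have h := (Complex.continuous_re.tendsto _).comp (bco_tendsto1 a N)
  have h' := h.comp (tendsto_add_atTop_nat 1)
  have h2 := (bco_tendsto2 a N).norm.pow 2
  rw [sq]
  refine le_of_tendsto' ((h.mul h').sub h2) fun M => ?_
  have := szego_alg (bco a N) (Pco a N) (bco_rec a N) (bco_zero a N) M
  simp only [Function.comp, Complex.ofReal_re]
  exact this.trans (Real.exp_le_exp.2 (Pco_sum a N (2*M)))
end poly

end PartC3

section PartC4
open MeasureTheory Real Filter

lemma hasFDerivAt_re {F : ℂ → ℂ} {F' x : ℂ} (h : HasDerivAt F F' x) :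
    HasFDerivAt (fun x => (F x).re) (Complex.reCLM.comp ((ContinuousLinearMap.toSpanSingleton ℂ F').restrictScalars ℝ)) x :=
  Complex.reCLM.hasFDerivAt.comp x (h.hasFDerivAt.restrictScalars ℝ)

lemma hasFDerivAt_im {F : ℂ → ℂ} {F' x : ℂ} (h : HasDerivAt F F' x) :
    HasFDerivAt (fun x => (F x).im) (Complex.imCLM.comp ((ContinuousLinearMap.toSpanSingleton ℂ F').restrictScalars ℝ)) x :=
  Complex.imCLM.hasFDerivAt.comp x (h.hasFDerivAt.restrictScalars ℝ)

lemma fpol_contDiff (a : ℕ → ℂ) (N : ℕ) : ContDiff ℝ 1 (fpol a N) := by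
  have : ContDiff ℂ 1 (fpol a N) := by unfold fpol; fun_prop
  exact this.restrict_scalars ℝ

lemma fpol'_contDiff (a : ℕ → ℂ) (N : ℕ) : ContDiff ℝ 1 (fpol' a N) := by
  have : ContDiff ℂ 1 (fpol' a N) := by unfold fpol'; fun_prop
  exact this.restrict_scalars ℝ

lemma fpol'_diff (a : ℕ → ℂ) (N : ℕ) : Differentiable ℂ (fpol' a N) := by unfold fpol'; fun_prop

lemma green_harm (a : ℕ → ℂ) (N : ℕ) (v : ℂ → ℝ) (hv : ContDiff ℝ 1 v) :
    ∫ x in unitDisk, (pd v 1 x * (2 * (fpol' a N x).re) - pd v Complex.I x * (2 * (fpol' a N x).im))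
      = bint (fun x => v x * (2 * (x * fpol' a N x).re)) := by
  have h1 : ContDiff ℝ 1 (fun x => (fpol' a N x).re) := Complex.reCLM.contDiff.comp (fpol'_contDiff a N)
  have h2 : ContDiff ℝ 1 (fun x => (fpol' a N x).im) := Complex.imCLM.contDiff.comp (fpol'_contDiff a N)
  have := div_thm (fun x => v x * (2 * (fpol' a N x).re)) (fun x => - (v x * (2 * (fpol' a N x).im)))
    (fun x _ => by apply ContDiff.contDiffAt; fun_prop) (fun x _ => by apply ContDiff.contDiffAt; fun_prop)
  rw [show (fun x => v x * (2 * (x * fpol' a N x).re)) = (fun x : ℂ => x.re * (v x * (2 * (fpol' a N x).re)) + x.im * (- (v x * (2 * (fpol' a N x).im)))) by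
    ext x; rw [Complex.mul_re]; ring, ← this]
  congr 1; ext x
  have hvx := (hv.differentiable (by norm_num) x).hasFDerivAt
  have hd := (fpol'_diff a N x).hasDerivAt
  have e1 := (hvx.fun_mul ((hasFDerivAt_re hd).const_mul 2)).fderiv
  have e2 := (hvx.fun_mul ((hasFDerivAt_im hd).const_mul 2)).fun_neg.fderiv
  rw [pd, pd, pd, pd, e1, e2]
  simp
  ring

def fc (v : ℂ → ℝ) (k : ℕ) : ℂ := cav (fun θ => (v (bpt θ) : ℂ) * starRingEnd ℂ (bpt θ) ^ k)

lemma cav_conj (F : ℝ → ℂ) : starRingEnd ℂ (cav F) = cav (fun θ => starRingEnd ℂ (F θ)) := by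
  unfold cav
  rw [map_mul, Complex.conj_ofReal, intervalIntegral.intervalIntegral_conj]

lemma cav_re (F : ℝ → ℂ) (hF : Continuous F) : (∫ θ in (0:ℝ)..(2*π), (F θ).re) = 2 * π * (cav F).re := by
  unfold cav
  have := Complex.reCLM.intervalIntegral_comp_comm (hF.intervalIntegrable (μ := volume) 0 (2*π))
  simp only [Complex.reCLM_apply] at this
  rw [this, Complex.re_ofReal_mul]
  have := pi_pos
  field_simp

lemma bint_fourier (a : ℕ → ℂ) (N : ℕ) (v : ℂ → ℝ) (hv : Continuous v) :
    bint (fun x => v x * (2 * (x * fpol' a N x).re)) = 4 * π * ∑ k ∈ Finset.range N, ((k:ℝ)+1) * (a (k+1) * starRingEnd ℂ (fc v (k+1))).re := by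
  have hb := bpt_cont
  have hvb : Continuous (fun θ => v (bpt θ)) := hv.comp hb
  have e : ∀ θ, v (bpt θ) * (2 * (bpt θ * fpol' a N (bpt θ)).re) = (∑ k ∈ Finset.range N, (2 * ((k+1) * a (k+1))) * ((v (bpt θ) : ℂ) * bpt θ ^ (k+1))).re := by
    intro θ
    rw [← Complex.re_ofReal_mul 2, ← Complex.re_ofReal_mul]
    congr 1
    rw [fpol', Finset.mul_sum, Finset.mul_sum, Finset.mul_sum]
    refine Finset.sum_congr rfl fun k _ => ?_
    push_cast; ring
  unfold bint
  simp only [e]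
  rw [cav_re _ (by fun_prop), cav_finset_sum _ _ (fun k _ => by fun_prop), Complex.re_sum, Finset.mul_sum, Finset.mul_sum]
  refine Finset.sum_congr rfl fun k _ => ?_
  rw [cav_const_mul, fc, cav_conj]
  simp only [map_mul, map_pow, Complex.conj_conj, Complex.conj_ofReal]
  rw [show (2 * (((k:ℂ)+1) * a (k+1))) * cav (fun θ => (v (bpt θ) : ℂ) * bpt θ ^ (k+1)) = ((2 * ((k:ℝ)+1) : ℝ) : ℂ) * (a (k+1) * cav (fun θ => (v (bpt θ) : ℂ) * bpt θ ^ (k+1))) by push_cast; ring, Complex.re_ofReal_mul]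
  ring

lemma fc_fpol (a : ℕ → ℂ) (N k : ℕ) (hk : k < N) : fc (fun x => 2 * (fpol a N x).re) (k+1) = a (k+1) := by
  have hb := bpt_cont
  have hcj : Continuous (fun θ => starRingEnd ℂ (bpt θ)) := Complex.continuous_conj.comp hb
  have e : ∀ θ, ((2 * (fpol a N (bpt θ)).re : ℝ) : ℂ) * starRingEnd ℂ (bpt θ) ^ (k+1) =
     ∑ j ∈ Finset.range N, (a (j+1) * (bpt θ ^ (j+1) * starRingEnd ℂ (bpt θ) ^ (k+1)) + starRingEnd ℂ (a (j+1)) * (bpt θ ^ 0 * starRingEnd ℂ (bpt θ) ^ (j+1+(k+1)))) := by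
    intro θ
    have : ((2 * (fpol a N (bpt θ)).re : ℝ) : ℂ) = fpol a N (bpt θ) + starRingEnd ℂ (fpol a N (bpt θ)) := by
      rw [Complex.add_conj]
    rw [this, fpol, map_sum, ← Finset.sum_add_distrib, Finset.sum_mul]
    refine Finset.sum_congr rfl fun j _ => ?_
    rw [map_mul, map_pow]; ring
  unfold fc
  simp only [e]
  rw [cav_finset_sum _ _ (fun j _ => by fun_prop)]
  have e2 : ∀ j, cav (fun θ => a (j+1) * (bpt θ ^ (j+1) * starRingEnd ℂ (bpt θ) ^ (k+1)) + starRingEnd ℂ (a (j+1)) * (bpt θ ^ 0 * starRingEnd ℂ (bpt θ) ^ (j+1+(k+1)))) = if k = j then a (j+1) else 0 := by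
    intro j
    have := cav_finset_sum (Finset.univ : Finset (Fin 2)) ![fun θ => a (j+1) * (bpt θ ^ (j+1) * starRingEnd ℂ (bpt θ) ^ (k+1)), fun θ => starRingEnd ℂ (a (j+1)) * (bpt θ ^ 0 * starRingEnd ℂ (bpt θ) ^ (j+1+(k+1)))]
      (by intro i _; fin_cases i <;> simp <;> fun_prop)
    simp only [Fin.sum_univ_two, Matrix.cons_val_zero, Matrix.cons_val_one] at this
    rw [this, cav_const_mul, cav_const_mul, cav_orth, cav_orth]
    by_cases h : k = j
    · subst h; simp
    · simp [h, Ne.symm h]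
  rw [Finset.sum_congr rfl (fun j _ => e2 j), Finset.sum_ite_eq, if_pos (Finset.mem_range.2 hk)]

lemma gradSq_cont (v : ℂ → ℝ) (hv : ContDiff ℝ 1 v) : Continuous (gradSq v) := by
  have h : ∀ w, Continuous (pd v w) := fun w => by
    have := pd_continuousOn v w Set.univ (fun x _ => hv.contDiffAt)
    exact continuousOn_univ.1 this
  unfold gradSq
  exact ((h 1).pow 2).add ((h _).pow 2)

lemma pd_cont (v : ℂ → ℝ) (hv : ContDiff ℝ 1 v) (w : ℂ) : Continuous (pd v w) :=
  continuousOn_univ.1 (pd_continuousOn v w Set.univ (fun x _ => hv.contDiffAt))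

lemma cont_intOn {f : ℂ → ℝ} (hf : Continuous f) : IntegrableOn f unitDisk :=
  (hf.continuousOn.integrableOn_compact (isCompact_closedBall (0:ℂ) 1)).mono_set Metric.ball_subset_closedBall

lemma energy_bound (v : ℂ → ℝ) (hv : ContDiff ℝ 1 v) (N : ℕ) :
    ∑ k ∈ Finset.range N, ((k:ℝ)+1) * ‖fc v (k+1)‖^2 ≤ (∫ x in unitDisk, gradSq v x) / (4 * π) := by
  set a := fc v with ha
  set E := ∑ k ∈ Finset.range N, ((k:ℝ)+1) * ‖a (k+1)‖^2 with hE
  set P : ℂ → ℝ := fun x => 2 * (fpol a N x).re with hP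
  have hPc : ContDiff ℝ 1 P := contDiff_const.mul (Complex.reCLM.contDiff.comp (fpol_contDiff a N))
  have h1 : bint (fun x => v x * (2 * (x * fpol' a N x).re)) = 4 * π * E := by
    rw [bint_fourier a N v hv.continuous, hE]
    congr 1
    refine Finset.sum_congr rfl fun k _ => ?_
    rw [← ha, Complex.mul_conj']; norm_cast
  have h2 : bint (fun x => P x * (2 * (x * fpol' a N x).re)) = 4 * π * E := by
    rw [bint_fourier a N P hPc.continuous, hE]
    congr 1
    refine Finset.sum_congr rfl fun k hk => ?_
    rw [fc_fpol a N k (Finset.mem_range.1 hk), Complex.mul_conj']; norm_cast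
  have g1 := green_harm a N v hv
  have g2 := green_harm a N P hPc
  rw [h1] at g1
  rw [h2] at g2
  have hPx : ∀ x w, pd P w x = 2 * (w * fpol' a N x).re := by
    intro x w
    rw [pd, ((hasFDerivAt_re (fpol_hasDerivAt a N x)).const_mul 2).fderiv]
    simp
  have c1 := pd_cont v hv 1
  have c2 := pd_cont v hv Complex.I
  have c3 : Continuous (fun x => (fpol' a N x).re) := Complex.continuous_re.comp (fpol'_contDiff a N).continuous
  have c4 : Continuous (fun x => (fpol' a N x).im) := Complex.continuous_im.comp (fpol'_contDiff a N).continuous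
  have d1 := pd_cont P hPc 1
  have d2 := pd_cont P hPc Complex.I
  have key : ∫ x in unitDisk, ((gradSq v x - 2 * (pd v 1 x * (2 * (fpol' a N x).re) - pd v Complex.I x * (2 * (fpol' a N x).im)))
      + (pd P 1 x * (2 * (fpol' a N x).re) - pd P Complex.I x * (2 * (fpol' a N x).im))) = (∫ x in unitDisk, gradSq v x) - 2 * (4 * π * E) + 4 * π * E := by
    rw [integral_add, integral_sub, integral_const_mul, g1, g2]
    · exact cont_intOn (gradSq_cont v hv)
    · exact cont_intOn (by fun_prop)
    · have := gradSq_cont v hv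
      exact cont_intOn (by fun_prop)
    · exact cont_intOn (by fun_prop)
  have pos : 0 ≤ ∫ x in unitDisk, ((gradSq v x - 2 * (pd v 1 x * (2 * (fpol' a N x).re) - pd v Complex.I x * (2 * (fpol' a N x).im)))
      + (pd P 1 x * (2 * (fpol' a N x).re) - pd P Complex.I x * (2 * (fpol' a N x).im))) := by
    apply integral_nonneg
    intro x
    simp only [Pi.zero_apply, hPx, gradSq]
    simp
    nlinarith [sq_nonneg (pd v 1 x - 2 * (fpol' a N x).re), sq_nonneg (pd v Complex.I x + 2 * (fpol' a N x).im)]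
  rw [key] at pos
  rw [le_div_iff₀ (by positivity)]
  linarith

end PartC4

section PartC5
open MeasureTheory Real Filter


instance fact_two_pi : Fact (0 < 2 * π) := ⟨two_pi_pos⟩

lemma toCircle_bpt (θ : ℝ) : ((AddCircle.toCircle (θ : AddCircle (2*π)) : Circle) : ℂ) = bpt θ := by
  rw [AddCircle.toCircle_apply_mk, Circle.coe_exp, bpt]
  congr 2
  rw [div_self two_pi_pos.ne', one_mul]

def bcm (v : ℂ → ℝ) (hv : Continuous v) : C(AddCircle (2*π), ℂ) where
  toFun := fun x => (v (AddCircle.toCircle x : ℂ) : ℂ)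
  continuous_toFun := Complex.continuous_ofReal.comp (hv.comp (continuous_subtype_val.comp AddCircle.continuous_toCircle))

def zc (φ : ℝ → ℂ) (n : ℤ) : ℂ := cav (fun θ => Complex.exp (-(n * θ * Complex.I)) * φ θ)

lemma bcm_coeff (v : ℂ → ℝ) (hv : Continuous v) (n : ℤ) :
    fourierCoeff (bcm v hv) n = zc (fun θ => (v (bpt θ) : ℂ)) n := by
  rw [fourierCoeff_eq_intervalIntegral _ n 0, zc, cav, zero_add, Complex.real_smul]
  congr 1
  congr 1
  ext x
  rw [fourier_coe_apply, smul_eq_mul]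
  congr 1
  · congr 1
    push_cast
    have : (π:ℂ) ≠ 0 := by exact_mod_cast pi_pos.ne'
    field_simp
  · simp only [bcm, ContinuousMap.coe_mk, toCircle_bpt]

lemma zc_on (φ : ℝ → ℂ) (n : ℤ) : fourierCoeffOn two_pi_pos φ n = zc φ n := by
  rw [fourierCoeffOn_eq_integral, zc, cav, Complex.real_smul, sub_zero]
  congr 1
  congr 1
  ext x
  rw [fourier_coe_apply, smul_eq_mul]
  congr 1
  · congr 1
    push_cast
    have : (π:ℂ) ≠ 0 := by exact_mod_cast pi_pos.ne'
    field_simp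

lemma zc_summable (v : ℂ → ℝ) (hv : ContDiff ℝ 1 v) : Summable (fun n : ℤ => ‖zc (fun θ => (v (bpt θ) : ℂ)) n‖) := by
  have hb := bpt_cont
  set φ : ℝ → ℂ := fun θ => (v (bpt θ) : ℂ) with hφ
  set ψ : ℝ → ℂ := fun θ => ((fderiv ℝ v (bpt θ) (bpt θ * Complex.I) : ℝ) : ℂ) with hψ
  have hder : ∀ θ, HasDerivAt φ (ψ θ) θ := by
    intro θ
    exact (((hv.differentiable one_ne_zero) (bpt θ)).hasFDerivAt.comp_hasDerivAt θ (bpt_hasDerivAt θ)).ofReal_comp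
  have hfc : Continuous (fderiv ℝ v) := hv.continuous_fderiv one_ne_zero
  have hψc : Continuous ψ := by
    apply Complex.continuous_ofReal.comp
    exact (hfc.comp hb).clm_apply (hb.mul continuous_const)
  have hper : φ (2*π) = φ 0 := by
    simp only [hφ]; congr 2
    have := bpt_periodic 0
    rwa [zero_add] at this
  have hsq : Summable (fun n : ℤ => ‖zc ψ n‖^2) := by
    have := hasSum_sq_fourierCoeffOn (f := ψ) two_pi_pos (by
      obtain ⟨C, hC⟩ := (isCompact_Icc (a := (0:ℝ)) (b := 2*π)).exists_bound_of_continuousOn hψc.continuousOn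
      refine MemLp.of_bound hψc.aestronglyMeasurable C ?_
      filter_upwards [ae_restrict_mem measurableSet_Ioc] with x hx
      exact hC x (Set.Ioc_subset_Icc_self hx))
    simpa only [zc_on] using this.summable
  have hinv : Summable (fun n : ℤ => 1 / (n:ℝ)^2) := Real.summable_one_div_int_pow.2 one_lt_two
  have hs := (hsq.add hinv)
  refine Summable.of_norm_bounded_eventually hs ?_
  have : ∀ᶠ n : ℤ in cofinite, n ≠ 0 := (Set.finite_singleton (0:ℤ)).eventually_cofinite_notMem.mono (by intro x hx; simpa using hx)
  filter_upwards [this] with n hn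
  have h1 := fourierCoeffOn_of_hasDerivAt two_pi_pos hn (fun x _ => hder x) (hψc.intervalIntegrable _ _)
  rw [zc_on, zc_on, hper] at h1
  have hn' : (n:ℂ) ≠ 0 := by exact_mod_cast hn
  have hpi : (π:ℂ) ≠ 0 := by exact_mod_cast pi_pos.ne'
  have h2 : zc φ n = -Complex.I / n * zc ψ n := by
    rw [h1]
    push_cast
    field_simp
    simp
  rw [norm_norm, h2, norm_mul, norm_div, norm_neg, Complex.norm_I, Complex.norm_intCast]
  have : (0:ℝ) < |(n:ℝ)| := abs_pos.2 (by exact_mod_cast hn)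
  rw [← sq_abs (n:ℝ)]
  have := two_mul_le_add_sq ‖zc ψ n‖ (1/|(n:ℝ)|)
  have h5 : 0 ≤ (1/|(n:ℝ)|) * ‖zc ψ n‖ := by positivity
  rw [one_div_pow] at this
  nlinarith

lemma fc_eq_zc (v : ℂ → ℝ) (k : ℕ) : fc v k = zc (fun θ => (v (bpt θ) : ℂ)) k := by
  unfold fc zc
  congr 1
  ext θ
  rw [mul_comm]
  congr 1
  rw [bpt, ← Complex.exp_conj, ← Complex.exp_nat_mul]
  congr 1
  simp
  ring

lemma zc_neg (v : ℂ → ℝ) (k : ℕ) : zc (fun θ => (v (bpt θ) : ℂ)) (-k) = starRingEnd ℂ (fc v k) := by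
  rw [fc_eq_zc]
  unfold zc
  rw [cav_conj]
  congr 1
  ext θ
  rw [map_mul, ← Complex.exp_conj]
  simp

lemma fc_summable (v : ℂ → ℝ) (hv : ContDiff ℝ 1 v) : Summable (fun k : ℕ => ‖fc v (k+1)‖) := by
  have := (zc_summable v hv).comp_injective (i := fun k : ℕ => ((k+1:ℕ):ℤ)) (by intro a b h; simpa using h)
  refine this.congr fun k => ?_
  rw [fc_eq_zc]; rfl

lemma fpol_tendsto (v : ℂ → ℝ) (hv : ContDiff ℝ 1 v) (θ : ℝ) :
    Tendsto (fun N => 2 * (fpol (fc v) N (bpt θ)).re) atTop (nhds (v (bpt θ) - (fc v 0).re)) := by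
  have h := has_pointwise_sum_fourier_series_of_summable (f := bcm v hv.continuous)
    (by
      have := (zc_summable v hv).of_norm
      refine this.congr fun n => ?_
      rw [bcm_coeff]) (θ : AddCircle (2*π))
  have h2 := h.nat_add_neg.tendsto_sum_nat
  have h3 := h2.comp (tendsto_add_atTop_nat 1)
  have h4 := ((Complex.continuous_re.tendsto _).comp h3).sub_const (2 * (fc v 0).re)
  have e0 : ∀ n : ℤ, fourierCoeff (bcm v hv.continuous) n • (fourier n (θ : AddCircle (2*π)) : ℂ) = zc (fun θ => (v (bpt θ) : ℂ)) n * Complex.exp (n * θ * Complex.I) := by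
    intro n
    rw [bcm_coeff, smul_eq_mul, fourier_coe_apply]
    congr 2
    push_cast
    have hpi : (π:ℂ) ≠ 0 := by exact_mod_cast pi_pos.ne'
    field_simp
  simp only [e0] at h4
  have hz : (bcm v hv.continuous) (θ : AddCircle (2*π)) = (v (bpt θ) : ℂ) := by
    simp only [bcm, ContinuousMap.coe_mk, toCircle_bpt]
  have hz0 : zc (fun θ => (v (bpt θ) : ℂ)) 0 = fc v 0 := by rw [fc_eq_zc]; rfl
  have hlim : v (bpt θ) - (fc v 0).re = ((bcm v hv.continuous) (θ : AddCircle (2*π)) + zc (fun θ => (v (bpt θ) : ℂ)) 0 * Complex.exp (((0:ℤ):ℂ) * θ * Complex.I)).re - 2 * (fc v 0).re := by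
    rw [hz]; simp [hz0]; ring
  rw [hlim]
  refine h4.congr ?_
  · intro N
    simp only [Function.comp]
    rw [Finset.sum_range_succ', Complex.add_re, Complex.re_sum, fpol, Complex.re_sum, Finset.mul_sum]
    have : (zc (fun θ => (v (bpt θ) : ℂ)) ((0:ℕ):ℤ) * Complex.exp (((0:ℕ):ℤ) * θ * Complex.I) + zc (fun θ => (v (bpt θ) : ℂ)) (-((0:ℕ):ℤ)) * Complex.exp ((-((0:ℕ):ℤ):ℤ) * θ * Complex.I)).re = 2 * (fc v 0).re := by
      simp [hz0]; ring
    rw [this, add_sub_cancel_right]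
    refine Finset.sum_congr rfl fun k _ => ?_
    rw [zc_neg, ← fc_eq_zc]
    have hexp : Complex.exp (((k+1:ℕ):ℤ) * θ * Complex.I) = bpt θ ^ (k+1) := by
      rw [bpt, ← Complex.exp_nat_mul]; congr 1; push_cast; ring
    have hexp2 : Complex.exp ((-((k+1:ℕ):ℤ) : ℤ) * θ * Complex.I) = starRingEnd ℂ (bpt θ ^ (k+1)) := by
      rw [← hexp, ← Complex.exp_conj]; congr 1; simp; ring
    rw [hexp, hexp2, ← map_mul, Complex.add_conj, Complex.ofReal_re]

lemma fpol_bd (v : ℂ → ℝ) (hv : ContDiff ℝ 1 v) (θ : ℝ) (N : ℕ) :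
    2 * (fpol (fc v) N (bpt θ)).re ≤ 2 * ∑' k : ℕ, ‖fc v (k+1)‖ := by
  have h1 : (fpol (fc v) N (bpt θ)).re ≤ ‖fpol (fc v) N (bpt θ)‖ := Complex.re_le_norm _
  have h2 : ‖fpol (fc v) N (bpt θ)‖ ≤ ∑' k : ℕ, ‖fc v (k+1)‖ := by
    refine (norm_sum_le _ _).trans ?_
    simp only [norm_mul, norm_pow, bpt_norm, one_pow, mul_one]
    exact (fc_summable v hv).sum_le_tsum _ (fun _ _ => norm_nonneg _)
  linarith

lemma exp_lim (v : ℂ → ℝ) (hv : ContDiff ℝ 1 v) (g : ℝ → ℂ) (hg : Continuous g) (hg1 : ∀ θ, ‖g θ‖ ≤ 1) :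
    Tendsto (fun N => cav (fun θ => g θ * ((Real.exp (2 * (fpol (fc v) N (bpt θ)).re) : ℝ) : ℂ))) atTop
      (nhds (cav (fun θ => g θ * ((Real.exp (v (bpt θ) - (fc v 0).re) : ℝ) : ℂ)))) := by
  have hb := bpt_cont
  refine cav_tendsto _ _ (Real.exp (2 * ∑' k : ℕ, ‖fc v (k+1)‖)) ?_ ?_ ?_
  · intro N
    have := (fpol_contDiff (fc v) N).continuous.comp hb
    refine hg.mul (Complex.continuous_ofReal.comp (Real.continuous_exp.comp (continuous_const.mul (Complex.continuous_re.comp this))))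
  · intro N θ
    rw [norm_mul, Complex.norm_real, Real.norm_of_nonneg (Real.exp_pos _).le]
    have := Real.exp_le_exp.2 (fpol_bd v hv θ N)
    nlinarith [hg1 θ, norm_nonneg (g θ), Real.exp_pos (2 * (fpol (fc v) N (bpt θ)).re)]
  · intro θ
    exact ((Complex.continuous_ofReal.tendsto _).comp ((Real.continuous_exp.tendsto _).comp (fpol_tendsto v hv θ))).const_mul _

lemma fc_zero (v : ℂ → ℝ) (hv : Continuous v) : (fc v 0).re = bint v / (2*π) := by
  have hb := bpt_cont
  have := cav_re (fun θ => (v (bpt θ):ℂ)) (by fun_prop)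
  simp only [Complex.ofReal_re] at this
  rw [bint, this, fc]
  simp only [pow_zero, mul_one]
  have := pi_pos
  field_simp

theorem LM (v : ℂ → ℝ) (hv : ContDiff ℝ 1 v) :
    bint (fun x => Real.exp (v x)) / (2*π) ≤ Real.exp ((∫ x in unitDisk, gradSq v x) / (4*π) + bint v / (2*π)) := by
  have hb := bpt_cont
  have hvb := hv.continuous.comp hb
  have hpi := pi_pos
  have h := exp_lim v hv (fun _ => 1) continuous_const (by simp)
  simp only [one_mul] at h
  have h1 := (Complex.continuous_re.tendsto _).comp h
  have h2 : (cav (fun θ => ((Real.exp (v (bpt θ) - (fc v 0).re) : ℝ) : ℂ))).re ≤ Real.exp ((∫ x in unitDisk, gradSq v x) / (4*π)) := by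
    refine le_of_tendsto' h1 fun N => ?_
    exact (lm_poly (fc v) N).trans (Real.exp_le_exp.2 (energy_bound v hv N))
  have h3 := cav_re (fun θ => ((Real.exp (v (bpt θ) - (fc v 0).re) : ℝ) : ℂ)) (by
    apply Complex.continuous_ofReal.comp; apply Real.continuous_exp.comp; exact hvb.sub continuous_const)
  simp only [Complex.ofReal_re, Real.exp_sub, intervalIntegral.integral_div] at h3 h2
  rw [fc_zero v hv.continuous] at h3 h2
  rw [Real.exp_add, bint, div_le_iff₀ (by positivity)]
  have h4 := Real.exp_pos (bint v / (2*π))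
  rw [div_eq_iff h4.ne'] at h3
  rw [h3]
  nlinarith [mul_le_mul_of_nonneg_left h2 (by positivity : 0 ≤ 2 * π * Real.exp (bint v / (2*π)))]

theorem SZ (v : ℂ → ℝ) (hv : ContDiff ℝ 1 v) :
    bint (fun x => Real.exp (v x)) ^ 2 - (bint (fun x => x.re * Real.exp (v x)))^2 - (bint (fun x => x.im * Real.exp (v x)))^2
      ≤ (2*π)^2 * Real.exp ((∫ x in unitDisk, gradSq v x) / (4*π) + 2 * (bint v / (2*π))) := by
  have hb := bpt_cont
  have hvb : Continuous (fun θ => v (bpt θ)) := hv.continuous.comp hb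
  have hpi := pi_pos
  have hcj : Continuous (fun θ => starRingEnd ℂ (bpt θ)) := Complex.continuous_conj.comp hb
  have h := exp_lim v hv (fun _ => 1) continuous_const (by simp)
  simp only [one_mul] at h
  have h1 := (Complex.continuous_re.tendsto _).comp h
  have h' := exp_lim v hv (fun θ => starRingEnd ℂ (bpt θ)) hcj (by intro θ; rw [RCLike.norm_conj, bpt_norm])
  have h2 : (cav (fun θ => ((Real.exp (v (bpt θ) - (fc v 0).re) : ℝ) : ℂ))).re^2 - ‖cav (fun θ => starRingEnd ℂ (bpt θ) * ((Real.exp (v (bpt θ) - (fc v 0).re) : ℝ) : ℂ))‖^2 ≤ Real.exp ((∫ x in unitDisk, gradSq v x) / (4*π)) := by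
    refine le_of_tendsto' ((h1.pow 2).sub (h'.norm.pow 2)) fun N => ?_
    exact (sz_poly (fc v) N).trans (Real.exp_le_exp.2 (energy_bound v hv N))
  have hec : Continuous (fun θ => Real.exp (v (bpt θ))) := by fun_prop
  set E := Real.exp (bint v / (2*π)) with hE
  have hEp : 0 < E := Real.exp_pos _
  have f0 : ∀ θ, ((Real.exp (v (bpt θ) - (fc v 0).re) : ℝ) : ℂ) = ((E⁻¹ : ℝ):ℂ) * ((Real.exp (v (bpt θ)):ℝ):ℂ) := by
    intro θ
    rw [fc_zero v hv.continuous, Real.exp_sub, ← hE, div_eq_inv_mul]; push_cast; ring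
  have f1 : ∀ θ, starRingEnd ℂ (bpt θ) * ((Real.exp (v (bpt θ) - (fc v 0).re) : ℝ) : ℂ) = ((E⁻¹ : ℝ):ℂ) * (starRingEnd ℂ (bpt θ) * ((Real.exp (v (bpt θ)):ℝ):ℂ)) := by
    intro θ; rw [f0]; ring
  simp only [f0, f1] at h2
  have f2 : ∀ θ, starRingEnd ℂ (bpt θ) * (((E⁻¹ : ℝ):ℂ) * ((Real.exp (v (bpt θ)):ℝ):ℂ)) = ((E⁻¹ : ℝ):ℂ) * (starRingEnd ℂ (bpt θ) * ((Real.exp (v (bpt θ)):ℝ):ℂ)) := by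
    intro θ; ring
  simp only [f2] at h2
  rw [cav_const_mul, cav_const_mul, Complex.re_ofReal_mul, norm_mul, Complex.norm_real, Real.norm_of_nonneg (inv_pos.2 hEp).le, mul_pow, mul_pow,
    ← Complex.normSq_eq_norm_sq, Complex.normSq_apply] at h2 
  have g1 := cav_re (fun θ => ((Real.exp (v (bpt θ)):ℝ):ℂ)) (by fun_prop)
  have g2 := cav_re (fun θ => (starRingEnd ℂ (bpt θ) * ((Real.exp (v (bpt θ)):ℝ):ℂ))) (by fun_prop)
  have g3 := cav_re (fun θ => Complex.I * (starRingEnd ℂ (bpt θ) * ((Real.exp (v (bpt θ)):ℝ):ℂ))) (by fun_prop)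
  rw [cav_const_mul] at g3
  simp [-Complex.ofReal_exp] at g1 g2 g3
  have b1 : bint (fun x => Real.exp (v x)) = 2 * π * (cav (fun θ => ((Real.exp (v (bpt θ)):ℝ):ℂ))).re := g1
  have b2 : bint (fun x => x.re * Real.exp (v x)) = 2 * π * (cav (fun θ => (starRingEnd ℂ (bpt θ) * ((Real.exp (v (bpt θ)):ℝ):ℂ)))).re := g2
  have b3 : bint (fun x => x.im * Real.exp (v x)) = -(2 * π * (cav (fun θ => (starRingEnd ℂ (bpt θ) * ((Real.exp (v (bpt θ)):ℝ):ℂ)))).im) := g3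
  rw [b1, b2, b3, Real.exp_add, show 2 * (bint v / (2*π)) = bint v / (2*π) + bint v / (2*π) by ring, Real.exp_add, ← hE]
  rw [inv_pow, ← mul_sub, inv_mul_le_iff₀ (by positivity)] at h2
  nlinarith [mul_le_mul_of_nonneg_left h2 (by positivity : 0 ≤ (2 * π)^2)]

end PartC5

section PartD1
open MeasureTheory Real Filter


lemma bint_add' {f g : ℂ → ℝ} (hf : Continuous (fun θ => f (bpt θ))) (hg : Continuous (fun θ => g (bpt θ))) :
    bint (fun x => f x + g x) = bint f + bint g := by
  unfold bint
  exact intervalIntegral.integral_add (hf.intervalIntegrable _ _) (hg.intervalIntegrable _ _)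

lemma bint_sub' {f g : ℂ → ℝ} (hf : Continuous (fun θ => f (bpt θ))) (hg : Continuous (fun θ => g (bpt θ))) :
    bint (fun x => f x - g x) = bint f - bint g := by
  unfold bint
  exact intervalIntegral.integral_sub (hf.intervalIntegrable _ _) (hg.intervalIntegrable _ _)

lemma bint_const_mul (c : ℝ) (f : ℂ → ℝ) : bint (fun x => c * f x) = c * bint f := by
  unfold bint
  exact intervalIntegral.integral_const_mul _ _

lemma bint_mono {f g : ℂ → ℝ} (hf : Continuous (fun θ => f (bpt θ))) (hg : Continuous (fun θ => g (bpt θ)))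
    (h : ∀ θ, f (bpt θ) ≤ g (bpt θ)) : bint f ≤ bint g := by
  unfold bint
  exact intervalIntegral.integral_mono two_pi_pos.le (hf.intervalIntegrable _ _) (hg.intervalIntegrable _ _) h

lemma bint_const (c : ℝ) : bint (fun _ => c) = 2 * π * c := by
  unfold bint
  simp

lemma disk_mono {f g : ℂ → ℝ} (hf : IntegrableOn f unitDisk) (hg : IntegrableOn g unitDisk)
    (h : ∀ x ∈ unitDisk, f x ≤ g x) : ∫ x in unitDisk, f x ≤ ∫ x in unitDisk, g x :=
  setIntegral_mono_on hf hg measurableSet_ball h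

lemma disk_const (c : ℝ) : ∫ _ in unitDisk, c = π * c := by
  simp [unitDisk, Measure.real, Complex.volume_ball]

lemma norm_sq_re_im (x : ℂ) : x.re^2 + x.im^2 = ‖x‖^2 := by
  rw [← Complex.normSq_eq_norm_sq, Complex.normSq_apply]; ring

lemma disk_sq {x : ℂ} (hx : x ∈ unitDisk) : x.re^2 + x.im^2 ≤ 1 := by
  rw [norm_sq_re_im]
  have : ‖x‖ < 1 := by simpa [unitDisk] using hx
  nlinarith [norm_nonneg x]

lemma circ_sq (θ : ℝ) : (bpt θ).re^2 + (bpt θ).im^2 = 1 := by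
  rw [norm_sq_re_im, bpt_norm]; norm_num

lemma pd_re_mul (u : ℂ → ℝ) (hu : ContDiff ℝ 1 u) (x : ℂ) : pd (fun x => x.re * u x) 1 x = u x + x.re * pd u 1 x := by
  have h : HasFDerivAt (fun x : ℂ => x.re * u x) _ x := (Complex.reCLM.hasFDerivAt (x := x)).fun_mul ((hu.differentiable one_ne_zero) x).hasFDerivAt
  rw [pd, h.fderiv]
  simp [pd]; ring

lemma pd_im_mul (u : ℂ → ℝ) (hu : ContDiff ℝ 1 u) (x : ℂ) : pd (fun x => x.im * u x) Complex.I x = u x + x.im * pd u Complex.I x := by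
  have h : HasFDerivAt (fun x : ℂ => x.im * u x) _ x := (Complex.imCLM.hasFDerivAt (x := x)).fun_mul ((hu.differentiable one_ne_zero) x).hasFDerivAt
  rw [pd, h.fderiv]
  simp [pd]; ring

lemma div_u (u : ℂ → ℝ) (hu : ContDiff ℝ 1 u) :
    ∫ x in unitDisk, (2 * u x + nderiv u x) = bint u := by
  have h1 : ContDiff ℝ 1 (fun x : ℂ => x.re * u x) := (Complex.reCLM.contDiff).mul hu
  have h2 : ContDiff ℝ 1 (fun x : ℂ => x.im * u x) := (Complex.imCLM.contDiff).mul hu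
  have := div_thm _ _ (fun x _ => h1.contDiffAt) (fun x _ => h2.contDiffAt)
  simp only [pd_re_mul u hu, pd_im_mul u hu] at this
  rw [show (fun x => 2 * u x + nderiv u x) = fun x => u x + x.re * pd u 1 x + (u x + x.im * pd u Complex.I x) by
    ext x; unfold nderiv; ring, this]
  unfold bint
  congr 1
  ext θ
  have := circ_sq θ
  linear_combination (u (bpt θ)) * this

lemma nderiv_cont (u : ℂ → ℝ) (hu : ContDiff ℝ 1 u) : Continuous (nderiv u) := by
  have h1 := pd_cont u hu 1
  have h2 := pd_cont u hu Complex.I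
  have h3 := Complex.continuous_re
  have h4 := Complex.continuous_im
  unfold nderiv; fun_prop

lemma nderiv_abs (u : ℂ → ℝ) {x : ℂ} (hx : x ∈ unitDisk) : (nderiv u x)^2 ≤ gradSq u x := by
  unfold nderiv gradSq
  have := disk_sq hx
  nlinarith [sq_nonneg (x.re * pd u Complex.I x - x.im * pd u 1 x), sq_nonneg (pd u 1 x), sq_nonneg (pd u Complex.I x)]

lemma gradSq_int_nonneg (u : ℂ → ℝ) : 0 ≤ ∫ x in unitDisk, gradSq u x :=
  integral_nonneg fun x => by unfold gradSq; positivity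

lemma disk_u_lower (u : ℂ → ℝ) (hu : ContDiff ℝ 1 u) :
    bint u / 2 - (π + ∫ x in unitDisk, gradSq u x) / 4 ≤ ∫ x in unitDisk, u x := by
  have h := div_u u hu
  have hn := nderiv_cont u hu
  have hg := gradSq_cont u hu
  have hc := hu.continuous
  rw [integral_add (cont_intOn (by fun_prop)) (cont_intOn hn), integral_const_mul] at h
  have h2 : ∫ x in unitDisk, nderiv u x ≤ ∫ x in unitDisk, (1/2 + (1/2) * gradSq u x) := by
    apply disk_mono (cont_intOn hn) (cont_intOn (by fun_prop))
    intro x hx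
    have := nderiv_abs u hx
    nlinarith [sq_nonneg (nderiv u x - 1)]
  rw [integral_add (cont_intOn (by fun_prop)) (cont_intOn (by fun_prop)), integral_const_mul, disk_const] at h2
  linarith

lemma gradSq_const_mul (c : ℝ) (u : ℂ → ℝ) (hu : ContDiff ℝ 1 u) (x : ℂ) : gradSq (fun x => c * u x) x = c^2 * gradSq u x := by
  have h : HasFDerivAt (fun x : ℂ => c * u x) _ x := ((hu.differentiable one_ne_zero) x).hasFDerivAt.const_mul c
  unfold gradSq pd
  rw [h.fderiv]
  simp; ring

lemma bint_lower (u : ℂ → ℝ) (hu : MemM u) :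
    -(4 * π * Real.log (2*π)) - (∫ x in unitDisk, gradSq u x) / 8 ≤ bint u := by
  obtain ⟨h1, h2, h3, h4⟩ := hu
  have hpi := pi_pos
  have hv : ContDiff ℝ 1 (fun x => (1/2) * u x) := contDiff_const.mul h1
  have := SZ (fun x => (1/2) * u x) hv
  have e : ∀ x, (1/2) * u x = u x / 2 := fun x => by ring
  simp only [gradSq_const_mul _ u h1, bint_const_mul, integral_const_mul] at this
  simp only [e, h2, h3, h4] at this
  have h5 : 1 ≤ Real.exp (2 * Real.log (2*π) + ((1/2)^2 * (∫ x in unitDisk, gradSq u x) / (4*π) + 2 * (bint u / 2 / (2*π)))) := by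
    rw [Real.exp_add, two_mul (Real.log _), Real.exp_add, Real.exp_log two_pi_pos]
    refine le_trans (by norm_num) (this.trans (le_of_eq ?_))
    ring_nf
  rw [Real.one_le_exp_iff] at h5
  have e2 : 4 * π * (2 * Real.log (2*π) + ((1/2)^2 * (∫ x in unitDisk, gradSq u x) / (4*π) + 2 * (bint u / 2 / (2*π)))) = 8 * π * Real.log (2*π) + (∫ x in unitDisk, gradSq u x) / 4 + 2 * bint u := by
    field_simp
    ring
  have := mul_nonneg (by positivity : 0 ≤ 4 * π) h5
  linarith

lemma Isum (K h : ℂ → ℝ) (hK : Continuous K) (hh : Continuous (fun θ => h (bpt θ))) (ε : ℝ) (u : ℂ → ℝ) (hu : ContDiff ℝ 1 u) :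
    Ifun K h u + ε * Tfun u = (1+ε)/2 * (∫ x in unitDisk, gradSq u x) + (∫ x in unitDisk, (-2 * K x + ε) * Real.exp (u x))
      + 2 * bint u - ε * (∫ x in unitDisk, u x) - 4 * bint (fun x => h x * Real.exp (u x / 2)) := by
  have hg := gradSq_cont u hu
  have hc := hu.continuous
  have hb := bpt_cont
  have hcb : Continuous (fun θ => u (bpt θ)) := hc.comp hb
  unfold Ifun Tfun
  have hhe : Continuous (fun θ => 4 * h (bpt θ) * Real.exp (u (bpt θ) / 2)) := (continuous_const.mul hh).mul (by fun_prop)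
  rw [bint_sub' (by fun_prop) hhe, bint_const_mul]
  rw [show (fun x => 4 * h x * Real.exp (u x / 2)) = fun x => 4 * (h x * Real.exp (u x / 2)) by ext; ring, bint_const_mul]
  have e1 : ∀ x, (1/2) * gradSq u x + Real.exp (u x) - u x = (1/2) * gradSq u x + (Real.exp (u x) - u x) := fun x => by ring
  simp only [e1]
  rw [integral_sub (cont_intOn (by fun_prop)) (cont_intOn (by fun_prop)), integral_add (cont_intOn (by fun_prop)) (cont_intOn (by fun_prop)),
    integral_sub (cont_intOn (by fun_prop)) (cont_intOn (by fun_prop)), integral_const_mul]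
  have e2 : ∀ x, (-2 * K x + ε) * Real.exp (u x) = ε * Real.exp (u x) - 2 * K x * Real.exp (u x) := fun x => by ring
  simp only [e2]
  rw [integral_sub (cont_intOn (by fun_prop)) (cont_intOn (by fun_prop)), integral_const_mul]
  ring

lemma h_bdd (h : ℂ → ℝ) (hh : Continuous (fun θ => h (bpt θ))) : ∃ H : ℝ, 0 ≤ H ∧ ∀ θ ∈ Set.Icc 0 (2*π), h (bpt θ) ≤ H := by
  obtain ⟨C, hC⟩ := (isCompact_Icc (a := (0:ℝ)) (b := 2*π)).exists_bound_of_continuousOn hh.continuousOn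
  exact ⟨|C|, abs_nonneg _, fun θ hθ => (le_abs_self _).trans ((hC θ hθ).trans (le_abs_self C))⟩

theorem P4 (K h : ℂ → ℝ) (hK : Continuous K) (hKneg : ∀ x ∈ closedUnitDisk, K x < 0) (hh : Continuous (fun θ => h (bpt θ))) :
    ∃ δ₁ > (0:ℝ), δ₁ ≤ 1/4 ∧ ∃ C ≥ (0:ℝ), ∀ ε, -δ₁ < ε → ε ≤ 0 → ∀ u, MemM u → -C ≤ Ieps K h ε u := by
  obtain ⟨x0, hx0, hmax⟩ := (isCompact_closedBall (0:ℂ) 1).exists_isMaxOn ⟨0, by simp⟩ hK.continuousOn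
  obtain ⟨H, hH0, hH⟩ := h_bdd h hh
  have hpi := pi_pos
  have hlog : 0 ≤ Real.log (2*π) := Real.log_nonneg (by nlinarith [pi_gt_three])
  set Cn := 10 * π * Real.log (2*π) + π + 4 * H with hCn
  have hCn0 : 0 ≤ Cn := by positivity
  refine ⟨min (1/4) (-2 * K x0), lt_min (by norm_num) (by have := hKneg x0 hx0; linarith), min_le_left _ _, 2 * Cn, by positivity, ?_⟩
  intro ε hε hε0 u hu
  have hε1 : -(1/4) < ε := by have := min_le_left (1/4) (-2 * K x0); linarith
  have hε2 : 2 * K x0 < ε := by have := min_le_right (1/4) (-2 * K x0); linarith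
  have hN : -Cn ≤ Ifun K h u + ε * Tfun u := by
    rw [Isum K h hK hh ε u hu.1]
    have b1 := bint_lower u hu
    have b2 := disk_u_lower u hu.1
    have b3 : 0 ≤ ∫ x in unitDisk, (-2 * K x + ε) * Real.exp (u x) := by
      apply setIntegral_nonneg measurableSet_ball
      intro x hx
      have : K x ≤ K x0 := hmax (Metric.ball_subset_closedBall hx)
      have : 0 ≤ -2 * K x + ε := by linarith
      positivity
    have b4 : bint (fun x => h x * Real.exp (u x / 2)) ≤ H := by
      have hc := hu.1.continuous
      have hb := bpt_cont
      have hcb : Continuous (fun θ => u (bpt θ)) := hc.comp hb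
      calc bint (fun x => h x * Real.exp (u x / 2)) ≤ bint (fun x => H * Real.exp (u x / 2)) := by
            unfold bint
            refine intervalIntegral.integral_mono_on two_pi_pos.le (Continuous.intervalIntegrable (hh.mul (by fun_prop)) _ _) (Continuous.intervalIntegrable (by fun_prop) _ _) ?_
            intro θ hθ
            exact mul_le_mul_of_nonneg_right (hH θ hθ) (Real.exp_pos _).le
        _ = H := by rw [bint_const_mul, hu.2.1, mul_one]
    have g0 := gradSq_int_nonneg u
    set G := ∫ x in unitDisk, gradSq u x
    set U := ∫ x in unitDisk, u x
    set P := π * Real.log (2*π) with hP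
    have hP0 : 0 ≤ P := by positivity
    have c1 : (-ε) * (bint u / 2 - (π + G) / 4) ≤ (-ε) * U := mul_le_mul_of_nonneg_left b2 (by linarith)
    have c2 : (2 + (-ε)/2) * (-(4 * π * Real.log (2*π)) - G/8) ≤ (2 + (-ε)/2) * bint u := mul_le_mul_of_nonneg_left b1 (by linarith)
    have hC' : Cn = 10 * P + π + 4 * H := by rw [hCn, hP]; ring
    have e3 : 4 * π * Real.log (2*π) = 4 * P := by rw [hP]; ring
    rw [e3] at c2
    have c3 : 0 ≤ (1/4 + ε) * G := mul_nonneg (by linarith) g0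
    have c4 : 0 ≤ (1/4 + ε) * P := mul_nonneg (by linarith) hP0
    have c5 : 0 ≤ (1/4 + ε) * π := mul_nonneg (by linarith) hpi.le
    nlinarith
  unfold Ieps
  rw [le_div_iff₀ (by linarith)]
  nlinarith

end PartD1

section PartD2
open MeasureTheory Real Filter


lemma nderiv_sq (w : ℂ → ℝ) (hw : ContDiff ℝ 1 w) (x : ℂ) : nderiv (fun x => w x ^ 2) x = 2 * w x * nderiv w x := by
  have h : HasFDerivAt (fun x : ℂ => w x ^ 2) _ x := ((hw.differentiable one_ne_zero) x).hasFDerivAt.pow 2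
  unfold nderiv pd
  rw [h.fderiv]
  simp; ring

lemma trace_ineq (w : ℂ → ℝ) (hw : ContDiff ℝ 1 w) : bint (fun x => w x ^ 2) ≤ 3 * H1normSq w := by
  have hg := gradSq_cont w hw
  have hc := hw.continuous
  have hn := nderiv_cont w hw
  rw [← div_u _ (hw.pow 2)]
  have : ∫ x in unitDisk, (2 * w x ^ 2 + nderiv (fun x => w x ^ 2) x) ≤ ∫ x in unitDisk, (gradSq w x + 3 * w x ^2) := by
    simp only [nderiv_sq w hw]
    apply disk_mono (cont_intOn (by fun_prop)) (cont_intOn (by fun_prop))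
    intro x hx
    have := nderiv_abs w hx
    nlinarith [sq_nonneg (nderiv w x - w x)]
  refine this.trans ?_
  rw [integral_add (cont_intOn hg) (cont_intOn (by fun_prop)), integral_const_mul]
  have := gradSq_int_nonneg w
  unfold H1normSq
  linarith

lemma exp_sub_one_bd (s : ℝ) : |Real.exp s - 1| ≤ |s| * (1 + Real.exp s) := by
  have h1 := Real.add_one_le_exp s
  have h2 := Real.add_one_le_exp (-s)
  have hp := Real.exp_pos s
  have h3 : Real.exp (-s) * Real.exp s = 1 := by rw [← Real.exp_add]; simp
  rcases le_total 0 s with h | h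
  · have : 0 ≤ Real.exp s - 1 := by linarith
    rw [abs_of_nonneg this, abs_of_nonneg h]
    nlinarith
  · have : Real.exp s ≤ 1 := Real.exp_le_one_iff.2 h
    rw [abs_of_nonpos (by linarith), abs_of_nonpos h]
    nlinarith

def Mc : ℝ := 1 + 2 * π * (1 + Real.exp 2)

lemma exp_diff (w : ℂ → ℝ) (hw : ContDiff ℝ 1 w) (d : ℝ) (hd : 0 < d) (hd1 : d ≤ 1) (hn : H1normSq w ≤ d^2) :
    bint (fun x => |Real.exp (w x / 2) - 1|) ≤ d * Mc := by
  have hb := bpt_cont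
  have hpi := pi_pos
  have hpi3 := pi_gt_three
  have hc : Continuous (fun θ => w (bpt θ)) := hw.continuous.comp hb
  have ht := trace_ineq w hw
  have hsq0 : 0 ≤ ∫ x in unitDisk, (w x)^2 := integral_nonneg fun x => sq_nonneg _
  have hG : ∫ x in unitDisk, gradSq w x ≤ 1 := by unfold H1normSq at hn; nlinarith
  have hw1 : bint w ≤ bint (fun x => (1/2) * w x ^ 2 + 1/2) := by
    refine bint_mono hc (by fun_prop) fun θ => ?_
    nlinarith [sq_nonneg (w (bpt θ) - 1)]
  rw [bint_add' (by fun_prop) (by fun_prop), bint_const_mul, bint_const] at hw1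
  have hE : bint (fun x => Real.exp (w x)) ≤ 2 * π * Real.exp 2 := by
    have := LM w hw
    rw [div_le_iff₀ (by positivity)] at this
    refine this.trans ?_
    rw [mul_comm]
    refine mul_le_mul_of_nonneg_left (Real.exp_le_exp.2 ?_) (by positivity)
    have a1 : (∫ x in unitDisk, gradSq w x) / (4*π) ≤ 1 := by
      rw [div_le_one (by positivity)]; linarith
    have a2 : bint w / (2*π) ≤ 1 := by
      rw [div_le_one (by positivity)]; nlinarith
    linarith
  have h1 : bint (fun x => |Real.exp (w x / 2) - 1|) ≤ bint (fun x => (1/(8*d)) * w x ^ 2 + d * (1 + Real.exp (w x))) := by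
    refine bint_mono (by fun_prop) (by fun_prop) fun θ => ?_
    refine (exp_sub_one_bd _).trans ?_
    set s := w (bpt θ) / 2 with hs
    have e1 : w (bpt θ) = 2 * s := by rw [hs]; ring
    rw [e1, show Real.exp (2*s) = Real.exp s ^ 2 by rw [sq, ← Real.exp_add, two_mul]]
    have e2 : 1 / (8*d) * (2*s)^2 = |s|^2/(2*d) := by rw [sq_abs]; field_simp; norm_num
    rw [e2]
    have e3 : |s| * (1 + Real.exp s) ≤ |s|^2/(2*d) + d * (1+Real.exp s)^2/2 := by
      have : |s|^2/(2*d) + d * (1+Real.exp s)^2/2 - |s| * (1 + Real.exp s) = (|s| - d * (1 + Real.exp s))^2/(2*d) := by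
        field_simp; ring
      have : 0 ≤ (|s| - d * (1 + Real.exp s))^2/(2*d) := by positivity
      linarith
    nlinarith [sq_nonneg (Real.exp s - 1), mul_nonneg hd.le (sq_nonneg (Real.exp s - 1))]
  refine h1.trans ?_
  rw [bint_add' (by fun_prop) (by fun_prop), bint_const_mul, bint_const_mul, bint_add' (by fun_prop) (by fun_prop), bint_const]
  have h2 : 1/(8*d) * bint (fun x => w x ^ 2) ≤ d := by
    rw [one_div, inv_mul_le_iff₀ (by positivity)]
    nlinarith
  unfold Mc
  nlinarith

theorem P6 {E : Type*} [PseudoMetricSpace E] (S : Set E) (η : E → ℂ → ℝ) (h1 : H1ContinuousOn η S) (h2 : ∀ y ∈ S, ContDiff ℝ 1 (η y))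
    (p : ℂ → ℝ) (hp : Continuous p) (hp1 : ∀ θ, |p (bpt θ)| ≤ 1) :
    ContinuousOn (fun y => bint (fun x => p x * Real.exp (η y x / 2))) S := by
  have hb := bpt_cont
  have hpb : Continuous (fun θ => p (bpt θ)) := hp.comp hb
  rw [Metric.continuousOn_iff]
  intro y hy r hr
  have hcy : Continuous (fun θ => η y (bpt θ)) := (h2 y hy).continuous.comp hb
  obtain ⟨B, hB0, hB⟩ : ∃ B : ℝ, 0 < B ∧ ∀ θ ∈ Set.Icc 0 (2*π), Real.exp (η y (bpt θ) / 2) ≤ B := by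
    obtain ⟨C, hC⟩ := (isCompact_Icc (a := (0:ℝ)) (b := 2*π)).exists_bound_of_continuousOn (f := fun θ => Real.exp (η y (bpt θ) / 2)) (Continuous.continuousOn (by fun_prop))
    refine ⟨|C| + 1, by positivity, fun θ hθ => ?_⟩
    have := (le_abs_self _).trans ((hC θ hθ).trans (le_abs_self C))
    linarith
  have hM : 0 < Mc := by unfold Mc; positivity
  set d := min 1 (r / (2 * B * Mc)) with hd
  have hd0 : 0 < d := lt_min one_pos (by positivity)
  obtain ⟨ρ, hρ, hρ'⟩ := h1 y hy d hd0
  refine ⟨ρ, hρ, fun y' hy' hdist => ?_⟩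
  have hlt := hρ' y' hy' hdist
  set w : ℂ → ℝ := fun x => η y' x - η y x with hw
  have hwc : ContDiff ℝ 1 w := (h2 y' hy').sub (h2 y hy)
  have hcy' : Continuous (fun θ => η y' (bpt θ)) := (h2 y' hy').continuous.comp hb
  have hcw : Continuous (fun θ => w (bpt θ)) := hwc.continuous.comp hb
  have hn : H1normSq w ≤ d^2 := by
    rw [Real.sqrt_lt' hd0] at hlt
    exact hlt.le
  have hk := exp_diff w hwc d hd0 (min_le_left _ _) hn
  rw [Real.dist_eq, ← bint_sub' (by fun_prop) (by fun_prop)]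
  have hle : |bint (fun x => p x * Real.exp (η y' x / 2) - p x * Real.exp (η y x / 2))| ≤ bint (fun x => B * |Real.exp (w x / 2) - 1|) := by
    unfold bint
    refine (intervalIntegral.abs_integral_le_integral_abs two_pi_pos.le).trans ?_
    refine intervalIntegral.integral_mono_on two_pi_pos.le (Continuous.intervalIntegrable (by fun_prop) _ _) (Continuous.intervalIntegrable (by fun_prop) _ _) ?_
    intro θ hθ
    have : p (bpt θ) * Real.exp (η y' (bpt θ) / 2) - p (bpt θ) * Real.exp (η y (bpt θ) / 2) = p (bpt θ) * (Real.exp (η y (bpt θ) / 2) * (Real.exp (w (bpt θ) / 2) - 1)) := by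
      rw [mul_sub (Real.exp _), ← Real.exp_add]
      simp only [hw]
      ring_nf
    beta_reduce
    rw [this, abs_mul, abs_mul, abs_of_pos (Real.exp_pos _)]
    calc |p (bpt θ)| * (Real.exp (η y (bpt θ) / 2) * |Real.exp (w (bpt θ) / 2) - 1|) ≤ 1 * (B * |Real.exp (w (bpt θ) / 2) - 1|) :=
          mul_le_mul (hp1 θ) (mul_le_mul_of_nonneg_right (hB θ hθ) (abs_nonneg _)) (by positivity) (by norm_num)
      _ = _ := one_mul _
  rw [bint_const_mul] at hle
  have hd2 : d ≤ r / (2 * B * Mc) := min_le_right _ _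
  rw [le_div_iff₀ (by positivity)] at hd2
  nlinarith

end PartD2

section PartE1
open MeasureTheory Real Filter


def Sq (a : ℂ) : ℝ := a.re^2 + a.im^2
def Aa (a : ℂ) : ℝ := 1 - Sq a
def dotc (a x : ℂ) : ℝ := a.re * x.re + a.im * x.im
def Wf (a x : ℂ) : ℝ := 1 - 2 * dotc a x + Sq a * Sq x
def Qf (l : ℝ) (a x : ℂ) : ℝ := l * Wf a x + Aa a * (1 - Sq x)

lemma Sq_norm (a : ℂ) : Sq a = ‖a‖^2 := norm_sq_re_im a

lemma Sq_bpt (θ : ℝ) : Sq (bpt θ) = 1 := circ_sq θ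

lemma Aa_pos {a : ℂ} (ha : ‖a‖ < 1) : 0 < Aa a := by
  unfold Aa; rw [Sq_norm]; nlinarith [norm_nonneg a]

lemma dotc_le (a x : ℂ) : dotc a x ≤ ‖a‖ * ‖x‖ := by
  have h : (dotc a x)^2 ≤ (‖a‖ * ‖x‖)^2 := by
    rw [mul_pow, ← Sq_norm, ← Sq_norm]
    unfold dotc Sq
    nlinarith [sq_nonneg (a.re * x.im - a.im * x.re)]
  exact (abs_le_of_sq_le_sq' h (by positivity)).2

lemma Wf_lower (a x : ℂ) (ha : ‖a‖ < 1) (hx : ‖x‖ ≤ 1) : (1 - ‖a‖)^2 ≤ Wf a x := by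
  unfold Wf
  have h := dotc_le a x
  rw [Sq_norm, Sq_norm]
  have h2 : ‖a‖ * ‖x‖ ≤ ‖a‖ := by nlinarith [norm_nonneg a]
  have h3 : 0 ≤ ‖a‖ * ‖x‖ := by positivity
  nlinarith

lemma Wf_pos (a x : ℂ) (ha : ‖a‖ < 1) (hx : ‖x‖ ≤ 1) : 0 < Wf a x := by
  have := Wf_lower a x ha hx
  have : 0 < (1 - ‖a‖)^2 := by have : 0 < 1 - ‖a‖ := by linarith
                               positivity
  linarith

lemma Wf_bpt (a : ℂ) (θ : ℝ) : Wf a (bpt θ) = ‖bpt θ - a‖^2 := by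
  rw [← norm_sq_re_im, Wf, Sq_bpt]
  have := Sq_bpt θ
  unfold Sq at *
  unfold dotc
  simp only [Complex.sub_re, Complex.sub_im]
  linear_combination -this

lemma Wf_cont (a : ℂ) : Continuous (Wf a) := by
  have h3 := Complex.continuous_re
  have h4 := Complex.continuous_im
  unfold Wf dotc Sq; fun_prop

lemma circleMap_bpt (θ : ℝ) : circleMap 0 1 θ = bpt θ := by simp [circleMap, bpt]

lemma poisson_gen (a : ℂ) (ha : ‖a‖ < 1) (f : ℂ → ℂ) (hf : Differentiable ℂ f) :
    ∫ θ in (0:ℝ)..(2*π), (((1 / Wf a (bpt θ) : ℝ)) : ℂ) * f (bpt θ) = (((2 * π / Aa a : ℝ)) : ℂ) * f a := by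
  have h := DiffContOnCl.circleAverage_poissonKernel_smul' (f := f) (R := 1) (c := 0) (w := a) hf.diffContOnCl (by simpa using ha)
  rw [Real.circleAverage_def] at h
  simp only [circleMap_bpt, sub_zero, bpt_norm] at h
  have e : ∀ θ, ((1^2 - ‖a‖^2) / ‖bpt θ - a‖^2) • f (bpt θ) = ((Aa a : ℝ):ℂ) * ((((1 / Wf a (bpt θ) : ℝ)) : ℂ) * f (bpt θ)) := by
    intro θ
    rw [Wf_bpt, Aa, Sq_norm, Complex.real_smul]
    push_cast; ring
  simp only [e] at h
  rw [intervalIntegral.integral_const_mul, Complex.real_smul] at h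
  rw [← h]
  have h1 : ((Aa a:ℝ):ℂ) ≠ 0 := by exact_mod_cast (Aa_pos ha).ne'
  have h2 : (π:ℂ) ≠ 0 := by exact_mod_cast pi_pos.ne'
  push_cast
  field_simp

lemma poisson_re (a : ℂ) (ha : ‖a‖ < 1) (f : ℂ → ℂ) (hf : Differentiable ℂ f) :
    bint (fun x => (f x).re / Wf a x) = 2 * π / Aa a * (f a).re := by
  have hb := bpt_cont
  have h := congrArg Complex.re (poisson_gen a ha f hf)
  rw [Complex.re_ofReal_mul] at h
  rw [← h]
  have hW : Continuous (fun θ => Wf a (bpt θ)) := (Wf_cont a).comp hb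
  have hc : Continuous (fun θ => (((1 / Wf a (bpt θ) : ℝ)) : ℂ) * f (bpt θ)) := by
    have h1 : Continuous (fun θ => 1 / Wf a (bpt θ)) := continuous_const.div hW (fun θ => (Wf_pos a _ ha (bpt_norm θ).le).ne')
    exact (Complex.continuous_ofReal.comp h1).mul (hf.continuous.comp hb)
  have := Complex.reCLM.intervalIntegral_comp_comm (hc.intervalIntegrable (μ := volume) 0 (2*π))
  simp only [Complex.reCLM_apply] at this
  rw [← this]
  unfold bint
  congr 1
  ext θ
  rw [Complex.re_ofReal_mul]; ring

lemma poisson_one (a : ℂ) (ha : ‖a‖ < 1) : bint (fun x => 1 / Wf a x) = 2 * π / Aa a := by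
  have := poisson_re a ha (fun _ => 1) (by fun_prop)
  simpa using this

lemma poisson_x (a : ℂ) (ha : ‖a‖ < 1) : bint (fun x => x.re / Wf a x) = 2 * π / Aa a * a.re :=
  poisson_re a ha (fun x => x) differentiable_id

lemma poisson_y (a : ℂ) (ha : ‖a‖ < 1) : bint (fun x => x.im / Wf a x) = 2 * π / Aa a * a.im := by
  have := poisson_re a ha (fun x => -Complex.I * x) (by fun_prop)
  simpa using this

lemma log_W (a : ℂ) (ha : ‖a‖ < 1) : bint (fun x => Real.log (Wf a x)) = 0 := by
  have h := circleAverage_log_norm_sub_const₀ (a := a) ha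
  rw [Real.circleAverage_def] at h
  simp only [circleMap_bpt, smul_eq_mul] at h
  have h' := (mul_eq_zero.1 h).resolve_left (by have := pi_pos; positivity)
  unfold bint
  simp only [Wf_bpt, Real.log_pow]
  rw [intervalIntegral.integral_const_mul, h', mul_zero]

lemma Wf_smul (a : ℂ) (r θ : ℝ) : Wf a (r * bpt θ) = Wf (r * a) (bpt θ) := by
  unfold Wf dotc Sq
  simp
  ring

lemma int_W (a : ℂ) (ha : ‖a‖ < 1) : Sq a * ∫ x in unitDisk, 1 / Wf a x = -π * Real.log (Aa a) := by
  have hpos : ∀ x ∈ Metric.closedBall (0:ℂ) 1, Wf a x ≠ 0 := fun x hx => (Wf_pos a x ha (by simpa using hx)).ne'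
  rw [polar_int (fun x => 1 / Wf a x) (continuousOn_const.div (Wf_cont a).continuousOn hpos)]
  have hA : ∀ r ∈ Set.uIcc (0:ℝ) 1, 0 < 1 - r^2 * Sq a := by
    intro r hr
    rw [Set.uIcc_of_le zero_le_one] at hr
    rw [Sq_norm]
    have : ‖a‖^2 < 1 := by nlinarith [norm_nonneg a]
    have : r^2 ≤ 1 := by nlinarith [hr.1, hr.2]
    nlinarith [sq_nonneg ‖a‖]
  have h1 : ∫ r in (0:ℝ)..1, ∫ θ in (0:ℝ)..(2*π), r * (1 / Wf a (r * bpt θ)) = ∫ r in (0:ℝ)..1, r * (2 * π / (1 - r^2 * Sq a)) := by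
    refine intervalIntegral.integral_congr fun r hr => ?_
    have hA' := hA r hr
    rw [Set.uIcc_of_le zero_le_one] at hr
    simp only [Wf_smul]
    rw [intervalIntegral.integral_const_mul]
    congr 1
    have hn : ‖(r:ℂ) * a‖ < 1 := by
      rw [norm_mul, Complex.norm_real, Real.norm_of_nonneg hr.1]
      nlinarith [norm_nonneg a, hr.1, hr.2]
    have := poisson_one ((r:ℂ) * a) hn
    rw [bint] at this
    rw [this]
    congr 1
    unfold Aa Sq; simp; ring
  rw [h1, ← intervalIntegral.integral_const_mul]
  have hd : ∀ r ∈ Set.uIcc (0:ℝ) 1, HasDerivAt (fun r => -π * Real.log (1 - r^2 * Sq a)) (Sq a * (r * (2 * π / (1 - r^2 * Sq a)))) r := by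
    intro r hr
    have h2 : HasDerivAt (fun r : ℝ => 1 - r^2 * Sq a) (-(2 * r * Sq a)) r := by
      have := ((hasDerivAt_pow 2 r).mul_const (Sq a)).const_sub 1
      simpa using this
    have := (h2.log (hA r hr).ne').const_mul (-π)
    have e : Sq a * (r * (2 * π / (1 - r^2 * Sq a))) = -π * (-(2 * r * Sq a) / (1 - r ^ 2 * Sq a)) := by ring
    rw [e]; exact this
  rw [intervalIntegral.integral_eq_sub_of_hasDerivAt hd]
  · simp [Aa]
  · apply ContinuousOn.intervalIntegrable
    intro r hr
    have := (hA r hr).ne'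
    apply ContinuousAt.continuousWithinAt
    fun_prop (disch := assumption)

end PartE1

section PartE2
open MeasureTheory Real Filter


def qc (l : ℝ) (a : ℂ) : ℝ := l * Sq a - Aa a

lemma Sq_le_one {x : ℂ} (hx : ‖x‖ ≤ 1) : Sq x ≤ 1 := by rw [Sq_norm]; nlinarith [norm_nonneg x]

lemma Qf_ge_W (l : ℝ) (a x : ℂ) (ha : ‖a‖ < 1) (hx : ‖x‖ ≤ 1) : l * Wf a x ≤ Qf l a x := by
  unfold Qf
  have := mul_nonneg (Aa_pos ha).le (sub_nonneg.2 (Sq_le_one hx))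
  linarith

lemma Qf_ge_A (l : ℝ) (hl : 0 < l) (a x : ℂ) (ha : ‖a‖ < 1) (hx : ‖x‖ ≤ 1) : Aa a * (1 - Sq x) ≤ Qf l a x := by
  unfold Qf
  have := mul_pos hl (Wf_pos a x ha hx)
  linarith

lemma Qf_lower (l : ℝ) (hl : 0 < l) (a x : ℂ) (ha : ‖a‖ < 1) (hx : ‖x‖ ≤ 1) : l * (1 - ‖a‖)^2 ≤ Qf l a x :=
  (mul_le_mul_of_nonneg_left (Wf_lower a x ha hx) hl.le).trans (Qf_ge_W l a x ha hx)

lemma Qf_pos (l : ℝ) (hl : 0 < l) (a x : ℂ) (ha : ‖a‖ < 1) (hx : ‖x‖ ≤ 1) : 0 < Qf l a x :=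
  (mul_pos hl (Wf_pos a x ha hx)).trans_le (Qf_ge_W l a x ha hx)

lemma Qf_bpt (l : ℝ) (a : ℂ) (θ : ℝ) : Qf l a (bpt θ) = l * Wf a (bpt θ) := by
  rw [Qf, Sq_bpt]; ring

lemma Qf_eq (l : ℝ) (a x : ℂ) : Qf l a x = qc l a * (x.re^2 + x.im^2) - 2 * l * (a.re * x.re + a.im * x.im) + (l + Aa a) := by
  unfold Qf qc Wf dotc Aa Sq; ring

def Qd (l : ℝ) (a x v : ℂ) : ℝ := 2 * ((qc l a * x.re - l * a.re) * v.re + (qc l a * x.im - l * a.im) * v.im)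

lemma Qf_hasFDerivAt (l : ℝ) (a x : ℂ) : ∃ L : ℂ →L[ℝ] ℝ, HasFDerivAt (Qf l a) L x ∧ ∀ v, L v = Qd l a x v := by
  have hr : HasFDerivAt (fun x : ℂ => x.re) Complex.reCLM x := Complex.reCLM.hasFDerivAt
  have hi : HasFDerivAt (fun x : ℂ => x.im) Complex.imCLM x := Complex.imCLM.hasFDerivAt
  have h := ((((hr.pow 2).fun_add (hi.pow 2)).const_mul (qc l a)).fun_sub
    (((hr.const_mul a.re).fun_add (hi.const_mul a.im)).const_mul (2*l))).add_const (l + Aa a)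
  refine ⟨_, h.congr_of_eventuallyEq (Eventually.of_forall fun y => Qf_eq l a y), ?_⟩
  intro v
  simp [Qd]
  ring

lemma Qf_contDiff (l : ℝ) (a : ℂ) : ContDiff ℝ 1 (Qf l a) := by
  have h1 : ContDiff ℝ 1 (fun x : ℂ => x.re) := Complex.reCLM.contDiff
  have h2 : ContDiff ℝ 1 (fun x : ℂ => x.im) := Complex.imCLM.contDiff
  rw [show Qf l a = fun x => _ from funext (Qf_eq l a)]
  fun_prop

lemma Qf_cont (l : ℝ) (a : ℂ) : Continuous (Qf l a) := (Qf_contDiff l a).continuous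

lemma Qd_sq (l : ℝ) (a x : ℂ) : (Qd l a x 1)^2 + (Qd l a x Complex.I)^2 = 4 * qc l a * Qf l a x + 4 * (Aa a)^2 * (1 + l) := by
  rw [Qf_eq]
  unfold Qd qc Aa Sq
  simp
  ring

lemma pd_Qf (l : ℝ) (a x v : ℂ) : pd (Qf l a) v x = Qd l a x v := by
  obtain ⟨L, h, h'⟩ := Qf_hasFDerivAt l a x
  rw [pd, h.fderiv, h']

lemma int_invQ2 (l : ℝ) (hl : 0 < l) (a : ℂ) (ha : ‖a‖ < 1) :
    ∫ x in unitDisk, (Aa a)^2 / (Qf l a x)^2 = π / (l * (1 + l)) := by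
  have hb := bpt_cont
  have hQ : ∀ x ∈ Metric.closedBall (0:ℂ) 1, Qf l a x ≠ 0 := fun x hx => (Qf_pos l hl a x ha (by simpa using hx)).ne'
  have h1 : ContDiff ℝ 1 (fun x : ℂ => x.re) := Complex.reCLM.contDiff
  have h2 : ContDiff ℝ 1 (fun x : ℂ => x.im) := Complex.imCLM.contDiff
  have hX : ∀ x ∈ Metric.closedBall (0:ℂ) 1, ContDiffAt ℝ 1 (fun x : ℂ => (qc l a * x.re - l * a.re) / Qf l a x) x := by
    intro x hx
    exact ContDiffAt.div (by fun_prop) (Qf_contDiff l a).contDiffAt (hQ x hx)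
  have hY : ∀ x ∈ Metric.closedBall (0:ℂ) 1, ContDiffAt ℝ 1 (fun x : ℂ => (qc l a * x.im - l * a.im) / Qf l a x) x := by
    intro x hx
    exact ContDiffAt.div (by fun_prop) (Qf_contDiff l a).contDiffAt (hQ x hx)
  have hdiv := div_thm _ _ hX hY
  have hL : ∫ x in unitDisk, (pd (fun x : ℂ => (qc l a * x.re - l * a.re) / Qf l a x) 1 x + pd (fun x : ℂ => (qc l a * x.im - l * a.im) / Qf l a x) Complex.I x)
      = ∫ x in unitDisk, (-2 * (1 + l)) * ((Aa a)^2 / (Qf l a x)^2) := by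
    refine setIntegral_congr_fun measurableSet_ball fun x hx => ?_
    have hq := hQ x (Metric.ball_subset_closedBall hx)
    obtain ⟨L, h, h'⟩ := Qf_hasFDerivAt l a x
    have hr : HasFDerivAt (fun x : ℂ => x.re) Complex.reCLM x := Complex.reCLM.hasFDerivAt
    have hi : HasFDerivAt (fun x : ℂ => x.im) Complex.imCLM x := Complex.imCLM.hasFDerivAt
    have hinv : HasFDerivAt (fun x => (Qf l a x)⁻¹) _ x := (hasDerivAt_inv hq).comp_hasFDerivAt x h
    have e1 := ((hr.const_mul (qc l a)).sub_const (l * a.re)).fun_mul hinv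
    have e2 := ((hi.const_mul (qc l a)).sub_const (l * a.im)).fun_mul hinv
    simp only [pd, div_eq_mul_inv]
    rw [e1.fderiv, e2.fderiv]
    have hsq := Qd_sq l a x
    simp [h']
    field_simp
    unfold Qd at *
    simp at *
    nlinarith
  rw [hL, integral_const_mul] at hdiv
  have hR : bint (fun x => x.re * ((qc l a * x.re - l * a.re) / Qf l a x) + x.im * ((qc l a * x.im - l * a.im) / Qf l a x))
     = bint (fun x => 1/2 - (Aa a * (l + 2) / (2 * l)) * (1 / Wf a x)) := by
    unfold bint
    congr 1
    ext θ
    have hW := (Wf_pos a (bpt θ) ha (bpt_norm θ).le).ne'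
    have hs := Sq_bpt θ
    have hQe := Qf_eq l a (bpt θ)
    beta_reduce
    rw [Qf_bpt]
    rw [Qf_bpt] at hQe
    unfold Sq at hs
    rw [hs] at hQe
    field_simp
    have hqd : qc l a = l - Aa a * (1 + l) := by unfold qc Aa; ring
    linear_combination (2 * qc l a) * hs - hQe + hqd
  rw [hR] at hdiv
  have hWc : Continuous (fun θ => 1 / Wf a (bpt θ)) := continuous_const.div ((Wf_cont a).comp hb) (fun θ => (Wf_pos a _ ha (bpt_norm θ).le).ne')
  rw [bint_sub' continuous_const (continuous_const.mul hWc), bint_const, bint_const_mul, poisson_one a ha] at hdiv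
  have hA := (Aa_pos ha).ne'
  have : ∫ x in unitDisk, (Aa a)^2 / (Qf l a x)^2 = (2 * π * (1/2) - Aa a * (l+2)/(2*l) * (2*π/Aa a)) / (-2 * (1+l)) := by
    rw [← hdiv]
    have : (-2 * (1+l)) ≠ 0 := by nlinarith
    field_simp
  rw [this]
  have : 1 + l ≠ 0 := by positivity
  field_simp
  ring

lemma inv_Q_contOn (l : ℝ) (hl : 0 < l) (a : ℂ) (ha : ‖a‖ < 1) : ContinuousOn (fun x => 1 / Qf l a x) (Metric.closedBall 0 1) :=
  continuousOn_const.div (Qf_cont l a).continuousOn (fun x hx => (Qf_pos l hl a x ha (by simpa using hx)).ne')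

lemma contOn_int {f : ℂ → ℝ} (hf : ContinuousOn f (Metric.closedBall 0 1)) : IntegrableOn f unitDisk :=
  (hf.integrableOn_compact (isCompact_closedBall (0:ℂ) 1)).mono_set Metric.ball_subset_closedBall

lemma int_qQ (l : ℝ) (hl : 0 < l) (a : ℂ) (ha : ‖a‖ < 1) :
    qc l a * ∫ x in unitDisk, 1 / Qf l a x ≤ - π * Real.log (Aa a) := by
  have hA := Aa_pos ha
  have hS : 0 ≤ Sq a := by unfold Sq; positivity
  have hlog : Real.log (Aa a) ≤ 0 := Real.log_nonpos hA.le (by unfold Aa; linarith)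
  have hpi := pi_pos
  have hmem : ∀ x ∈ unitDisk, ‖x‖ ≤ 1 := fun x hx => by
    have : ‖x‖ < 1 := by simpa [unitDisk] using hx
    exact this.le
  have hpos : 0 ≤ ∫ x in unitDisk, 1 / Qf l a x := setIntegral_nonneg measurableSet_ball fun x hx => by
    have := Qf_pos l hl a x ha (hmem x hx); positivity
  rcases le_total (qc l a) 0 with hq | hq
  · have := mul_nonpos_of_nonpos_of_nonneg hq hpos
    nlinarith
  · have hWc : ContinuousOn (fun x => 1 / Wf a x) (Metric.closedBall 0 1) :=
      continuousOn_const.div (Wf_cont a).continuousOn (fun x hx => (Wf_pos a x ha (by simpa using hx)).ne')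
    have h1 : ∫ x in unitDisk, 1 / Qf l a x ≤ ∫ x in unitDisk, (1/l) * (1 / Wf a x) := by
      refine disk_mono (contOn_int (inv_Q_contOn l hl a ha)) (contOn_int (continuousOn_const.mul hWc)) fun x hx => ?_
      have hW := Wf_pos a x ha (hmem x hx)
      rw [one_div_mul_one_div]
      exact one_div_le_one_div_of_le (by positivity) (Qf_ge_W l a x ha (hmem x hx))
    rw [integral_const_mul] at h1
    rw [← int_W a ha]
    have hWp : 0 ≤ ∫ x in unitDisk, 1 / Wf a x := setIntegral_nonneg measurableSet_ball fun x hx => by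
      have := Wf_pos a x ha (hmem x hx); positivity
    calc qc l a * ∫ x in unitDisk, 1 / Qf l a x ≤ qc l a * (1/l * ∫ x in unitDisk, 1 / Wf a x) := mul_le_mul_of_nonneg_left h1 hq
      _ = (qc l a / l) * ∫ x in unitDisk, 1 / Wf a x := by ring
      _ ≤ Sq a * ∫ x in unitDisk, 1 / Wf a x := by
        refine mul_le_mul_of_nonneg_right ?_ hWp
        rw [div_le_iff₀ hl, qc]
        linarith

end PartE2

section PartE3
open MeasureTheory Real Filter


def Lg (q0 t : ℝ) : ℝ := Real.log q0 + ∫ s in q0..t, (max s q0)⁻¹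

lemma maxinv_cont (q0 : ℝ) (h : 0 < q0) : Continuous (fun s : ℝ => (max s q0)⁻¹) :=
  (continuous_id.max continuous_const).inv₀ (fun s => (h.trans_le (le_max_right _ _)).ne')

lemma Lg_hasDerivAt (q0 : ℝ) (h : 0 < q0) (t : ℝ) : HasDerivAt (Lg q0) ((max t q0)⁻¹) t := by
  have := (maxinv_cont q0 h).integral_hasStrictDerivAt q0 t
  exact this.hasDerivAt.const_add _

lemma Lg_contDiff (q0 : ℝ) (h : 0 < q0) : ContDiff ℝ 1 (Lg q0) := by
  rw [contDiff_one_iff_deriv]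
  refine ⟨fun t => (Lg_hasDerivAt q0 h t).differentiableAt, ?_⟩
  rw [show deriv (Lg q0) = fun t => (max t q0)⁻¹ from funext fun t => (Lg_hasDerivAt q0 h t).deriv]
  exact maxinv_cont q0 h

lemma Lg_eq (q0 : ℝ) (h : 0 < q0) (t : ℝ) (ht : q0 ≤ t) : Lg q0 t = Real.log t := by
  have ht0 : 0 < t := h.trans_le ht
  have : ∫ s in q0..t, (max s q0)⁻¹ = ∫ s in q0..t, s⁻¹ := by
    refine intervalIntegral.integral_congr fun s hs => ?_
    rw [Set.uIcc_of_le ht] at hs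
    show (max s q0)⁻¹ = s⁻¹
    rw [max_eq_left hs.1]
  rw [Lg, this, integral_inv_of_pos h ht0, Real.log_div ht0.ne' h.ne']
  ring

def bub (l α q0 : ℝ) (a : ℂ) (t : ℝ) (x : ℂ) : ℝ := 2 * t + 2 * Real.log (2 * α * Aa a) - 2 * Lg q0 (Qf l a x)

lemma bub_contDiff (l α q0 : ℝ) (h : 0 < q0) (a : ℂ) (t : ℝ) : ContDiff ℝ 1 (bub l α q0 a t) := by
  have := (Lg_contDiff q0 h).comp (Qf_contDiff l a)
  exact contDiff_const.sub (contDiff_const.mul this)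

lemma pd_bub (l α q0 : ℝ) (h : 0 < q0) (a : ℂ) (t : ℝ) (x v : ℂ) :
    pd (bub l α q0 a t) v x = -2 * ((max (Qf l a x) q0)⁻¹ * Qd l a x v) := by
  obtain ⟨L, h1, h2⟩ := Qf_hasFDerivAt l a x
  have h3 : HasFDerivAt (bub l α q0 a t) _ x := (((Lg_hasDerivAt q0 h _).comp_hasFDerivAt x h1).const_mul 2).const_sub (2 * t + 2 * Real.log (2 * α * Aa a))
  rw [pd, h3.fderiv]
  simp [h2]

structure BP (l α q0 : ℝ) (a : ℂ) : Prop where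
  hl : 0 < l
  hα : 0 < α
  hq : 0 < q0
  ha : ‖a‖ < 1
  hqa : q0 ≤ l * (1 - ‖a‖)^2

variable {l α q0 : ℝ} {a : ℂ}

lemma BP.hQ (p : BP l α q0 a) {x : ℂ} (hx : ‖x‖ ≤ 1) : q0 ≤ Qf l a x := p.hqa.trans (Qf_lower l p.hl a x p.ha hx)

lemma bub_eq (p : BP l α q0 a) (t : ℝ) {x : ℂ} (hx : ‖x‖ ≤ 1) :
    bub l α q0 a t x = 2 * t + 2 * Real.log (2 * α * Aa a) - 2 * Real.log (Qf l a x) := by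
  rw [bub, Lg_eq q0 p.hq _ (p.hQ hx)]

lemma bub_exp_half (p : BP l α q0 a) (t : ℝ) {x : ℂ} (hx : ‖x‖ ≤ 1) :
    Real.exp (bub l α q0 a t x / 2) = Real.exp t * (2 * α * Aa a) / Qf l a x := by
  have h1 := Aa_pos p.ha
  have h2 := p.hα
  have h3 := Qf_pos l p.hl a x p.ha hx
  rw [bub_eq p t hx, show (2 * t + 2 * Real.log (2 * α * Aa a) - 2 * Real.log (Qf l a x)) / 2 = t + Real.log (2 * α * Aa a) - Real.log (Qf l a x) by ring,
    Real.exp_sub, Real.exp_add, Real.exp_log h3, Real.exp_log (by positivity)]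

lemma bub_exp (p : BP l α q0 a) (t : ℝ) {x : ℂ} (hx : ‖x‖ ≤ 1) :
    Real.exp (bub l α q0 a t x) = Real.exp t ^ 2 * (4 * α^2) * ((Aa a)^2 / (Qf l a x)^2) := by
  rw [show bub l α q0 a t x = bub l α q0 a t x / 2 + bub l α q0 a t x / 2 by ring, Real.exp_add, bub_exp_half p t hx]
  ring

lemma disk_norm {x : ℂ} (hx : x ∈ unitDisk) : ‖x‖ ≤ 1 := by
  have : ‖x‖ < 1 := by simpa [unitDisk] using hx
  exact this.le

lemma bub_grad (p : BP l α q0 a) (t : ℝ) :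
    ∫ x in unitDisk, gradSq (bub l α q0 a t) x = 16 * (qc l a * ∫ x in unitDisk, 1 / Qf l a x) + 16 * π / l := by
  have hl := p.hl
  have h1 : ∫ x in unitDisk, gradSq (bub l α q0 a t) x = ∫ x in unitDisk, (16 * qc l a * (1 / Qf l a x) + 16 * (1 + l) * ((Aa a)^2 / (Qf l a x)^2)) := by
    refine setIntegral_congr_fun measurableSet_ball fun x hx => ?_
    have hQ := Qf_pos l p.hl a x p.ha (disk_norm hx)
    simp only [gradSq, pd_bub _ _ _ p.hq]
    rw [max_eq_left (p.hQ (disk_norm hx))]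
    have := Qd_sq l a x
    have e : (-2 * ((Qf l a x)⁻¹ * Qd l a x 1))^2 + (-2 * ((Qf l a x)⁻¹ * Qd l a x Complex.I))^2 = 4 * ((Qf l a x)⁻¹)^2 * ((Qd l a x 1)^2 + (Qd l a x Complex.I)^2) := by ring
    rw [e, this]
    field_simp
    ring
  have hc1 := inv_Q_contOn l hl a p.ha
  have hc2 : ContinuousOn (fun x => (Aa a)^2 / (Qf l a x)^2) (Metric.closedBall 0 1) :=
    continuousOn_const.div ((Qf_cont l a).pow 2).continuousOn (fun x hx => (pow_pos (Qf_pos l hl a x p.ha (by simpa using hx)) 2).ne')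
  have i1 : IntegrableOn (fun x => 16 * qc l a * (1 / Qf l a x)) unitDisk := contOn_int (continuousOn_const.mul hc1)
  have i2 : IntegrableOn (fun x => 16 * (1 + l) * ((Aa a)^2 / (Qf l a x)^2)) unitDisk := contOn_int (continuousOn_const.mul hc2)
  rw [h1, integral_add i1 i2, integral_const_mul, integral_const_mul, int_invQ2 l hl a p.ha]
  have : 1 + l ≠ 0 := by positivity
  field_simp

lemma bub_grad_le (p : BP l α q0 a) (t : ℝ) :
    ∫ x in unitDisk, gradSq (bub l α q0 a t) x ≤ 16 * π / l - 16 * π * Real.log (Aa a) := by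
  rw [bub_grad p t]
  have := int_qQ l p.hl a p.ha
  linarith

lemma bub_circ (p : BP l α q0 a) (t θ : ℝ) : Real.exp (bub l α q0 a t (bpt θ) / 2) = (Real.exp t * (2 * α * Aa a) / l) * (1 / Wf a (bpt θ)) := by
  rw [bub_exp_half p t (bpt_norm θ).le, Qf_bpt]
  have := p.hl
  field_simp

lemma bub_mass_gen (p : BP l α q0 a) (t : ℝ) (g : ℂ → ℝ) (c : ℝ) (hg : bint (fun x => g x / Wf a x) = 2 * π / Aa a * c) :
    bint (fun x => g x * Real.exp (bub l α q0 a t x / 2)) = 4 * π * α * Real.exp t / l * c := by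
  have e : bint (fun x => g x * Real.exp (bub l α q0 a t x / 2)) = bint (fun x => (Real.exp t * (2 * α * Aa a) / l) * (g x / Wf a x)) := by
    unfold bint
    simp only [bub_circ p t]
    congr 1; ext θ; ring
  rw [e, bint_const_mul, hg]
  have := (Aa_pos p.ha).ne'
  have := p.hl
  field_simp
  ring

lemma bub_mass (p : BP l α q0 a) (t : ℝ) : bint (fun x => Real.exp (bub l α q0 a t x / 2)) = 4 * π * α * Real.exp t / l := by
  have := bub_mass_gen p t (fun _ => 1) 1 (by rw [poisson_one a p.ha, mul_one])
  simpa using this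

lemma bub_mass_re (p : BP l α q0 a) (t : ℝ) : bint (fun x => x.re * Real.exp (bub l α q0 a t x / 2)) = 4 * π * α * Real.exp t / l * a.re :=
  bub_mass_gen p t (fun x => x.re) _ (poisson_x a p.ha)

lemma bub_mass_im (p : BP l α q0 a) (t : ℝ) : bint (fun x => x.im * Real.exp (bub l α q0 a t x / 2)) = 4 * π * α * Real.exp t / l * a.im :=
  bub_mass_gen p t (fun x => x.im) _ (poisson_y a p.ha)

lemma bub_bint (p : BP l α q0 a) (t : ℝ) : bint (bub l α q0 a t) = 4 * π * (t + Real.log (2 * α / l) + Real.log (Aa a)) := by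
  have hb := bpt_cont
  have hl := p.hl
  have hα := p.hα
  have hA := Aa_pos p.ha
  have e : bint (bub l α q0 a t) = bint (fun x => 2 * (t + Real.log (2 * α / l) + Real.log (Aa a)) - 2 * Real.log (Wf a x)) := by
    unfold bint
    congr 1; ext θ
    have hW := Wf_pos a (bpt θ) p.ha (bpt_norm θ).le
    rw [bub_eq p t (bpt_norm θ).le, Qf_bpt, Real.log_mul hl.ne' hW.ne', Real.log_mul (by positivity) hA.ne', Real.log_div (by positivity) hl.ne']
    ring
  have hWc : Continuous (fun θ => Real.log (Wf a (bpt θ))) := ((Wf_cont a).comp hb).log (fun θ => (Wf_pos a _ p.ha (bpt_norm θ).le).ne')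
  rw [e, bint_sub' continuous_const (continuous_const.mul hWc), bint_const, bint_const_mul, log_W a p.ha]
  ring

lemma bub_grad_ge (p : BP l α q0 a) (t : ℝ) :
    - 16 * π * Real.log (Aa a) ≤ ∫ x in unitDisk, gradSq (bub l α q0 a t) x := by
  have hpi := pi_pos
  have hl := p.hl
  have hα := p.hα
  have hA := Aa_pos p.ha
  have hu := bub_contDiff l α q0 p.hq a t
  set u := bub l α q0 a t with hue
  have hv : ContDiff ℝ 1 (fun x => (1/2) * u x) := contDiff_const.mul hu
  have := SZ (fun x => (1/2) * u x) hv
  have e : ∀ x, (1/2) * u x = u x / 2 := fun x => by ring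
  simp only [gradSq_const_mul _ u hu, bint_const_mul, integral_const_mul] at this
  simp only [e] at this
  rw [hue, bub_mass p t, bub_mass_re p t, bub_mass_im p t, bub_bint p t, ← hue] at this
  set G := ∫ x in unitDisk, gradSq u x
  have e1 : Real.exp ((1/2)^2 * G / (4*π) + 2 * (1/2 * (4 * π * (t + Real.log (2 * α / l) + Real.log (Aa a))) / (2*π)))
    = Real.exp (G / (16 * π) + Real.log (Aa a)) * (Real.exp t ^ 2 * (2*α/l)^2 * Aa a) := by
    have : (1/2)^2 * G / (4*π) + 2 * (1/2 * (4 * π * (t + Real.log (2 * α / l) + Real.log (Aa a))) / (2*π))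
      = (G / (16 * π) + Real.log (Aa a)) + (t + t + (Real.log (2*α/l) + Real.log (2*α/l)) + Real.log (Aa a)) := by
      field_simp; ring
    rw [this, Real.exp_add, Real.exp_add (t + t + _), Real.exp_add (t+t), Real.exp_add t t, Real.exp_add (Real.log (2*α/l)), Real.exp_log (by positivity : 0 < 2*α/l), Real.exp_log hA]
    ring
  rw [e1] at this
  have e2 : (4 * π * α * Real.exp t / l)^2 - (4 * π * α * Real.exp t / l * a.re)^2 - (4 * π * α * Real.exp t / l * a.im)^2 = (2*π)^2 * (Real.exp t ^ 2 * (2*α/l)^2 * Aa a) := by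
    unfold Aa Sq; ring
  rw [e2] at this
  have hP : 0 < (2*π)^2 * (Real.exp t ^ 2 * (2*α/l)^2 * Aa a) := by positivity
  have h3 : 1 ≤ Real.exp (G / (16 * π) + Real.log (Aa a)) := by
    by_contra hc
    push Not at hc
    nlinarith [mul_pos hP (sub_pos.2 hc)]
  rw [Real.one_le_exp_iff] at h3
  have := mul_nonneg (by positivity : 0 ≤ 16 * π) h3
  have e4 : 16 * π * (G / (16*π) + Real.log (Aa a)) = G + 16 * π * Real.log (Aa a) := by field_simp
  linarith

lemma T_ge (u : ℂ → ℝ) (hu : ContDiff ℝ 1 u) : (∫ x in unitDisk, gradSq u x) / 2 ≤ Tfun u := by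
  have hg := gradSq_cont u hu
  have hc := hu.continuous
  have : ∫ x in unitDisk, (1/2) * gradSq u x ≤ Tfun u := by
    unfold Tfun
    refine disk_mono (cont_intOn (by fun_prop)) (cont_intOn (by fun_prop)) fun x _ => ?_
    have := Real.add_one_le_exp (u x)
    linarith
  rw [integral_const_mul] at this
  linarith

theorem bub_I (p : BP l α q0 a) (t : ℝ) (K h : ℂ → ℝ) (hK : Continuous K) (hh : Continuous (fun θ => h (bpt θ)))
    (k C h0 : ℝ) (hk0 : 0 ≤ k) (hC : 0 ≤ C) (hh0 : ∀ θ, h0 ≤ h (bpt θ))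
    (hKk : ∀ x ∈ unitDisk, -2 * K x ≤ 2 * k + C * (1 - Sq x)^2) :
    Ifun K h (bub l α q0 a t) ≤ 8 * π / l + 8 * π * Real.log (2 * α / l) + 8 * π * t
      + Real.exp t ^ 2 * (8 * π * k * α^2 / l + 4 * π * C * α^2) - 16 * π * Real.exp t * h0 * α / l := by
  have hpi := pi_pos
  have hl := p.hl
  have hα := p.hα
  have hA := Aa_pos p.ha
  have hb := bpt_cont
  have hu := bub_contDiff l α q0 p.hq a t
  have h0' := Isum K h hK hh 0 _ hu
  simp only [zero_mul, add_zero, sub_zero] at h0'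
  rw [h0', bub_bint p t]
  have hG := bub_grad_le p t
  have hH : Real.exp t * 4 * π * h0 * α / l ≤ bint (fun x => h x * Real.exp (bub l α q0 a t x / 2)) := by
    have hcb : Continuous (fun θ => bub l α q0 a t (bpt θ)) := hu.continuous.comp hb
    have : bint (fun x => h0 * Real.exp (bub l α q0 a t x / 2)) ≤ bint (fun x => h x * Real.exp (bub l α q0 a t x / 2)) := by
      refine bint_mono (by fun_prop) (hh.mul (by fun_prop)) fun θ => ?_
      exact mul_le_mul_of_nonneg_right (hh0 θ) (Real.exp_pos _).le
    rw [bint_const_mul, bub_mass p t] at this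
    refine le_trans (le_of_eq ?_) this
    ring
  have hE : ∫ x in unitDisk, -2 * K x * Real.exp (bub l α q0 a t x) ≤ Real.exp t ^ 2 * (8 * π * k * α^2 / l + 4 * π * C * α^2) := by
    have hc2 : ContinuousOn (fun x => (Aa a)^2 / (Qf l a x)^2) (Metric.closedBall 0 1) :=
      continuousOn_const.div ((Qf_cont l a).pow 2).continuousOn (fun x hx => (pow_pos (Qf_pos l hl a x p.ha (by simpa using hx)) 2).ne')
    have hcu := hu.continuous
    have h1 : ∫ x in unitDisk, -2 * K x * Real.exp (bub l α q0 a t x) ≤ ∫ x in unitDisk, (2 * k * (Real.exp t ^ 2 * (4 * α^2)) * ((Aa a)^2 / (Qf l a x)^2) + Real.exp t ^ 2 * (4 * α^2) * C) := by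
      refine disk_mono (cont_intOn (by fun_prop)) (contOn_int ((continuousOn_const.mul hc2).add continuousOn_const)) fun x hx => ?_
      have hx1 := disk_norm hx
      rw [bub_exp p t hx1]
      have hQ := Qf_pos l hl a x p.ha hx1
      have hS := Sq_le_one hx1
      set R := (Aa a)^2 / (Qf l a x)^2 with hR
      have hR0 : 0 ≤ R := by positivity
      have hR1 : (1 - Sq x)^2 * R ≤ 1 := by
        rw [hR, ← mul_div_assoc, div_le_one (by positivity), ← mul_pow]
        have := Qf_ge_A l hl a x p.ha hx1
        have h2 : 0 ≤ (1 - Sq x) * Aa a := mul_nonneg (by linarith) hA.le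
        exact pow_le_pow_left₀ h2 (by linarith) 2
      have hP : 0 ≤ Real.exp t ^ 2 * (4 * α^2) := by positivity
      set P := Real.exp t ^ 2 * (4 * α^2)
      have h3 := mul_le_mul_of_nonneg_right (hKk x hx) (mul_nonneg hP hR0)
      have h4 := mul_le_mul_of_nonneg_left hR1 (mul_nonneg hC hP)
      nlinarith
    have i1 : IntegrableOn (fun x => 2 * k * (Real.exp t ^ 2 * (4 * α^2)) * ((Aa a)^2 / (Qf l a x)^2)) unitDisk := contOn_int (continuousOn_const.mul hc2)
    have i2 : IntegrableOn (fun _ : ℂ => Real.exp t ^ 2 * (4 * α^2) * C) unitDisk := contOn_int continuousOn_const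
    rw [integral_add i1 i2, integral_const_mul, int_invQ2 l hl a p.ha, disk_const] at h1
    have h5 : π / (l * (1 + l)) ≤ π / l := by
      apply div_le_div_of_nonneg_left hpi.le hl
      nlinarith
    have h6 := mul_le_mul_of_nonneg_left h5 (by positivity : 0 ≤ 2 * k * (Real.exp t ^ 2 * (4 * α^2)))
    have h7 : 2 * k * (Real.exp t ^ 2 * (4 * α^2)) * (π / l) = Real.exp t ^ 2 * (8 * π * k * α^2 / l) := by ring
    nlinarith
  have e1 : 16 * π * Real.exp t * h0 * α / l = 4 * (Real.exp t * 4 * π * h0 * α / l) := by ring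
  have e2 : 16 * π / l = 2 * (8 * π / l) := by ring
  rw [e1]
  rw [e2] at hG
  linarith

end PartE3

section PartE4
open MeasureTheory Real Filter


lemma Sq_cont : Continuous Sq := by
  have h3 := Complex.continuous_re
  have h4 := Complex.continuous_im
  unfold Sq; fun_prop

lemma Qf_joint {X : Type*} [TopologicalSpace X] (l : ℝ) (f g : X → ℂ) (hf : Continuous f) (hg : Continuous g) :
    Continuous (fun z => Qf l (f z) (g z)) := by
  have h1 : Continuous (fun z => (f z).re) := Complex.continuous_re.comp hf
  have h2 : Continuous (fun z => (f z).im) := Complex.continuous_im.comp hf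
  have h3 : Continuous (fun z => (g z).re) := Complex.continuous_re.comp hg
  have h4 : Continuous (fun z => (g z).im) := Complex.continuous_im.comp hg
  unfold Qf Wf dotc Aa Sq; fun_prop

lemma Qd_joint {X : Type*} [TopologicalSpace X] (l : ℝ) (v : ℂ) (f g : X → ℂ) (hf : Continuous f) (hg : Continuous g) :
    Continuous (fun z => Qd l (f z) (g z) v) := by
  have h1 : Continuous (fun z => (f z).re) := Complex.continuous_re.comp hf
  have h2 : Continuous (fun z => (f z).im) := Complex.continuous_im.comp hf
  have h3 : Continuous (fun z => (g z).re) := Complex.continuous_re.comp hg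
  have h4 : Continuous (fun z => (g z).im) := Complex.continuous_im.comp hg
  unfold Qd qc Aa Sq; fun_prop

lemma bub_joint {X : Type*} [TopologicalSpace X] (l α q0 : ℝ) (hα : 0 < α) (hq : 0 < q0) (f g : X → ℂ) (t : X → ℝ)
    (hf : Continuous f) (hg : Continuous g) (ht : Continuous t) (hf1 : ∀ z, ‖f z‖ < 1) :
    Continuous (fun z => bub l α q0 (f z) (t z) (g z)) := by
  have h1 : Continuous (fun z => Lg q0 (Qf l (f z) (g z))) := (Lg_contDiff q0 hq).continuous.comp (Qf_joint l f g hf hg)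
  have h2 : Continuous (fun z => Aa (f z)) := continuous_const.sub (Sq_cont.comp hf)
  have h3 : Continuous (fun z => Real.log (2 * α * Aa (f z))) :=
    (continuous_const.mul h2).log fun z => by
      exact (mul_pos (mul_pos two_pos hα) (Aa_pos (hf1 z))).ne'
  unfold bub
  fun_prop

lemma pdb_joint {X : Type*} [TopologicalSpace X] (l α q0 : ℝ) (hq : 0 < q0) (v : ℂ) (f g : X → ℂ) (t : X → ℝ)
    (hf : Continuous f) (hg : Continuous g) :
    Continuous (fun z => pd (bub l α q0 (f z) (t z)) v (g z)) := by
  simp only [pd_bub l α q0 hq]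
  have h1 : Continuous (fun z => (max (Qf l (f z) (g z)) q0)⁻¹) := (maxinv_cont q0 hq).comp (Qf_joint l f g hf hg)
  have h2 := Qd_joint l v f g hf hg
  fun_prop

lemma pd_sub' (u w : ℂ → ℝ) (hu : ContDiff ℝ 1 u) (hw : ContDiff ℝ 1 w) (v x : ℂ) :
    pd (fun x => u x - w x) v x = pd u v x - pd w v x := by
  unfold pd
  rw [fderiv_fun_sub (hu.differentiable one_ne_zero x) (hw.differentiable one_ne_zero x)]
  rfl

theorem bub_H1 (l α q0 : ℝ) (hα : 0 < α) (hq : 0 < q0) (a : E3 → ℂ) (t : E3 → ℝ)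
    (ha : Continuous a) (ht : Continuous t) (ha1 : ∀ z, ‖a z‖ < 1) (S : Set E3) :
    H1ContinuousOn (fun y => bub l α q0 (a y) (t y)) S := by
  intro y _ r hr
  let g : E3 → ℂ → ℝ := fun y' x =>
    (pd (bub l α q0 (a y') (t y')) 1 x - pd (bub l α q0 (a y) (t y)) 1 x)^2
    + (pd (bub l α q0 (a y') (t y')) Complex.I x - pd (bub l α q0 (a y) (t y)) Complex.I x)^2
    + (bub l α q0 (a y') (t y') x - bub l α q0 (a y) (t y) x)^2
  have hg : Continuous (Function.uncurry g) := by
    have p1 (v : ℂ) : Continuous (fun z : E3 × ℂ => pd (bub l α q0 (a z.1) (t z.1)) v z.2) :=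
      pdb_joint l α q0 hq v (fun z : E3 × ℂ => a z.1) (fun z => z.2) (fun z => t z.1) (by fun_prop) (by fun_prop)
    have p2 (v : ℂ) : Continuous (fun z : E3 × ℂ => pd (bub l α q0 (a y) (t y)) v z.2) :=
      pdb_joint l α q0 hq v (fun z : E3 × ℂ => a y) (fun z => z.2) (fun z => t y) (by fun_prop) (by fun_prop)
    have p3 : Continuous (fun z : E3 × ℂ => bub l α q0 (a z.1) (t z.1) z.2) :=
      bub_joint l α q0 hα hq (fun z : E3 × ℂ => a z.1) (fun z => z.2) (fun z => t z.1) (by fun_prop) (by fun_prop) (by fun_prop) (fun z => ha1 _)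
    have p4 : Continuous (fun z : E3 × ℂ => bub l α q0 (a y) (t y) z.2) :=
      bub_joint l α q0 hα hq (fun z : E3 × ℂ => a y) (fun z => z.2) (fun z => t y) (by fun_prop) (by fun_prop) (by fun_prop) (fun z => ha1 _)
    exact (((((p1 1).sub (p2 1)).pow 2).add (((p1 Complex.I).sub (p2 Complex.I)).pow 2)).add ((p3.sub p4).pow 2))
  have hF : Continuous (fun y' => ∫ x in Metric.closedBall (0:ℂ) 1, g y' x) :=
    continuous_parametric_integral_of_continuous hg (isCompact_closedBall 0 1)
  have hEq : ∀ y', H1normSq (fun x => bub l α q0 (a y') (t y') x - bub l α q0 (a y) (t y) x) = ∫ x in Metric.closedBall (0:ℂ) 1, g y' x := by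
    intro y'
    have hu := bub_contDiff l α q0 hq (a y') (t y')
    have hw := bub_contDiff l α q0 hq (a y) (t y)
    have hd : ContDiff ℝ 1 (fun x => bub l α q0 (a y') (t y') x - bub l α q0 (a y) (t y) x) := hu.sub hw
    have hball : (Metric.ball (0:ℂ) 1 : Set ℂ) =ᵐ[volume] Metric.closedBall (0:ℂ) 1 := by
      refine ae_eq_of_subset_of_measure_ge Metric.ball_subset_closedBall ?_ measurableSet_ball.nullMeasurableSet ?_
      · rw [Measure.addHaar_closedBall_eq_addHaar_ball]
      · exact measure_closedBall_lt_top.ne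
    rw [← setIntegral_congr_set hball, H1normSq, ← integral_add]
    · refine setIntegral_congr_fun measurableSet_ball fun x _ => ?_
      simp only [gradSq, pd_sub' _ _ hu hw, g]
    · exact cont_intOn (gradSq_cont _ hd)
    · exact cont_intOn (hd.continuous.pow 2)
  have h0 : (∫ x in Metric.closedBall (0:ℂ) 1, g y x) = 0 := by simp [g]
  have hc := Metric.continuousAt_iff.1 (hF.continuousAt (x := y)) (r^2) (by positivity)
  obtain ⟨d, hd, hd2⟩ := hc
  refine ⟨d, hd, fun y' _ hy' => ?_⟩
  have := hd2 hy'
  rw [h0, Real.dist_eq, sub_zero] at this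
  rw [hEq, Real.sqrt_lt' hr]
  exact (le_abs_self _).trans_lt this

lemma consts (K h : ℂ → ℝ) (hK : Continuous K) (hKneg : ∀ x ∈ closedUnitDisk, K x < 0)
    (hh : Continuous (fun θ => h (bpt θ))) (hmin : ∀ x ∈ unitCircle, ∀ y ∈ unitCircle, Real.sqrt (-K y) < h x) :
    ∃ h0 k C : ℝ, 0 < h0 ∧ 0 ≤ k ∧ k < h0^2 ∧ 0 ≤ C ∧ (∀ θ, h0 ≤ h (bpt θ)) ∧
      ∀ x ∈ unitDisk, -2 * K x ≤ 2 * k + C * (1 - Sq x)^2 := by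
  have hcs : IsCompact unitCircle := isCompact_sphere 0 1
  obtain ⟨y0, hy0, hy1⟩ := hcs.exists_isMaxOn ⟨bpt 0, bpt_mem 0⟩ (hK.neg.continuousOn)
  obtain ⟨θ0, _, hθ1⟩ := (isCompact_Icc (a := (0:ℝ)) (b := 2*π)).exists_isMinOn ⟨0, by constructor <;> positivity⟩ hh.continuousOn
  have hθ : ∀ θ, h (bpt θ0) ≤ h (bpt θ) := by
    intro θ
    obtain ⟨θ', h1, h2⟩ := bpt_periodic.exists_mem_Ico₀ (by positivity) θ
    rw [h2]
    exact hθ1 ⟨h1.1, h1.2.le⟩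
  have hy0' : 0 < -K y0 := by
    have := hKneg y0 (Metric.sphere_subset_closedBall hy0)
    linarith
  have hm := hmin (bpt θ0) (bpt_mem θ0) y0 hy0
  have hh0 : 0 < h (bpt θ0) := (Real.sqrt_pos.2 hy0').trans hm
  have hm2 := (Real.sqrt_lt' hh0).1 hm
  set h0 := h (bpt θ0)
  set k := (-K y0 + h0^2) / 2 with hk
  obtain ⟨m, hmb⟩ := ((isCompact_closedBall (0:ℂ) 1).bddAbove_image (f := fun x => -K x) hK.neg.continuousOn)
  have hm' : ∀ x, ‖x‖ ≤ 1 → -K x ≤ m := fun x hx => hmb ⟨x, by simpa using hx, rfl⟩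
  have hm0 : 0 ≤ m := hy0'.le.trans (hm' y0 (by have : ‖y0‖ = 1 := by simpa [unitCircle] using hy0
                                                exact this.le))
  have hSc : IsCompact (Metric.closedBall (0:ℂ) 1 ∩ {x | k ≤ -K x}) :=
    (isCompact_closedBall 0 1).inter_right (isClosed_le continuous_const hK.neg)
  have hτ : ∃ τ > 0, ∀ x, ‖x‖ ≤ 1 → k ≤ -K x → τ ≤ 1 - Sq x := by
    rcases Set.eq_empty_or_nonempty (Metric.closedBall (0:ℂ) 1 ∩ {x | k ≤ -K x}) with he | he
    · refine ⟨1, one_pos, fun x hx hxk => ?_⟩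
      have : x ∈ Metric.closedBall (0:ℂ) 1 ∩ {x | k ≤ -K x} := ⟨by simpa using hx, hxk⟩
      rw [he] at this
      exact this.elim
    · obtain ⟨x1, hx1, hx2⟩ := hSc.exists_isMinOn he (continuous_const.sub Sq_cont : Continuous (fun x => 1 - Sq x)).continuousOn
      refine ⟨1 - Sq x1, ?_, fun x hx hxk => hx2 ⟨by simpa using hx, hxk⟩⟩
      have hn : ‖x1‖ ≤ 1 := by simpa using hx1.1
      have hne : ‖x1‖ ≠ 1 := by
        intro hc
        have h1 : -K x1 ≤ -K y0 := hy1 (by simpa [unitCircle] using hc)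
        have h2 : k ≤ -K x1 := hx1.2
        linarith
      exact Aa_pos (lt_of_le_of_ne hn hne)
  obtain ⟨τ, hτ0, hτ1⟩ := hτ
  refine ⟨h0, k, 2 * m / τ^2, hh0, by positivity, by linarith, by positivity, hθ, fun x hx => ?_⟩
  have hx' := disk_norm hx
  by_cases hxk : k ≤ -K x
  · have h1 := hτ1 x hx' hxk
    have h2 : τ^2 ≤ (1 - Sq x)^2 := pow_le_pow_left₀ hτ0.le h1 2
    have h3 := mul_le_mul_of_nonneg_left h2 (by positivity : 0 ≤ 2 * m / τ^2)
    have h4 : 2 * m / τ^2 * τ^2 = 2 * m := by field_simp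
    have h5 := hm' x hx'
    have h6 : 0 ≤ k := by positivity
    linarith
  · push Not at hxk
    have : 0 ≤ 2 * m / τ^2 * (1 - Sq x)^2 := by positivity
    linarith

lemma choose_l (κ α c : ℝ) (hκ : κ < 1) (hα : 0 < α) :
    ∃ l > 0, 8 * π / l * (κ - 1) + 8 * π * Real.log (2 * α / l) ≤ c ∧ 1 < 4 * π * α / l := by
  have hpi := pi_pos
  set β := (1 - κ) / 2 with hβ
  have hβ0 : 0 < β := by rw [hβ]; linarith
  set L := |8 * π * Real.log (2 * α / β) - c| with hL
  set x := 1 + 1 / α + L / (8 * π * β) with hx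
  have hL0 : 0 ≤ L := abs_nonneg _
  have hx0 : 0 < x := by positivity
  have hx1 : 1 / α < x := by
    have : 0 ≤ L / (8 * π * β) := by positivity
    linarith
  have hx2 : L ≤ 8 * π * β * x := by
    have : L / (8 * π * β) ≤ x := by
      have : 0 < 1 / α := by positivity
      linarith
    rw [div_le_iff₀ (by positivity)] at this
    linarith
  refine ⟨1 / x, by positivity, ?_, ?_⟩
  · have e : 2 * α / (1 / x) = (β * x) * (2 * α / β) := by field_simp
    rw [e, Real.log_mul (by positivity) (by positivity)]
    have h1 := Real.log_le_sub_one_of_pos (by positivity : 0 < β * x)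
    have h2 := le_abs_self (8 * π * Real.log (2 * α / β) - c)
    have e2 : 8 * π / (1 / x) * (κ - 1) = -(16 * π * β * x) := by rw [hβ]; field_simp; ring
    rw [e2]
    have h3 := mul_le_mul_of_nonneg_left h1 (by positivity : 0 ≤ 8 * π)
    nlinarith
  · have : 1 < x * α := by rwa [div_lt_iff₀ hα] at hx1
    have e : 4 * π * α / (1 / x) = 4 * π * (x * α) := by field_simp
    rw [e]
    nlinarith [pi_gt_three]

lemma choose_m (s : ℝ) (hs : 0 < s) : ∃ m : ℝ, 0 < m ∧ m < 1 ∧ Real.log (1 - m^2) = -s := by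
  have h1 : Real.exp (-s) < 1 := by rw [Real.exp_lt_one_iff]; linarith
  have h2 := Real.exp_pos (-s)
  refine ⟨√(1 - Real.exp (-s)), Real.sqrt_pos.2 (by linarith), ?_, ?_⟩
  · rw [Real.sqrt_lt' one_pos]; linarith
  · rw [Real.sq_sqrt (by linarith), sub_sub_cancel, Real.log_exp]

def pv (y : E3) : ℂ := ⟨y 0, y 1⟩
def av (m : ℝ) (y : E3) : ℂ := ((m / max ‖pv y‖ (√3/2) : ℝ) : ℂ) * pv y
def tv (ℓ : ℝ) (y : E3) : ℝ := -ℓ * max 0 (min 1 (1/2 - y 2))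

lemma pv_cont : Continuous pv := by
  have : pv = fun y : E3 => ((y 0 : ℝ) : ℂ) + ((y 1 : ℝ) : ℂ) * Complex.I := by
    ext y
    exact Complex.mk_eq_add_mul_I _ _
  rw [this]; fun_prop

lemma mx_pos (y : E3) : 0 < max ‖pv y‖ (√3/2) := lt_max_of_lt_right (by positivity)

lemma av_cont (m : ℝ) : Continuous (av m) := by
  have h := pv_cont
  have h1 : Continuous (fun y => m / max ‖pv y‖ (√3/2)) := continuous_const.div (by fun_prop) (fun y => (mx_pos y).ne')
  exact (Complex.continuous_ofReal.comp h1).mul h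

lemma tv_cont (ℓ : ℝ) : Continuous (tv ℓ) := by unfold tv; fun_prop

lemma av_norm (m : ℝ) (hm : 0 < m) (y : E3) : ‖av m y‖ = m / max ‖pv y‖ (√3/2) * ‖pv y‖ := by
  have := mx_pos y
  rw [av, norm_mul, Complex.norm_real, Real.norm_of_nonneg (by positivity)]

lemma av_le (m : ℝ) (hm : 0 < m) (y : E3) : ‖av m y‖ ≤ m := by
  have := mx_pos y
  rw [av_norm m hm, div_mul_eq_mul_div, div_le_iff₀ this]
  exact mul_le_mul_of_nonneg_left (le_max_left _ _) hm.le

lemma sph (y : E3) (hy : y ∈ Metric.sphere (0:E3) 1) : ‖pv y‖^2 + (y 2)^2 = 1 := by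
  have h1 : ‖y‖ = 1 := by simpa using hy
  have h2 := EuclideanSpace.norm_sq_eq y
  rw [h1, Fin.sum_univ_three] at h2
  simp only [Real.norm_eq_abs, sq_abs] at h2
  rw [← norm_sq_re_im]
  simp only [pv]
  linarith

lemma av_mid (m : ℝ) (hm : 0 < m) (y : E3) (hy : y ∈ Metric.sphere (0:E3) 1) (h1 : y 2 ≤ 1/2) (h2 : -1/2 ≤ y 2) :
    ‖av m y‖ = m := by
  have h := sph y hy
  have h3 : √3/2 ≤ ‖pv y‖ := by
    have : (√3/2)^2 ≤ ‖pv y‖^2 := by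
      rw [div_pow, Real.sq_sqrt (by norm_num)]
      nlinarith
    exact le_of_sq_le_sq this (norm_nonneg _)
  rw [av_norm m hm, max_eq_left h3]
  have : 0 < ‖pv y‖ := lt_of_lt_of_le (by positivity) h3
  field_simp

lemma tv_top (ℓ : ℝ) (y : E3) (h : 1/2 ≤ y 2) : tv ℓ y = 0 := by
  unfold tv
  rw [max_eq_left (min_le_of_right_le (by linarith))]; ring

lemma tv_bot (ℓ : ℝ) (y : E3) (h : y 2 ≤ -1/2) : tv ℓ y = -ℓ := by
  unfold tv
  rw [min_eq_left (by linarith), max_eq_right zero_le_one]; ring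

lemma tv_nonpos (ℓ : ℝ) (hℓ : 0 ≤ ℓ) (y : E3) : tv ℓ y ≤ 0 := by
  unfold tv
  have : 0 ≤ max 0 (min 1 (1/2 - y 2)) := le_max_left _ _
  nlinarith

end PartE4

section PartE5
open MeasureTheory Real Filter


lemma Lam_energy {l α q0 δ : ℝ} {a : ℂ} (p : BP l α q0 a) (t : ℝ) (K h : ℂ → ℝ) (B ε : ℝ) (hδ : 0 < δ) (hδ1 : δ ≤ 1/4)
    (hε : ε ∈ Set.Ioo (-δ) (-δ/2)) (hB : 0 ≤ B)
    (hI : Ifun K h (bub l α q0 a t) + 4 * π * δ * Real.log (Aa a) ≤ -B) : Ieps K h ε (bub l α q0 a t) ≤ -B := by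
  have hpi := pi_pos
  have h1 := bub_grad_ge p t
  have h2 := T_ge _ (bub_contDiff l α q0 p.hq a t)
  have hA : Real.log (Aa a) ≤ 0 := by
    apply Real.log_nonpos (Aa_pos p.ha).le
    unfold Aa Sq; nlinarith [sq_nonneg a.re, sq_nonneg a.im]
  obtain ⟨he1, he2⟩ := hε
  set T := Tfun (bub l α q0 a t)
  have h3 : -8 * π * Real.log (Aa a) ≤ T := by linarith
  have h4 : 0 ≤ T := by nlinarith
  have h5 : ε * T ≤ (-δ/2) * T := mul_le_mul_of_nonneg_right he2.le h4
  have h6 : δ/2 * (-8 * π * Real.log (Aa a)) ≤ δ/2 * T := mul_le_mul_of_nonneg_left h3 (by positivity)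
  have h7 : Ifun K h (bub l α q0 a t) + ε * T ≤ -B := by linarith
  unfold Ieps
  rw [div_le_iff₀ (by linarith)]
  nlinarith

lemma comb_pos (s A : ℝ) (hA : 0 < A) (h0 : 0 ≤ s) (h1 : s ≤ 1) : 0 < (1 - s) * A + s := by
  rcases eq_or_lt_of_le h0 with h | h
  · rw [← h]; linarith
  · have : 0 ≤ (1 - s) * A := mul_nonneg (by linarith) hA.le
    linarith

theorem linking_core
    (K h : ℂ → ℝ)
    (hK : ContDiff ℝ 2 K)
    (hKneg : ∀ x ∈ closedUnitDisk, K x < 0)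
    (hh : ContDiff ℝ 2 (fun θ => h (bpt θ)))
    (hmin : ∀ x ∈ unitCircle, ∀ y ∈ unitCircle, Real.sqrt (-K y) < h x) :
    ∃ δ₀ > (0:ℝ), ∀ δ ∈ Set.Ioo (0:ℝ) δ₀,
      ∃ (Cbar : ℝ) (Λ : EuclideanSpace ℝ (Fin 3) → ℂ → ℝ),
        (∀ y ∈ Metric.sphere (0 : EuclideanSpace ℝ (Fin 3)) 1, ContDiff ℝ 1 (Λ y)) ∧
        H1ContinuousOn Λ (Metric.sphere (0 : EuclideanSpace ℝ (Fin 3)) 1) ∧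
        ∀ ε ∈ Set.Ioo (-δ) (-δ/2),
          (∀ u : ℂ → ℝ, MemM u → Cbar ≤ Ieps K h ε u) ∧
          (∃ c c' : ℝ, c < c' ∧
            (∀ y ∈ Metric.sphere (0 : EuclideanSpace ℝ (Fin 3)) 1, Ieps K h ε (Λ y) ≤ c) ∧
            (∀ u : ℂ → ℝ, MemM u → c' ≤ Ieps K h ε u)) ∧
          (∀ η : EuclideanSpace ℝ (Fin 3) → ℂ → ℝ,
            H1ContinuousOn η (Metric.closedBall (0 : EuclideanSpace ℝ (Fin 3)) 1) →
            (∀ y ∈ Metric.closedBall (0 : EuclideanSpace ℝ (Fin 3)) 1, ContDiff ℝ 1 (η y)) →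
            (∀ y ∈ Metric.sphere (0 : EuclideanSpace ℝ (Fin 3)) 1, η y = Λ y) →
            ∃ y ∈ Metric.closedBall (0 : EuclideanSpace ℝ (Fin 3)) 1, MemM (η y)) := by
  have hpi := pi_pos
  obtain ⟨δ₁, hδ₁, hδ₁', B, hB, hP4⟩ := P4 K h hK.continuous hKneg hh.continuous
  obtain ⟨h0, k, C, hh0, hk, hkh, hC, hhb, hKk⟩ := consts K h hK.continuous hKneg hh.continuous hmin
  refine ⟨δ₁, hδ₁, fun δ hδ => ?_⟩
  obtain ⟨hδ0, hδ1⟩ := hδ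
  -- parameters
  obtain ⟨α, hα, hαh⟩ : ∃ α > 0, h0 * α = 1 := ⟨1 / h0, by positivity, by field_simp⟩
  have hκ : k * α^2 < 1 := by
    have e : h0^2 * α^2 = 1 := by rw [← mul_pow, hαh, one_pow]
    nlinarith [mul_pos (sub_pos.2 hkh) (pow_pos hα 2)]
  obtain ⟨l, hl, hl1, hl2⟩ := choose_l (k * α^2) α (-(B + 1) - 4 * π * C * α^2) hκ hα
  set Cl := 8 * π / l + 8 * π * Real.log (2 * α / l) + (8 * π * k * α^2 / l + 4 * π * C * α^2) with hCl
  obtain ⟨m, hm0, hm1, hm⟩ := choose_m ((|Cl| + (B + 1)) / (4 * π * δ)) (by positivity)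
  have hmE : Cl + 4 * π * δ * Real.log (1 - m^2) ≤ -(B+1) := by
    have e : 4 * π * δ * (-((|Cl| + (B + 1)) / (4 * π * δ))) = -(|Cl| + (B+1)) := by field_simp
    rw [hm, e]
    have := le_abs_self Cl
    linarith
  obtain ⟨ℓ, hℓ0, hℓ1, hℓ2⟩ : ∃ ℓ : ℝ, 0 ≤ ℓ ∧ Cl - 8 * π * ℓ ≤ -(B+1) ∧ 4 * π * α * Real.exp (-ℓ) / l < 1 := by
    refine ⟨(|Cl| + (B+1)) / (8*π) + |Real.log (4 * π * α / l)| + 1, by positivity, ?_, ?_⟩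
    · have e : 8 * π * ((|Cl| + (B+1)) / (8*π) + |Real.log (4 * π * α / l)| + 1) = |Cl| + (B+1) + 8 * π * (|Real.log (4 * π * α / l)| + 1) := by
        field_simp; ring
      rw [e]
      have := le_abs_self Cl
      have : 0 ≤ 8 * π * (|Real.log (4 * π * α / l)| + 1) := by positivity
      linarith
    · have hx : 0 < 4 * π * α / l := by positivity
      rw [show 4 * π * α * Real.exp (-((|Cl| + (B+1)) / (8*π) + |Real.log (4 * π * α / l)| + 1)) / l
        = 4 * π * α / l * Real.exp (-((|Cl| + (B+1)) / (8*π) + |Real.log (4 * π * α / l)| + 1)) by ring]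
      nth_rw 1 [← Real.exp_log hx]
      rw [← Real.exp_add, Real.exp_lt_one_iff]
      have h1 := le_abs_self (Real.log (4 * π * α / l))
      have h2 : 0 ≤ (|Cl| + (B+1)) / (8*π) := by positivity
      linarith
  set q0 := l * (1 - m)^2 with hq0
  have hm1' : 0 < 1 - m := by linarith
  have hq : 0 < q0 := by positivity
  have p : ∀ y, BP l α q0 (av m y) := fun y =>
    { hl := hl, hα := hα, hq := hq, ha := (av_le m hm0 y).trans_lt hm1
      hqa := by
        have := av_le m hm0 y
        exact mul_le_mul_of_nonneg_left (pow_le_pow_left₀ hm1'.le (by linarith) 2) hl.le }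
  -- energy of the bubbles
  have hI : ∀ y, ∀ t ≤ 0, Ifun K h (bub l α q0 (av m y) t) ≤ Cl + 8 * π * t := by
    intro y t ht
    have h1 := bub_I (p y) t K h hK.continuous hh.continuous k C h0 hk hC hhb hKk
    have h2 : Real.exp t ^ 2 ≤ 1 := pow_le_one₀ (Real.exp_pos t).le (Real.exp_le_one_iff.2 ht)
    have h3 : 0 ≤ 8 * π * k * α^2 / l + 4 * π * C * α^2 := by positivity
    have h4 := mul_le_mul_of_nonneg_right h2 h3
    have h5 : 0 ≤ 16 * π * Real.exp t * h0 * α / l := by positivity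
    linarith
  have hI0 : ∀ y, Ifun K h (bub l α q0 (av m y) 0) ≤ -(B+1) := by
    intro y
    have h1 := bub_I (p y) 0 K h hK.continuous hh.continuous k C h0 hk hC hhb hKk
    rw [Real.exp_zero] at h1
    have e1 : 16 * π * 1 * h0 * α / l = 2 * (8 * π / l) := by
      rw [show 16 * π * 1 * h0 * α / l = 16 * π * (h0 * α) / l by ring, hαh]; ring
    have e2 : 8 * π / l * (k * α^2 - 1) = 8 * π * k * α^2 / l - 8 * π / l := by ring
    rw [e1] at h1
    rw [e2] at hl1
    linarith
  have hlogA : ∀ y, Real.log (Aa (av m y)) ≤ 0 := by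
    intro y
    apply Real.log_nonpos (Aa_pos (p y).ha).le
    unfold Aa Sq; nlinarith [sq_nonneg (av m y).re, sq_nonneg (av m y).im]
  have hE : ∀ y ∈ Metric.sphere (0:E3) 1,
      Ifun K h (bub l α q0 (av m y) (tv ℓ y)) + 4 * π * δ * Real.log (Aa (av m y)) ≤ -(B+1) := by
    intro y hy
    have hA : 4 * π * δ * Real.log (Aa (av m y)) ≤ 0 := mul_nonpos_of_nonneg_of_nonpos (by positivity) (hlogA y)
    rcases le_total (1/2) (y 2) with h1 | h1
    · rw [tv_top ℓ y h1]
      have := hI0 y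
      linarith
    · have h2 := hI y (tv ℓ y) (tv_nonpos ℓ hℓ0 y)
      rcases le_total (y 2) (-1/2) with h3 | h3
      · rw [tv_bot ℓ y h3] at h2 ⊢
        linarith
      · have e : Aa (av m y) = 1 - m^2 := by rw [Aa, Sq_norm, av_mid m hm0 y hy h1 h3]
        rw [e]
        have h4 : 8 * π * tv ℓ y ≤ 0 := mul_nonpos_of_nonneg_of_nonpos (by positivity) (tv_nonpos ℓ hℓ0 y)
        linarith
  refine ⟨-B, fun y => bub l α q0 (av m y) (tv ℓ y), fun y _ => bub_contDiff l α q0 hq _ _,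
    bub_H1 l α q0 hα hq (av m) (tv ℓ) (av_cont m) (tv_cont ℓ) (fun y => (p y).ha) _, ?_⟩
  intro ε hε
  have hMi : ∀ u : ℂ → ℝ, MemM u → -B ≤ Ieps K h ε u := fun u hu =>
    hP4 ε (by linarith [hε.1]) (by linarith [hε.2]) u hu
  refine ⟨hMi, ⟨-(B+1), -B, by linarith, fun y hy => ?_, hMi⟩, ?_⟩
  · exact Lam_energy (p y) _ K h (B+1) ε hδ0 (by linarith) hε (by linarith) (hE y hy)
  · intro η hη1 hη2 hη3
    have c0 := P6 _ η hη1 hη2 (fun x => x.re) Complex.continuous_re (fun θ => by rw [bpt_re]; exact Real.abs_cos_le_one θ)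
    have c1 := P6 _ η hη1 hη2 (fun x => x.im) Complex.continuous_im (fun θ => by rw [bpt_im]; exact Real.abs_sin_le_one θ)
    have c2 := P6 _ η hη1 hη2 (fun _ => 1) continuous_const (fun θ => by simp)
    simp only [one_mul] at c2
    let F : E3 → E3 := fun y => !₂[bint (fun x => x.re * Real.exp (η y x / 2)), bint (fun x => x.im * Real.exp (η y x / 2)),
      bint (fun x => Real.exp (η y x / 2)) - 1]
    have hFc : ContinuousOn F (Metric.closedBall 0 1) := by
      refine (PiLp.continuous_toLp 2 _).comp_continuousOn (continuousOn_pi.2 fun i => ?_)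
      fin_cases i
      · exact c0
      · exact c1
      · exact c2.sub continuousOn_const
    have hlink : ∀ y ∈ Metric.sphere (0:E3) 1, ∀ s ∈ Set.Icc (0:ℝ) 1, (1-s) • F y + s • y ≠ 0 := by
      intro y hy s hs h0
      obtain ⟨hs0, hs1⟩ := hs
      set mu := 4 * π * α * Real.exp (tv ℓ y) / l with hmu
      have hmu0 : 0 < mu := by positivity
      set κ := m / max ‖pv y‖ (√3/2) with hκd
      have hκ0 : 0 < κ := div_pos hm0 (mx_pos y)
      have e0 : (F y) 0 = mu * (κ * y 0) := by
        have : (av m y).re = κ * y 0 := by rw [av, Complex.re_ofReal_mul]; rfl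
        simp [F, hη3 y hy, bub_mass_re (p y), this, ← hmu]
      have e1 : (F y) 1 = mu * (κ * y 1) := by
        have : (av m y).im = κ * y 1 := by rw [av, Complex.im_ofReal_mul]; rfl
        simp [F, hη3 y hy, bub_mass_im (p y), this, ← hmu]
      have e2 : (F y) 2 = mu - 1 := by
        simp [F, hη3 y hy, bub_mass (p y), ← hmu]
      have z0 := congrArg (fun v : E3 => v 0) h0
      have z1 := congrArg (fun v : E3 => v 1) h0
      have z2 := congrArg (fun v : E3 => v 2) h0
      simp only [PiLp.add_apply, PiLp.smul_apply, PiLp.zero_apply, smul_eq_mul, e0, e1, e2] at z0 z1 z2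
      have hco : 0 < (1 - s) * (mu * κ) + s := comb_pos s _ (mul_pos hmu0 hκ0) hs0 hs1
      have y0 : y 0 = 0 := by
        have : ((1 - s) * (mu * κ) + s) * y 0 = 0 := by linarith
        exact (mul_eq_zero.1 this).resolve_left hco.ne'
      have y1 : y 1 = 0 := by
        have : ((1 - s) * (mu * κ) + s) * y 1 = 0 := by linarith
        exact (mul_eq_zero.1 this).resolve_left hco.ne'
      have hsp := sph y hy
      rw [← norm_sq_re_im] at hsp
      simp only [pv, y0, y1] at hsp
      have hy2 : y 2 = 1 ∨ y 2 = -1 := by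
        have : (y 2)^2 = 1 := by linarith
        have h3 : (y 2 - 1) * (y 2 + 1) = 0 := by linarith
        rcases mul_eq_zero.1 h3 with h | h
        · left; linarith
        · right; linarith
      rcases hy2 with h | h
      · have ht := tv_top ℓ y (by rw [h]; norm_num)
        rw [ht, Real.exp_zero, mul_one] at hmu
        rw [h] at z2
        have := comb_pos s (mu - 1) (by linarith) hs0 hs1
        linarith
      · have ht := tv_bot ℓ y (by rw [h]; norm_num)
        rw [ht] at hmu
        rw [h] at z2
        have := comb_pos s (1 - mu) (by linarith) hs0 hs1
        linarith
    obtain ⟨x, hx, hFx⟩ := exists_zero_of_linking F hFc hlink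
    refine ⟨x, hx, hη2 x hx, ?_, ?_, ?_⟩
    · have := congrArg (fun v : E3 => v 2) hFx
      simp [F] at this
      linarith
    · have := congrArg (fun v : E3 => v 0) hFx
      simpa [F] using this
    · have := congrArg (fun v : E3 => v 1) hFx
      simpa [F] using this

end PartE5

/-- Proposition: three-dimensional linking geometry of I_ε for ε ∈ (−δ, −δ/2). -/
theorem linking_geometry
    (K h : ℂ → ℝ)
    (hK : ContDiff ℝ 2 K)
    (hKneg : ∀ x ∈ closedUnitDisk, K x < 0)
    (hh : ContDiff ℝ 2 (fun θ => h (bpt θ)))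
    (hmin : ∀ x ∈ unitCircle, ∀ y ∈ unitCircle, Real.sqrt (-K y) < h x) :
    ∃ δ₀ > (0:ℝ), ∀ δ ∈ Set.Ioo (0:ℝ) δ₀,
      ∃ (Cbar : ℝ) (Λ : EuclideanSpace ℝ (Fin 3) → ℂ → ℝ),
        (∀ y ∈ Metric.sphere (0 : EuclideanSpace ℝ (Fin 3)) 1, ContDiff ℝ 1 (Λ y)) ∧
        H1ContinuousOn Λ (Metric.sphere (0 : EuclideanSpace ℝ (Fin 3)) 1) ∧
        ∀ ε ∈ Set.Ioo (-δ) (-δ/2),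
          -- (i) I_ε ≥ C̄ on M
          (∀ u : ℂ → ℝ, MemM u → Cbar ≤ Ieps K h ε u) ∧
          -- (ii) sup_{𝕊²} I_ε ∘ Λ < inf_M I_ε
          (∃ c c' : ℝ, c < c' ∧
            (∀ y ∈ Metric.sphere (0 : EuclideanSpace ℝ (Fin 3)) 1, Ieps K h ε (Λ y) ≤ c) ∧
            (∀ u : ℂ → ℝ, MemM u → c' ≤ Ieps K h ε u)) ∧
          -- (iii) every admissible extension of Λ to the closed ball meets M
          (∀ η : EuclideanSpace ℝ (Fin 3) → ℂ → ℝ,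
            H1ContinuousOn η (Metric.closedBall (0 : EuclideanSpace ℝ (Fin 3)) 1) →
            (∀ y ∈ Metric.closedBall (0 : EuclideanSpace ℝ (Fin 3)) 1, ContDiff ℝ 1 (η y)) →
            (∀ y ∈ Metric.sphere (0 : EuclideanSpace ℝ (Fin 3)) 1, η y = Λ y) →
            ∃ y ∈ Metric.closedBall (0 : EuclideanSpace ℝ (Fin 3)) 1, MemM (η y)) := by
  exact linking_core K h hK hKneg hh hmin

end
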